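/- Let α ∈ (1,2) and let a ∈ L^α(ℝ, dx) be nonzero with a(x) = 0 for x < 0. Let (ξ_n)_{n∈ℤ} be an SαS moving average driven by a: real random variables on a probability space (Ω, P) such that for every finite collection of indices n₁, …, n_m ∈ ℤ and reals u₁, …, u_m, E exp(i ∑_{j=1}^m u_j ξ_{n_j}) = exp(−∫_ℝ |∑_{j=1}^m u_j a(n_j − x)|^α dx). Let K satisfy Assumptions (K1), (K2) and (K3). Assume that ∑_{m=1}^{∞} (∫_{m−1}^{m} |a(x)|^α dx)^{1/2} < ∞ and ∑_{n=1}^{∞} [ξ₀, ξ_n]₁ < ∞, where [ξ₀, ξ_n]₁ := ∫_ℝ (|a(−x)|^{α−1}|a(n−x)| + |a(n−x)|^{α−1}|a(−x)|) dx. Then E K(ξ_0)² < ∞, the series σ² := Var(K(ξ_0)) + 2∑_{n=1}^{∞} Cov(K(ξ_0), K(ξ_n)) converges absolutely, σ² = lim_{N→∞} N^{−1} Var(S_N) where S_N := ∑_{n=1}^{N} (K(ξ_n) − E K(ξ_n)), and N^{−1/2} S_N converges in distribution, as N → ∞, to a centered Gaussian law with variance σ². (Paper's Theorem 6.1.) 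-/

import Mathlib

open MeasureTheory Real Set Filter
open scoped ENNReal Topology

noncomputable def nrm (α : ℝ) {S : Type*} [MeasurableSpace S] (μ : Measure S) (f : S → ℝ) : ℝ :=
  (∫ s, |f s| ^ α ∂μ) ^ (1 / α)

noncomputable def dep2 (α : ℝ) {S : Type*} [MeasurableSpace S] (μ : Measure S) (f g : S → ℝ) : ℝ :=
  ∫ s, |f s * g s| ^ (α / 2) ∂μ

noncomputable def dep1s (α : ℝ) {S : Type*} [MeasurableSpace S] (μ : Measure S) (f g : S → ℝ) : ℝ :=
  ∫ s, |f s| ^ (α - 1) * |g s| ∂μ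

noncomputable def dep1 (α : ℝ) {S : Type*} [MeasurableSpace S] (μ : Measure S) (f g : S → ℝ) : ℝ :=
  dep1s α μ f g + dep1s α μ g f

/-- `f ∈ L^α(S, μ)`. -/
def MemLalpha (α : ℝ) {S : Type*} [MeasurableSpace S] (μ : Measure S) (f : S → ℝ) : Prop :=
  AEStronglyMeasurable f μ ∧ Integrable (fun s => |f s| ^ α) μ

/-- Assumption (A1) with constant ε₁. -/
def A1 (α ε₁ : ℝ) {S : Type*} [MeasurableSpace S] (μ : Measure S) (f g : S → ℝ) : Prop :=
  nrm α μ f ^ (α / 2) * nrm α μ g ^ (α / 2) - dep2 α μ f g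
    ≥ ε₁ * (nrm α μ f ^ (α / 2) * nrm α μ g ^ (α / 2))

/-- Assumption (A2) with constant ε₂. -/
def A2 (α ε₂ : ℝ) {S : Type*} [MeasurableSpace S] (μ : Measure S) (f g : S → ℝ) : Prop :=
  ∀ u v : ℝ, nrm α μ (fun s => u * f s + v * g s) ^ α
    ≥ ε₂ * (|u| ^ α * nrm α μ f ^ α + |v| ^ α * nrm α μ g ^ α)

noncomputable def Ufun (α : ℝ) {S : Type*} [MeasurableSpace S] (μ : Measure S)
    (f g : S → ℝ) (u v : ℝ) : ℝ :=
  Real.exp (-(nrm α μ (fun s => u * f s + v * g s) ^ α)) -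
    Real.exp (-(nrm α μ (fun s => u * f s) ^ α) - nrm α μ (fun s => v * g s) ^ α)

/-- signed power `a^⟨p⟩ = sign(a)|a|^p`. -/
noncomputable def spow (a p : ℝ) : ℝ := Real.sign a * |a| ^ p

noncomputable def D1 (α : ℝ) {S : Type*} [MeasurableSpace S] (μ : Measure S)
    (f g : S → ℝ) (u v : ℝ) : ℝ :=
  -α * (∫ s, spow (u * f s + v * g s) (α - 1) * f s ∂μ) *
      Real.exp (-(nrm α μ (fun s => u * f s + v * g s) ^ α)) +
    α * (∫ s, spow (u * f s) (α - 1) * f s ∂μ) *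
      Real.exp (-(nrm α μ (fun s => u * f s) ^ α) - nrm α μ (fun s => v * g s) ^ α)

noncomputable def D2 (α : ℝ) {S : Type*} [MeasurableSpace S] (μ : Measure S)
    (f g : S → ℝ) (u v : ℝ) : ℝ :=
  -(α * (α - 1)) * (∫ s, (if f s = 0 ∨ g s = 0 then (0:ℝ) else
        |u * f s + v * g s| ^ (α - 2) * (f s * g s)) ∂μ) *
      Real.exp (-(nrm α μ (fun s => u * f s + v * g s) ^ α)) +
    α ^ 2 * (∫ s, spow (u * f s + v * g s) (α - 1) * f s ∂μ) *
      (∫ s, spow (u * f s + v * g s) (α - 1) * g s ∂μ) *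
      Real.exp (-(nrm α μ (fun s => u * f s + v * g s) ^ α)) -
    α ^ 2 * (∫ s, spow (u * f s) (α - 1) * f s ∂μ) *
      (∫ s, spow (v * g s) (α - 1) * g s ∂μ) *
      Real.exp (-(nrm α μ (fun s => u * f s) ^ α) - nrm α μ (fun s => v * g s) ^ α)

/-- `(ξ, η)` is jointly SαS with spectral pair `(f, g)`. -/
def JointSAS (α : ℝ) {S : Type*} [MeasurableSpace S] (μ : Measure S) (f g : S → ℝ)
    {Ω : Type*} [MeasurableSpace Ω] (P : Measure Ω) (ξ η : Ω → ℝ) : Prop :=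
  ∀ u v : ℝ, (∫ ω, Complex.exp (Complex.I * ((u * ξ ω + v * η ω : ℝ) : ℂ)) ∂P)
    = Complex.exp (-((nrm α μ (fun s => u * f s + v * g s) ^ α : ℝ) : ℂ))

/-!
Only the finite-dimensional laws matter, so one may take `ξ n = ∑' m, ω (n - m) m`, where the blocks
`ω i : ℕ → ℝ` are i.i.d. and `ω i m`, the contribution of the `i`-th unit interval of the driving
stable measure to `ξ (i + m)`, is symmetric stable with scale `τ m = ∫_m^{m+1} |a| ^ α`.

Let `P k` be the projection of `L²` onto the martingale difference space of the filtration generated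
by the blocks at time `-k`. Averaging `K (ξ 0)` over its first `k₀` blocks, at least one of which is
not degenerate, replaces `K` by its convolution with a law having a smooth stable density. For
`k ≥ k₀`, deleting `ω (-k) k` from the argument of this convolution leaves a function that `P k`
annihilates, while the change, being at most linear in small values of `ω (-k) k` and of order `β`
in large ones, has second moment `O(τ k)` because `2 β < α`. Hence `‖P k K(ξ 0)‖` is of order
`(τ k) ^ (1 / 2)`.

By hypothesis these norms are summable, which is Hannan's condition for the central limit theorem.
It makes the autocovariances absolutely summable and bounds the norm of a partial sum over `N` terms
by `√N ∑ k, ‖P k x‖`. By this bound it suffices to treat functions of finitely many blocks, for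
which the summands are `m`-dependent and can be grouped into independent big blocks separated by
negligible gaps.
-/

namespace StableMovingAverage

/-- `ρ` is the symmetric `α`-stable law with scale parameter `τ`, in the parametrisation in which
its characteristic function is `t ↦ exp (-τ |t| ^ α)`. -/
def IsSAS (α τ : ℝ) (ρ : Measure ℝ) : Prop :=
  ∀ t : ℝ, charFun ρ t = Complex.exp (-((τ * |t| ^ α : ℝ) : ℂ))

lemma IsSAS.map_mul {α τ : ℝ} {ρ : Measure ℝ} (h : IsSAS α τ ρ) (r : ℝ) :
    IsSAS α (|r| ^ α * τ) (ρ.map (fun x => r * x)) := by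
  intro t
  rw [charFun_map_mul, h (r * t), abs_mul, Real.mul_rpow (abs_nonneg _) (abs_nonneg _)]
  congr 3
  ring

section Moments

lemma integral_one_sub_cos (ρ : Measure ℝ) [IsProbabilityMeasure ρ] (t : ℝ) :
    ∫ y, (1 - cos (t * y)) ∂ρ = 1 - (charFun ρ t).re := by
  have hcos : Integrable (fun y : ℝ => cos (t * y)) ρ :=
    Integrable.of_bound (C := 1) (by fun_prop) (ae_of_all _ fun y => abs_cos_le_one _)
  have hexp : Integrable (fun y : ℝ => Complex.exp (t * y * Complex.I)) ρ :=
    Integrable.of_bound (C := 1) (by fun_prop) (ae_of_all _ fun y => by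
      rw [← Complex.ofReal_mul, Complex.norm_exp_ofReal_mul_I])
  have hre : (charFun ρ t).re = ∫ y, cos (t * y) ∂ρ := by
    rw [charFun_apply_real, ← RCLike.re_to_complex, ← integral_re hexp]
    exact integral_congr_ae (ae_of_all _ fun y => by
      simp only [RCLike.re_to_complex, ← Complex.ofReal_mul, Complex.exp_ofReal_mul_I_re])
  rw [integral_sub (integrable_const _) hcos, hre]
  simp

lemma sq_mul_min_one_inv_rpow {q y : ℝ} (hq : q < 2) (hy : y ≠ 0) :
    y ^ 2 * (min 1 |y|⁻¹) ^ (2 - q) = min (y ^ 2) (|y| ^ q) := by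
  have hy' : 0 < |y| := abs_pos.2 hy
  rw [← sq_abs, ← Real.rpow_two]
  rcases le_total 1 |y| with h | h
  · rw [min_eq_right (inv_le_one_of_one_le₀ h),
      min_eq_right (Real.rpow_le_rpow_of_exponent_le h hq.le), Real.inv_rpow hy'.le,
      ← Real.rpow_neg hy'.le, ← Real.rpow_add hy']
    congr 1
    ring
  · rw [min_eq_left ((one_le_inv₀ hy').2 h), Real.one_rpow, mul_one,
      min_eq_left (Real.rpow_le_rpow_of_exponent_ge hy' h hq.le)]

lemma lintegral_Ioc_const_mul_rpow {c p b : ℝ} (hc : 0 ≤ c) (hp : -1 < p) (hb : 0 ≤ b) :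
    ∫⁻ t in Ioc 0 b, ENNReal.ofReal (c * t ^ p) = ENNReal.ofReal (c / (p + 1) * b ^ (p + 1)) := by
  rw [← ofReal_integral_eq_lintegral_ofReal]
  · rw [← intervalIntegral.integral_of_le hb, intervalIntegral.integral_const_mul,
      integral_rpow (Or.inl hp), Real.zero_rpow (by linarith), sub_zero]
    congr 1
    ring
  · rw [← IntegrableOn, ← intervalIntegrable_iff_integrableOn_Ioc_of_le hb]
    exact (intervalIntegral.intervalIntegrable_rpow' hp).const_mul _
  · filter_upwards [ae_restrict_mem measurableSet_Ioc] with t ht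
    exact mul_nonneg hc (Real.rpow_nonneg ht.1.le _)

lemma ofReal_min_sq_rpow_le_lintegral {q y : ℝ} (hq : q < 2) (hy : y ≠ 0) :
    ENNReal.ofReal (2 / π ^ 2 / (2 - q) * min (y ^ 2) (|y| ^ q)) ≤
      ∫⁻ t in Ioc (0 : ℝ) 1, ENNReal.ofReal ((1 - cos (t * y)) * t ^ (-1 - q)) := by
  have hy' : 0 < |y| := abs_pos.2 hy
  set m : ℝ := min 1 |y|⁻¹
  have hm0 : 0 < m := lt_min one_pos (inv_pos.2 hy')
  have hmy : m * |y| ≤ 1 :=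
    (mul_le_mul_of_nonneg_right (min_le_right _ _) hy'.le).trans_eq (inv_mul_cancel₀ hy'.ne')
  have hcos : ∀ t ∈ Ioc 0 m, 2 / π ^ 2 * y ^ 2 * t ^ (1 - q) ≤
      (1 - cos (t * y)) * t ^ (-1 - q) := fun t ht => by
    have hty : |t * y| ≤ π := by
      rw [abs_mul, abs_of_pos ht.1]
      linarith [mul_le_mul_of_nonneg_right ht.2 hy'.le, pi_gt_three]
    have hsplit : t ^ (1 - q) = t ^ 2 * t ^ (-1 - q) := by
      rw [← Real.rpow_two, ← Real.rpow_add ht.1]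
      congr 1
      ring
    rw [hsplit, ← mul_assoc]
    refine mul_le_mul_of_nonneg_right ?_ (Real.rpow_nonneg ht.1.le _)
    linarith [cos_le_one_sub_mul_cos_sq hty, mul_pow t y 2]
  calc ENNReal.ofReal (2 / π ^ 2 / (2 - q) * min (y ^ 2) (|y| ^ q))
      = ∫⁻ t in Ioc 0 m, ENNReal.ofReal (2 / π ^ 2 * y ^ 2 * t ^ (1 - q)) := by
        rw [lintegral_Ioc_const_mul_rpow (by positivity) (by linarith) hm0.le,
          ← sq_mul_min_one_inv_rpow hq hy, show 1 - q + 1 = 2 - q by ring]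
        congr 1
        ring
    _ ≤ ∫⁻ t in Ioc 0 m, ENNReal.ofReal ((1 - cos (t * y)) * t ^ (-1 - q)) :=
        setLIntegral_mono' measurableSet_Ioc fun t ht => ENNReal.ofReal_le_ofReal (hcos t ht)
    _ ≤ _ := lintegral_mono_set (Ioc_subset_Ioc_right (min_le_left _ _))

lemma IsSAS.one_sub_re_charFun_le {α τ t : ℝ} {ρ : Measure ℝ} (h : IsSAS α τ ρ) (ht : 0 < t) :
    1 - (charFun ρ t).re ≤ τ * t ^ α := by
  rw [h t, ← Complex.ofReal_neg, Complex.exp_ofReal_re, abs_of_pos ht]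
  linarith [add_one_le_exp (-(τ * t ^ α))]

variable {α q τ : ℝ} {ρ : Measure ℝ} [IsProbabilityMeasure ρ]

lemma lintegral_min_sq_rpow_le (hq : 0 < q) (hqα : q < α) (hq2 : q < 2) (hτ : 0 ≤ τ)
    (hρ : ∀ t ∈ Ioc (0 : ℝ) 1, 1 - (charFun ρ t).re ≤ τ * t ^ α) :
    ∫⁻ y, ENNReal.ofReal (2 / π ^ 2 / (2 - q) * min (y ^ 2) (|y| ^ q)) ∂ρ ≤
      ENNReal.ofReal (τ / (α - q)) := by
  have hnonneg : ∀ t y : ℝ, 0 ≤ 1 - cos (t * y) := fun t y => sub_nonneg.2 (cos_le_one _)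
  calc ∫⁻ y, ENNReal.ofReal (2 / π ^ 2 / (2 - q) * min (y ^ 2) (|y| ^ q)) ∂ρ
      ≤ ∫⁻ y, (∫⁻ t in Ioc (0 : ℝ) 1, ENNReal.ofReal ((1 - cos (t * y)) * t ^ (-1 - q))) ∂ρ := by
        refine lintegral_mono fun y => ?_
        by_cases hy : y = 0
        · simp [hy, Real.zero_rpow hq.ne']
        · exact ofReal_min_sq_rpow_le_lintegral hq2 hy
    _ = ∫⁻ t in Ioc (0 : ℝ) 1, (∫⁻ y, ENNReal.ofReal ((1 - cos (t * y)) * t ^ (-1 - q)) ∂ρ) :=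
        lintegral_lintegral_swap (Measurable.aemeasurable (by fun_prop))
    _ ≤ ∫⁻ t in Ioc (0 : ℝ) 1, ENNReal.ofReal (τ * t ^ (α - 1 - q)) := by
        refine setLIntegral_mono' measurableSet_Ioc fun t ht => ?_
        have hpow : 0 ≤ t ^ (-1 - q) := Real.rpow_nonneg ht.1.le _
        rw [← ofReal_integral_eq_lintegral_ofReal]
        · refine ENNReal.ofReal_le_ofReal ?_
          rw [integral_mul_const, integral_one_sub_cos, show α - 1 - q = α + (-1 - q) by ring,
            Real.rpow_add ht.1, ← mul_assoc]
          exact mul_le_mul_of_nonneg_right (hρ t ht) hpow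
        · refine (Integrable.of_bound (C := 2) (by fun_prop) (ae_of_all _ fun y => ?_)).mul_const _
          rw [Real.norm_of_nonneg (hnonneg t y)]
          linarith [neg_one_le_cos (t * y)]
        · exact ae_of_all _ fun y => mul_nonneg (hnonneg t y) hpow
    _ = ENNReal.ofReal (τ / (α - q)) := by
        rw [lintegral_Ioc_const_mul_rpow hτ (by linarith) zero_le_one, Real.one_rpow, mul_one]
        congr 2
        ring

lemma IsSAS.integrable_min_sq_rpow (h : IsSAS α τ ρ) (hq : 0 < q) (hqα : q < α) (hq2 : q < 2)
    (hτ : 0 ≤ τ) : Integrable (fun y : ℝ => min (y ^ 2) (|y| ^ q)) ρ := by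
  have hc : 0 < 2 / π ^ 2 / (2 - q) := div_pos (by positivity) (by linarith)
  have hint : Integrable (fun y : ℝ => 2 / π ^ 2 / (2 - q) * min (y ^ 2) (|y| ^ q)) ρ := by
    refine ⟨by fun_prop, ?_⟩
    rw [hasFiniteIntegral_iff_ofReal (ae_of_all _ fun y => by positivity)]
    exact (lintegral_min_sq_rpow_le hq hqα hq2 hτ fun t ht =>
      h.one_sub_re_charFun_le ht.1).trans_lt ENNReal.ofReal_lt_top
  exact (integrable_const_mul_iff (Ne.isUnit hc.ne') _).1 hint

lemma IsSAS.integral_min_sq_rpow_le (h : IsSAS α τ ρ) (hq : 0 < q) (hqα : q < α) (hq2 : q < 2)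
    (hτ : 0 ≤ τ) :
    ∫ y, min (y ^ 2) (|y| ^ q) ∂ρ ≤ π ^ 2 * (2 - q) / (2 * (α - q)) * τ := by
  have : 0 < 2 - q := by linarith
  have hαq : 0 < α - q := by linarith
  have hle := lintegral_min_sq_rpow_le (ρ := ρ) hq hqα hq2 hτ fun t ht =>
    h.one_sub_re_charFun_le ht.1
  rw [← ofReal_integral_eq_lintegral_ofReal
    ((h.integrable_min_sq_rpow hq hqα hq2 hτ).const_mul _)
    (ae_of_all _ fun y => by positivity),
    ENNReal.ofReal_le_ofReal_iff (by positivity), integral_const_mul, div_div,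
    div_mul_eq_mul_div, div_le_div_iff₀ (by positivity) hαq] at hle
  rw [div_mul_eq_mul_div, le_div_iff₀ (by positivity)]
  linarith

lemma abs_le_one_add_min_sq_rpow_one (y : ℝ) : |y| ≤ 1 + min (y ^ 2) (|y| ^ (1 : ℝ)) := by
  rw [Real.rpow_one, ← sq_abs]
  rcases le_total |y| 1 with hy | hy
  · exact hy.trans (le_add_of_nonneg_right (by positivity))
  · rw [min_eq_right (by nlinarith)]
    linarith

lemma IsSAS.integrable_abs (h : IsSAS α τ ρ) (hα : 1 < α) (hτ : 0 ≤ τ) :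
    Integrable (fun y : ℝ => |y|) ρ := by
  have hmin := h.integrable_min_sq_rpow one_pos hα one_lt_two hτ
  refine ((integrable_const 1).add hmin).mono' (by fun_prop) (ae_of_all _ fun y => ?_)
  rw [Real.norm_of_nonneg (abs_nonneg y)]
  exact abs_le_one_add_min_sq_rpow_one y

-- The bound for `s = 1` is rescaled by `s⁻¹`.
lemma IsSAS.integral_abs_le (h : IsSAS α τ ρ) (hα : 1 < α) (hτ : 0 ≤ τ) {s : ℝ} (hs : 0 < s)
    (hle : τ ≤ s ^ α) : ∫ y, |y| ∂ρ ≤ (1 + π ^ 2 / (2 * (α - 1))) * s := by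
  have hscaled := h.map_mul s⁻¹
  have : IsProbabilityMeasure (ρ.map (fun x => s⁻¹ * x)) :=
    Measure.isProbabilityMeasure_map (by fun_prop)
  have hscale0 : 0 ≤ |s⁻¹| ^ α * τ := by positivity
  have hscale1 : |s⁻¹| ^ α * τ ≤ 1 := by
    rwa [abs_of_pos (inv_pos.2 hs), Real.inv_rpow hs.le, inv_mul_le_iff₀ (by positivity), mul_one]
  have hmin := hscaled.integrable_min_sq_rpow one_pos hα one_lt_two hscale0
  have hscaled_le : s⁻¹ * ∫ y, |y| ∂ρ ≤ 1 + π ^ 2 / (2 * (α - 1)) := by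
    calc s⁻¹ * ∫ y, |y| ∂ρ = ∫ y, |y| ∂(ρ.map (fun x => s⁻¹ * x)) := by
          rw [integral_map (by fun_prop) (by fun_prop), ← integral_const_mul]
          simp only [abs_mul, abs_of_pos (inv_pos.2 hs)]
      _ ≤ ∫ y, (1 + min (y ^ 2) (|y| ^ (1 : ℝ))) ∂(ρ.map (fun x => s⁻¹ * x)) :=
          integral_mono (hscaled.integrable_abs hα hscale0) ((integrable_const 1).add hmin)
            abs_le_one_add_min_sq_rpow_one
      _ = 1 + ∫ y, min (y ^ 2) (|y| ^ (1 : ℝ)) ∂(ρ.map (fun x => s⁻¹ * x)) := by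
          rw [integral_add (integrable_const _) hmin]
          simp
      _ ≤ 1 + π ^ 2 * (2 - 1) / (2 * (α - 1)) * 1 := by
          have : 0 < α - 1 := by linarith
          gcongr
          refine (hscaled.integral_min_sq_rpow_le one_pos hα one_lt_two hscale0).trans ?_
          gcongr
      _ = 1 + π ^ 2 / (2 * (α - 1)) := by ring
  rwa [inv_mul_le_iff₀ hs, mul_comm] at hscaled_le

end Moments

section HalfLineFourier

/-- The half-line Fourier integral `∫₀^∞ e^{itu} f(t) dt` of a real function. Stable densities and
their derivatives are real and imaginary parts of such integrals. -/
noncomputable def halfLineFourier (f : ℝ → ℝ) (u : ℝ) : ℂ :=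
  ∫ t in Ioi (0 : ℝ), Complex.exp (t * u * Complex.I) * f t

lemma norm_exp_ofReal_mul_ofReal_mul_I (t u : ℝ) : ‖Complex.exp (t * u * Complex.I)‖ = 1 := by
  rw [← Complex.ofReal_mul, Complex.norm_exp_ofReal_mul_I]

variable {f f' f'' : ℝ → ℝ} {c c' : ℝ}

lemma integrableOn_exp_mul_ofReal (hf : IntegrableOn f (Ioi 0)) (u : ℝ) :
    IntegrableOn (fun t : ℝ => Complex.exp (t * u * Complex.I) * f t) (Ioi 0) :=
  Integrable.bdd_mul (c := 1) hf.ofReal (by fun_prop)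
    (ae_of_all _ fun t => (norm_exp_ofReal_mul_ofReal_mul_I t u).le)

lemma norm_halfLineFourier_le (f : ℝ → ℝ) (u : ℝ) :
    ‖halfLineFourier f u‖ ≤ ∫ t in Ioi (0 : ℝ), |f t| := by
  refine (norm_integral_le_integral_norm _).trans_eq (integral_congr_ae (ae_of_all _ fun t => ?_))
  simp only [norm_mul, norm_exp_ofReal_mul_ofReal_mul_I, one_mul, Complex.norm_real,
    Real.norm_eq_abs]

lemma continuous_halfLineFourier (hf : IntegrableOn f (Ioi 0)) :
    Continuous (halfLineFourier f) := by
  refine continuous_of_dominated (bound := fun t => |f t|)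
    (fun u => (integrableOn_exp_mul_ofReal hf u).aestronglyMeasurable)
    (fun u => ae_of_all _ fun t => ?_) hf.abs (ae_of_all _ fun t => by fun_prop)
  rw [norm_mul, norm_exp_ofReal_mul_ofReal_mul_I, one_mul, Complex.norm_real, Real.norm_eq_abs]

lemma hasDerivAt_halfLineFourier (hfm : Measurable f) (hf : IntegrableOn f (Ioi 0))
    (htf : IntegrableOn (fun t => t * f t) (Ioi 0)) (u : ℝ) :
    HasDerivAt (halfLineFourier f) (Complex.I * halfLineFourier (fun t => t * f t) u) u := by
  have hderiv := (hasDerivAt_integral_of_dominated_loc_of_deriv_le (𝕜 := ℝ)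
    (μ := volume.restrict (Ioi 0)) (x₀ := u) (s := univ) (bound := fun t => |t * f t|)
    (F := fun u t => Complex.exp (t * u * Complex.I) * f t)
    (F' := fun u t => Complex.I * (Complex.exp (t * u * Complex.I) * ((t * f t : ℝ) : ℂ)))
    univ_mem (Eventually.of_forall fun v => (integrableOn_exp_mul_ofReal hf v).1)
    (integrableOn_exp_mul_ofReal hf u) (by fun_prop) ?_ htf.abs ?_).2
  · rwa [integral_const_mul] at hderiv
  · refine ae_of_all _ fun t v _ => ?_
    rw [norm_mul, norm_mul, Complex.norm_I, norm_exp_ofReal_mul_ofReal_mul_I, one_mul, one_mul,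
      Complex.norm_real, Real.norm_eq_abs]
  · refine ae_of_all _ fun t v _ => ?_
    have harg : HasDerivAt (fun v : ℝ => (t * v * Complex.I : ℂ)) (t * 1 * Complex.I) v :=
      ((Complex.ofRealCLM.hasDerivAt (x := v)).const_mul (t : ℂ)).mul_const Complex.I
    refine (harg.cexp.mul_const (f t : ℂ)).congr_deriv ?_
    push_cast
    ring

lemma mul_I_mul_halfLineFourier (hderiv : ∀ t ∈ Ioi (0 : ℝ), HasDerivAt f (f' t) t)
    (hf : IntegrableOn f (Ioi 0)) (hf' : IntegrableOn f' (Ioi 0))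
    (hzero : Tendsto f (𝓝[>] 0) (𝓝 c)) (hinfty : Tendsto f atTop (𝓝 0)) (u : ℝ) :
    u * Complex.I * halfLineFourier f u = -c - halfLineFourier f' u := by
  have hexp : ∀ t : ℝ, HasDerivAt (fun t : ℝ => Complex.exp (t * u * Complex.I))
      (Complex.exp (t * u * Complex.I) * (1 * u * Complex.I)) t := fun t =>
    (((Complex.ofRealCLM.hasDerivAt (x := t)).mul_const (u : ℂ)).mul_const Complex.I).cexp
  have hparts := integral_Ioi_mul_deriv_eq_deriv_mul (a := 0) (a' := (c : ℂ)) (b' := 0)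
    (u := fun t => (f t : ℂ)) (u' := fun t => (f' t : ℂ))
    (fun t ht => (hderiv t ht).ofReal_comp) (fun t _ => hexp t) ?_ ?_ ?_ ?_
  · have hleft : ∫ t in Ioi (0 : ℝ), (f t : ℂ) * (Complex.exp (t * u * Complex.I) *
        (1 * u * Complex.I)) = u * Complex.I * halfLineFourier f u := by
      rw [halfLineFourier, ← integral_const_mul]
      exact integral_congr_ae (ae_of_all _ fun t => by ring)
    have hright : ∫ t in Ioi (0 : ℝ), (f' t : ℂ) * Complex.exp (t * u * Complex.I) =
        halfLineFourier f' u := by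
      rw [halfLineFourier]
      exact integral_congr_ae (ae_of_all _ fun t => mul_comm _ _)
    rw [← hleft, hparts, hright, zero_sub]
  · refine ((integrableOn_exp_mul_ofReal hf u).const_mul (u * Complex.I)).congr
      (ae_of_all _ fun t => ?_)
    simp only [Pi.mul_apply]
    ring
  · refine (integrableOn_exp_mul_ofReal hf' u).congr (ae_of_all _ fun t => ?_)
    simp only [Pi.mul_apply]
    ring
  · have hone : Tendsto (fun t : ℝ => Complex.exp (t * u * Complex.I)) (𝓝[>] 0) (𝓝 1) := by
      have h := ((hexp 0).continuousAt.tendsto).mono_left (nhdsWithin_le_nhds (s := Ioi 0))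
      simpa using h
    have hmul := ((Complex.continuous_ofReal.tendsto c).comp hzero).mul hone
    rwa [mul_one] at hmul
  · refine squeeze_zero_norm (fun t => ?_) (tendsto_zero_iff_abs_tendsto_zero f |>.1 hinfty)
    simp [norm_exp_ofReal_mul_ofReal_mul_I]

lemma sq_mul_halfLineFourier (hderiv : ∀ t ∈ Ioi (0 : ℝ), HasDerivAt f (f' t) t)
    (hderiv' : ∀ t ∈ Ioi (0 : ℝ), HasDerivAt f' (f'' t) t)
    (hf : IntegrableOn f (Ioi 0)) (hf' : IntegrableOn f' (Ioi 0)) (hf'' : IntegrableOn f'' (Ioi 0))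
    (hzero : Tendsto f (𝓝[>] 0) (𝓝 c)) (hinfty : Tendsto f atTop (𝓝 0))
    (hzero' : Tendsto f' (𝓝[>] 0) (𝓝 c')) (hinfty' : Tendsto f' atTop (𝓝 0)) (u : ℝ) :
    (u : ℂ) ^ 2 * halfLineFourier f u = u * c * Complex.I - c' - halfLineFourier f'' u := by
  have h := mul_I_mul_halfLineFourier hderiv hf hf' hzero hinfty u
  have h' := mul_I_mul_halfLineFourier hderiv' hf' hf'' hzero' hinfty' u
  linear_combination (-(u : ℂ) * Complex.I) * h + h' +
    (u : ℂ) ^ 2 * halfLineFourier f u * Complex.I_sq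

lemma abs_le_add_mul_inv_one_add_sq {x u A B : ℝ} (hA : |x| ≤ A) (hB : |u ^ 2 * x| ≤ B) :
    |x| ≤ (A + B) * (1 + u ^ 2)⁻¹ := by
  rw [abs_mul, abs_of_nonneg (sq_nonneg u)] at hB
  rw [← div_eq_mul_inv, le_div_iff₀ (by positivity)]
  linarith

lemma abs_re_halfLineFourier_le (hderiv : ∀ t ∈ Ioi (0 : ℝ), HasDerivAt f (f' t) t)
    (hderiv' : ∀ t ∈ Ioi (0 : ℝ), HasDerivAt f' (f'' t) t)
    (hf : IntegrableOn f (Ioi 0)) (hf' : IntegrableOn f' (Ioi 0)) (hf'' : IntegrableOn f'' (Ioi 0))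
    (hzero : Tendsto f (𝓝[>] 0) (𝓝 c)) (hinfty : Tendsto f atTop (𝓝 0))
    (hzero' : Tendsto f' (𝓝[>] 0) (𝓝 0)) (hinfty' : Tendsto f' atTop (𝓝 0)) (u : ℝ) :
    |(halfLineFourier f u).re| ≤
      ((∫ t in Ioi (0 : ℝ), |f t|) + ∫ t in Ioi (0 : ℝ), |f'' t|) * (1 + u ^ 2)⁻¹ := by
  refine abs_le_add_mul_inv_one_add_sq
    ((Complex.abs_re_le_norm _).trans (norm_halfLineFourier_le f u)) ?_
  have h := congrArg Complex.re
    (sq_mul_halfLineFourier hderiv hderiv' hf hf' hf'' hzero hinfty hzero' hinfty' u)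
  rw [← Complex.ofReal_pow, Complex.re_ofReal_mul] at h
  rw [h]
  simpa using (Complex.abs_re_le_norm _).trans (norm_halfLineFourier_le f'' u)

lemma abs_im_halfLineFourier_le (hderiv : ∀ t ∈ Ioi (0 : ℝ), HasDerivAt f (f' t) t)
    (hderiv' : ∀ t ∈ Ioi (0 : ℝ), HasDerivAt f' (f'' t) t)
    (hf : IntegrableOn f (Ioi 0)) (hf' : IntegrableOn f' (Ioi 0)) (hf'' : IntegrableOn f'' (Ioi 0))
    (hzero : Tendsto f (𝓝[>] 0) (𝓝 0)) (hinfty : Tendsto f atTop (𝓝 0))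
    (hzero' : Tendsto f' (𝓝[>] 0) (𝓝 c')) (hinfty' : Tendsto f' atTop (𝓝 0)) (u : ℝ) :
    |(halfLineFourier f u).im| ≤
      ((∫ t in Ioi (0 : ℝ), |f t|) + ∫ t in Ioi (0 : ℝ), |f'' t|) * (1 + u ^ 2)⁻¹ := by
  refine abs_le_add_mul_inv_one_add_sq
    ((Complex.abs_im_le_norm _).trans (norm_halfLineFourier_le f u)) ?_
  have h := congrArg Complex.im
    (sq_mul_halfLineFourier hderiv hderiv' hf hf' hf'' hzero hinfty hzero' hinfty' u)
  rw [← Complex.ofReal_pow, Complex.im_ofReal_mul] at h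
  rw [h]
  simpa using (Complex.abs_im_le_norm _).trans (norm_halfLineFourier_le f'' u)

lemma integrable_comp_abs (hf : IntegrableOn f (Ioi 0)) : Integrable (fun t => f |t|) := by
  have hpos : IntegrableOn (fun t => f |t|) (Ioi 0) :=
    hf.congr_fun (fun t ht => by rw [abs_of_pos ht]) measurableSet_Ioi
  have hneg : IntegrableOn (fun t => f |t|) (Iio 0) := by
    have h := ((Measure.measurePreserving_neg (volume : Measure ℝ)).integrableOn_comp_preimage
      (Homeomorph.neg ℝ).measurableEmbedding).2 hpos
    simpa [Function.comp_def] using h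
  rw [← integrableOn_univ, ← Iic_union_Ioi (a := 0)]
  exact ((integrableOn_Iic_iff_integrableOn_Iio (by finiteness)).2 hneg).union hpos

open scoped FourierTransform in
lemma fourier_comp_abs (hf : IntegrableOn f (Ioi 0)) (w : ℝ) :
    𝓕 (fun t : ℝ => (f |t| : ℂ)) w = ((2 * (halfLineFourier f (2 * π * w)).re : ℝ) : ℂ) := by
  set g : ℝ → ℂ := fun t => Complex.exp ((t : ℂ) * (-(2 * π * w) : ℝ) * Complex.I) * f |t|
  have hg : Integrable g := Integrable.bdd_mul (c := 1) (integrable_comp_abs hf).ofReal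
    (by fun_prop) (ae_of_all _ fun t => (norm_exp_ofReal_mul_ofReal_mul_I t _).le)
  have hfourier : 𝓕 (fun t : ℝ => (f |t| : ℂ)) w = ∫ t, g t := by
    rw [Real.fourier_eq']
    refine integral_congr_ae (ae_of_all _ fun t => ?_)
    simp only [g, smul_eq_mul, RCLike.inner_apply, conj_trivial]
    congr 2
    push_cast
    ring
  have hneg : ∫ t in Iic 0, g t = halfLineFourier f (2 * π * w) := by
    rw [← neg_zero, ← integral_comp_neg_Ioi, halfLineFourier]
    refine setIntegral_congr_fun measurableSet_Ioi fun t ht => ?_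
    simp only [g, abs_neg, abs_of_pos (show 0 < t from ht)]
    congr 2
    push_cast
    ring
  have hpos : ∫ t in Ioi 0, g t = (starRingEnd ℂ) (halfLineFourier f (2 * π * w)) := by
    rw [halfLineFourier, ← integral_conj]
    refine setIntegral_congr_fun measurableSet_Ioi fun t ht => ?_
    simp only [g, abs_of_pos (show 0 < t from ht), map_mul, ← Complex.exp_conj, Complex.conj_I,
      Complex.conj_ofReal]
    congr 2
    push_cast
    ring
  rw [hfourier, ← intervalIntegral.integral_Iic_add_Ioi hg.integrableOn hg.integrableOn, hneg,
    hpos, Complex.add_conj]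

open scoped FourierTransform in
lemma integral_exp_mul_re_halfLineFourier (hfc : Continuous fun t => f |t|)
    (hf : IntegrableOn f (Ioi 0)) (hF : Integrable fun u => (halfLineFourier f u).re) (t : ℝ) :
    ∫ u : ℝ, Complex.exp (t * u * Complex.I) * ((π⁻¹ * (halfLineFourier f u).re : ℝ) : ℂ) =
      f |t| := by
  have hπ : (2 * π : ℝ) ≠ 0 := by positivity
  have hfourier : 𝓕 (fun t : ℝ => (f |t| : ℂ)) =
      fun w => ((2 * (halfLineFourier f (2 * π * w)).re : ℝ) : ℂ) :=
    funext (fourier_comp_abs hf)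
  have hfourier_int : Integrable (𝓕 (fun t : ℝ => (f |t| : ℂ))) := by
    rw [hfourier]
    exact ((hF.comp_mul_left' hπ).const_mul 2).ofReal
  have hinv := congrFun ((Complex.continuous_ofReal.comp hfc).fourierInv_fourier_eq
    (integrable_comp_abs hf).ofReal hfourier_int) t
  simp only [Function.comp_def] at hinv
  rw [← hinv, hfourier, Real.fourierInv_eq']
  have hscale := Measure.integral_comp_mul_left (fun u : ℝ =>
    Complex.exp (t * u * Complex.I) * ((π⁻¹ * (halfLineFourier f u).re : ℝ) : ℂ)) (2 * π)
  rw [abs_of_pos (by positivity), Complex.real_smul, eq_comm, Complex.ofReal_inv,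
    inv_mul_eq_iff_eq_mul₀ (by exact_mod_cast hπ)] at hscale
  rw [hscale, ← integral_const_mul]
  refine integral_congr_ae (ae_of_all _ fun w => ?_)
  have hphase : 2 * π * inner ℝ w t = t * (2 * π * w) := by
    simp only [RCLike.inner_apply, conj_trivial]
    ring
  have hπ' : (π : ℂ) ≠ 0 := by exact_mod_cast pi_ne_zero
  simp only [hphase, smul_eq_mul, Complex.ofReal_mul, Complex.ofReal_inv, Complex.ofReal_ofNat]
  field_simp

end HalfLineFourier

section StableDensity

/-- The weight `t ^ s * exp (-τ t ^ α)` on the half line. For `s = 0` it is the characteristic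
function of a symmetric stable law; other values of `s` arise by differentiation. -/
noncomputable def rpowMulExp (α τ s t : ℝ) : ℝ := t ^ s * exp (-τ * t ^ α)

variable {α τ s : ℝ}

@[fun_prop]
lemma measurable_rpowMulExp : Measurable (rpowMulExp α τ s) := by
  unfold rpowMulExp
  fun_prop

lemma integrableOn_rpowMulExp (hα : 0 < α) (hτ : 0 < τ) (hs : -1 < s) :
    IntegrableOn (rpowMulExp α τ s) (Ioi 0) :=
  integrableOn_rpow_mul_exp_neg_mul_rpow hs hα hτ

lemma hasDerivAt_rpowMulExp {t : ℝ} (ht : 0 < t) :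
    HasDerivAt (rpowMulExp α τ s)
      (s * rpowMulExp α τ (s - 1) t - τ * α * rpowMulExp α τ (s + α - 1) t) t := by
  have hpow : ∀ p : ℝ, HasDerivAt (fun t : ℝ => t ^ p) (p * t ^ (p - 1)) t := fun p =>
    Real.hasDerivAt_rpow_const (Or.inl ht.ne')
  have hsplit : t ^ (s + α - 1) = t ^ s * t ^ (α - 1) := by
    rw [← Real.rpow_add ht, add_sub_assoc]
  refine ((hpow s).mul ((hpow α).const_mul (-τ)).exp).congr_deriv ?_
  rw [rpowMulExp, rpowMulExp, hsplit]
  ring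

lemma tendsto_rpowMulExp_atTop (hα : 0 < α) (hτ : 0 < τ) (s : ℝ) :
    Tendsto (rpowMulExp α τ s) atTop (𝓝 0) := by
  refine ((tendsto_rpow_mul_exp_neg_mul_atTop_nhds_zero (s / α) τ hτ).comp
    (tendsto_rpow_atTop hα)).congr' ?_
  filter_upwards [eventually_gt_atTop 0] with t ht
  rw [Function.comp_apply, ← Real.rpow_mul ht.le, mul_div_cancel₀ _ hα.ne', rpowMulExp]

lemma tendsto_rpowMulExp_zero (hα : 0 < α) (hs : 0 ≤ s) :
    Tendsto (rpowMulExp α τ s) (𝓝[>] 0) (𝓝 (0 ^ s)) := by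
  have hcont : ContinuousAt (rpowMulExp α τ s) 0 :=
    (Real.continuousAt_rpow_const _ _ (Or.inr hs)).mul
      ((Real.continuousAt_rpow_const _ _ (Or.inr hα.le)).const_mul _).rexp
  have hzero : rpowMulExp α τ s 0 = 0 ^ s := by
    rw [rpowMulExp, Real.zero_rpow hα.ne', mul_zero, exp_zero, mul_one]
  exact hzero ▸ hcont.tendsto.mono_left nhdsWithin_le_nhds

lemma tendsto_rpowMulExp_zero_of_pos (hα : 0 < α) (hs : 0 < s) :
    Tendsto (rpowMulExp α τ s) (𝓝[>] 0) (𝓝 0) := by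
  simpa only [Real.zero_rpow hs.ne'] using tendsto_rpowMulExp_zero (τ := τ) hα hs.le

lemma exists_abs_re_halfLineFourier_rpowMulExp_le (hα : 1 < α) (hτ : 0 < τ) :
    ∃ C, ∀ u, |(halfLineFourier (rpowMulExp α τ 0) u).re| ≤ C * (1 + u ^ 2)⁻¹ := by
  have hα0 : 0 < α := by linarith
  have hint : ∀ {s : ℝ}, -1 < s → IntegrableOn (rpowMulExp α τ s) (Ioi 0) :=
    integrableOn_rpowMulExp hα0 hτ
  have hlim := tendsto_rpowMulExp_atTop hα0 hτ
  refine ⟨_, abs_re_halfLineFourier_le (c := 0 ^ (0 : ℝ))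
    (f' := fun t => -(τ * α) * rpowMulExp α τ (α - 1) t)
    (f'' := fun t => -(τ * α) * ((α - 1) * rpowMulExp α τ (α - 1 - 1) t -
      τ * α * rpowMulExp α τ (α - 1 + α - 1) t))
    (fun t ht => ?_) (fun t ht => (hasDerivAt_rpowMulExp ht).const_mul _) (hint (by norm_num))
    ((hint (by linarith)).const_mul _) ?_ (tendsto_rpowMulExp_zero hα0 le_rfl) (hlim 0) ?_ ?_⟩
  · refine (hasDerivAt_rpowMulExp ht).congr_deriv ?_
    rw [zero_mul, zero_add]
    ring
  · exact (((hint (by linarith)).const_mul _).sub ((hint (by linarith)).const_mul _)).const_mul _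
  · simpa using (tendsto_rpowMulExp_zero_of_pos hα0 (sub_pos.2 hα)).const_mul (-(τ * α))
  · simpa using (hlim (α - 1)).const_mul (-(τ * α))

lemma exists_abs_im_halfLineFourier_rpowMulExp_le (hα : 1 < α) (hτ : 0 < τ) :
    ∃ C, ∀ u, |(halfLineFourier (rpowMulExp α τ 1) u).im| ≤ C * (1 + u ^ 2)⁻¹ := by
  have hα0 : 0 < α := by linarith
  have hint : ∀ {s : ℝ}, -1 < s → IntegrableOn (rpowMulExp α τ s) (Ioi 0) :=
    integrableOn_rpowMulExp hα0 hτ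
  have hlim := tendsto_rpowMulExp_atTop hα0 hτ
  refine ⟨_, abs_im_halfLineFourier_le (c' := 0 ^ (0 : ℝ) - τ * α * 0)
    (f' := fun t => rpowMulExp α τ 0 t - τ * α * rpowMulExp α τ α t)
    (f'' := fun t => (0 * rpowMulExp α τ (0 - 1) t - τ * α * rpowMulExp α τ (0 + α - 1) t) -
      τ * α * (α * rpowMulExp α τ (α - 1) t - τ * α * rpowMulExp α τ (α + α - 1) t))
    (fun t ht => ?_)
    (fun t ht => (hasDerivAt_rpowMulExp ht).sub ((hasDerivAt_rpowMulExp ht).const_mul _))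
    (hint (by norm_num)) ((hint (by norm_num)).sub ((hint (by linarith)).const_mul _)) ?_
    (tendsto_rpowMulExp_zero_of_pos hα0 one_pos) (hlim 1)
    ((tendsto_rpowMulExp_zero hα0 le_rfl).sub
      ((tendsto_rpowMulExp_zero_of_pos hα0 hα0).const_mul _)) ?_⟩
  · refine (hasDerivAt_rpowMulExp ht).congr_deriv ?_
    rw [one_mul, sub_self, add_sub_cancel_left]
  · simp only [zero_mul, zero_sub]
    exact ((hint (by linarith)).const_mul _).neg.sub
      ((((hint (by linarith)).const_mul _).sub ((hint (by linarith)).const_mul _)).const_mul _)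
  · simpa using (hlim 0).sub ((hlim α).const_mul (τ * α))

lemma hasDerivAt_re_halfLineFourier_rpowMulExp (hα : 0 < α) (hτ : 0 < τ) (u : ℝ) :
    HasDerivAt (fun u => (halfLineFourier (rpowMulExp α τ 0) u).re)
      (-(halfLineFourier (rpowMulExp α τ 1) u).im) u := by
  have hmul : (fun t => t * rpowMulExp α τ 0 t) = rpowMulExp α τ 1 := by
    funext t
    simp only [rpowMulExp, Real.rpow_zero, Real.rpow_one, one_mul]
  have h := hasDerivAt_halfLineFourier (by fun_prop)
    (integrableOn_rpowMulExp hα hτ (s := 0) (by norm_num))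
    (hmul ▸ integrableOn_rpowMulExp hα hτ (s := 1) (by norm_num)) u
  rw [hmul] at h
  refine (Complex.reCLM.hasFDerivAt.comp_hasDerivAt u h).congr_deriv ?_
  rw [Complex.reCLM_apply, Complex.I_mul_re]

lemma abs_sub_le_of_abs_deriv_le_inv_one_add_sq {f f' : ℝ → ℝ} {C : ℝ}
    (hderiv : ∀ u, HasDerivAt f (f' u) u) (hf' : ∀ u, |f' u| ≤ C * (1 + u ^ 2)⁻¹)
    {u δ : ℝ} (hδ : |δ| ≤ 1) : |f (u + δ) - f u| ≤ 3 * C * |δ| * (1 + u ^ 2)⁻¹ := by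
  have hC : 0 ≤ C := by simpa using (abs_nonneg _).trans (hf' 0)
  have hbound : ∀ x ∈ Icc (u - 1) (u + 1), ‖f' x‖ ≤ 3 * C * (1 + u ^ 2)⁻¹ := fun x hx => by
    have hux : (u - x) ^ 2 ≤ 1 := by
      rw [sq_le_one_iff_abs_le_one, abs_le]
      constructor <;> linarith [hx.1, hx.2]
    have hinv : (1 + x ^ 2)⁻¹ ≤ 3 * (1 + u ^ 2)⁻¹ := by
      rw [← div_eq_mul_inv, le_div_iff₀ (by positivity), inv_mul_le_iff₀ (by positivity)]
      nlinarith [sq_nonneg (u - 2 * x)]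
    calc ‖f' x‖ ≤ C * (1 + x ^ 2)⁻¹ := hf' x
      _ ≤ C * (3 * (1 + u ^ 2)⁻¹) := by gcongr
      _ = 3 * C * (1 + u ^ 2)⁻¹ := by ring
  have hδ' := abs_le.1 hδ
  have h := (convex_Icc (u - 1) (u + 1)).norm_image_sub_le_of_norm_hasDerivWithin_le
    (x := u) (y := u + δ) (fun x _ => (hderiv x).hasDerivWithinAt) hbound
    (by constructor <;> linarith) (by constructor <;> linarith)
  rw [add_sub_cancel_left, Real.norm_eq_abs, Real.norm_eq_abs] at h
  linarith

lemma integral_exp_withDensity_ofReal {g : ℝ → ℝ} (hgm : Measurable g) (t : ℝ) :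
    ∫ x : ℝ, Complex.exp (t * x * Complex.I) ∂(volume.withDensity fun u => ENNReal.ofReal (g u)) =
      ∫ x : ℝ, Complex.exp (t * x * Complex.I) * (max (g x) 0 : ℝ) := by
  rw [integral_withDensity_eq_integral_toReal_smul (by fun_prop) (by simp)]
  refine integral_congr_ae (ae_of_all _ fun x => ?_)
  simp only [ENNReal.toReal_ofReal', Complex.real_smul, mul_comm]

lemma integrable_exp_mul_ofReal {g : ℝ → ℝ} (hg : Integrable g) (t : ℝ) :
    Integrable fun x : ℝ => Complex.exp (t * x * Complex.I) * g x :=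
  Integrable.bdd_mul (c := 1) hg.ofReal (by fun_prop) (ae_of_all _ fun x => by
    rw [← Complex.ofReal_mul, Complex.norm_exp_ofReal_mul_I])

-- The measures `ρ + g⁻ dx` and `g⁺ dx` have the same characteristic function; their equality forces
-- `g⁻ = 0`.
lemma eq_withDensity_of_charFun_eq_integral {ρ : Measure ℝ} [IsFiniteMeasure ρ] {g : ℝ → ℝ}
    (hg : Integrable g) (hgm : Measurable g)
    (h : ∀ t : ℝ, charFun ρ t = ∫ u : ℝ, Complex.exp (t * u * Complex.I) * g u) :
    ρ = volume.withDensity fun u => ENNReal.ofReal (g u) := by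
  have : IsFiniteMeasure (volume.withDensity fun u => ENNReal.ofReal (g u)) :=
    isFiniteMeasure_withDensity_ofReal hg.2
  have : IsFiniteMeasure (volume.withDensity fun u => ENNReal.ofReal (-g u)) :=
    isFiniteMeasure_withDensity_ofReal hg.neg.2
  have hexp : ∀ (μ : Measure ℝ) [IsFiniteMeasure μ] (t : ℝ),
      Integrable (fun x : ℝ => Complex.exp (t * x * Complex.I)) μ := fun μ _ t =>
    Integrable.of_bound (C := 1) (by fun_prop) (ae_of_all _ fun x => by
      rw [← Complex.ofReal_mul, Complex.norm_exp_ofReal_mul_I])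
  have hsum : ρ + volume.withDensity (fun u => ENNReal.ofReal (-g u)) =
      volume.withDensity fun u => ENNReal.ofReal (g u) := by
    refine Measure.ext_of_charFun (funext fun t => ?_)
    rw [charFun_apply_real, charFun_apply_real, integral_add_measure (hexp _ t) (hexp _ t),
      ← charFun_apply_real, h, integral_exp_withDensity_ofReal hgm,
      integral_exp_withDensity_ofReal (g := fun u => -g u) hgm.neg,
      ← integral_add (integrable_exp_mul_ofReal hg t) (integrable_exp_mul_ofReal hg.neg_part t)]
    refine integral_congr_ae (ae_of_all _ fun x => ?_)
    simp only [← mul_add, ← Complex.ofReal_add]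
    congr 2
    linarith [max_zero_sub_max_neg_zero_eq_self (g x)]
  have hneg : volume.withDensity (fun u => ENNReal.ofReal (-g u)) = 0 :=
    Measure.eq_zero_of_absolutelyContinuous_of_mutuallySingular
      (hsum ▸ (Measure.le_add_left le_rfl).absolutelyContinuous)
      (withDensity_ofReal_mutuallySingular hgm).symm
  rwa [hneg, add_zero] at hsum

variable {ρ : Measure ℝ} [IsFiniteMeasure ρ]

lemma IsSAS.eq_withDensity (h : IsSAS α τ ρ) (hα : 1 < α) (hτ : 0 < τ) :
    ρ = volume.withDensity fun u =>
      ENNReal.ofReal (π⁻¹ * (halfLineFourier (rpowMulExp α τ 0) u).re) := by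
  have hα0 : 0 < α := by linarith
  have hweight : ∀ t, rpowMulExp α τ 0 |t| = exp (-τ * |t| ^ α) := fun t => by
    rw [rpowMulExp, Real.rpow_zero, one_mul]
  have hint := integrableOn_rpowMulExp hα0 hτ (s := 0) (by norm_num)
  have hcont : Continuous fun u => (halfLineFourier (rpowMulExp α τ 0) u).re :=
    Complex.continuous_re.comp (continuous_halfLineFourier hint)
  obtain ⟨C, hC⟩ := exists_abs_re_halfLineFourier_rpowMulExp_le hα hτ
  have hre : Integrable fun u => (halfLineFourier (rpowMulExp α τ 0) u).re :=
    (integrable_inv_one_add_sq.const_mul C).mono' hcont.aestronglyMeasurable (ae_of_all _ hC)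
  refine eq_withDensity_of_charFun_eq_integral (hre.const_mul _)
    (hcont.measurable.const_mul _) fun t => ?_
  rw [h t, integral_exp_mul_re_halfLineFourier _ hint hre, hweight, neg_mul, Complex.ofReal_exp,
    Complex.ofReal_neg]
  simp only [hweight]
  exact continuous_exp.comp
    (continuous_const.mul (continuous_abs.rpow_const fun _ => Or.inr hα0.le))

lemma IsSAS.exists_density (h : IsSAS α τ ρ) (hα : 1 < α) (hτ : 0 < τ) : ∃ p : ℝ → ℝ, ∃ D : ℝ,
    Measurable p ∧ (∀ u, 0 ≤ p u) ∧ ρ = volume.withDensity (fun u => ENNReal.ofReal (p u)) ∧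
      ∀ u δ, |δ| ≤ 1 → |p (u + δ) - p u| ≤ D * |δ| * (1 + u ^ 2)⁻¹ := by
  have hderiv := hasDerivAt_re_halfLineFourier_rpowMulExp (zero_lt_one.trans hα) hτ
  obtain ⟨C, hC⟩ := exists_abs_im_halfLineFourier_rpowMulExp_le hα hτ
  have hcont : Continuous fun u => (halfLineFourier (rpowMulExp α τ 0) u).re :=
    continuous_iff_continuousAt.2 fun u => (hderiv u).continuousAt
  refine ⟨fun u => max (π⁻¹ * (halfLineFourier (rpowMulExp α τ 0) u).re) 0, π⁻¹ * (3 * C),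
    (hcont.measurable.const_mul _).max measurable_const, fun u => le_max_right _ _, ?_,
    fun u δ hδ => ?_⟩
  · simpa only [ENNReal.ofReal_max, ENNReal.ofReal_zero, max_zero] using h.eq_withDensity hα hτ
  · calc _ ≤ |π⁻¹ * (halfLineFourier (rpowMulExp α τ 0) (u + δ)).re -
          π⁻¹ * (halfLineFourier (rpowMulExp α τ 0) u).re| := abs_max_sub_max_le_abs _ _ _
      _ = π⁻¹ * |(halfLineFourier (rpowMulExp α τ 0) (u + δ)).re -
          (halfLineFourier (rpowMulExp α τ 0) u).re| := by
        rw [← mul_sub, abs_mul, abs_of_pos (inv_pos.2 pi_pos)]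
      _ ≤ π⁻¹ * (3 * C * |δ| * (1 + u ^ 2)⁻¹) := by
        gcongr
        exact abs_sub_le_of_abs_deriv_le_inv_one_add_sq hderiv
          (fun u => (abs_neg _).trans_le (hC u)) hδ
      _ = _ := by ring

lemma IsSAS.absolutelyContinuous (h : IsSAS α τ ρ) (hα : 1 < α) (hτ : 0 < τ) : ρ ≪ volume := by
  rw [h.eq_withDensity hα hτ]
  exact withDensity_absolutelyContinuous _ _

end StableDensity

section Smoothing

lemma one_add_abs_add_rpow_le {β : ℝ} (hβ0 : 0 ≤ β) (hβ1 : β ≤ 1) (v z : ℝ) :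
    1 + |v + z| ^ β ≤ (1 + |v| ^ β) * (1 + |z| ^ β) := by
  have hsub : |v + z| ^ β ≤ |v| ^ β + |z| ^ β :=
    (Real.rpow_le_rpow (abs_nonneg _) (abs_add_le v z) hβ0).trans
      (Real.rpow_add_le_add_rpow (abs_nonneg _) (abs_nonneg _) hβ0 hβ1)
  have hprod : 0 ≤ |v| ^ β * |z| ^ β := by positivity
  linarith

lemma abs_rpow_le_one_add_sq_rpow {β : ℝ} (hβ : 0 ≤ β) (z : ℝ) :
    |z| ^ β ≤ (1 + z ^ 2) ^ (β / 2) :=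
  calc |z| ^ β = (|z| ^ (2 : ℝ)) ^ (β / 2) := by
        rw [← Real.rpow_mul (abs_nonneg _), mul_div_cancel₀ _ two_ne_zero]
    _ = (z ^ 2) ^ (β / 2) := by rw [Real.rpow_two, sq_abs]
    _ ≤ (1 + z ^ 2) ^ (β / 2) := by
        gcongr
        exact le_add_of_nonneg_left zero_le_one

lemma integrable_one_add_abs_rpow_mul_inv_one_add_sq {β : ℝ} (hβ0 : 0 ≤ β) (hβ1 : β < 1) :
    Integrable (fun z : ℝ => (1 + |z| ^ β) * (1 + z ^ 2)⁻¹) := by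
  have h := integrable_rpow_neg_one_add_norm_sq (E := ℝ) (μ := volume) (r := 2 - β)
    (by rw [Module.finrank_self, Nat.cast_one]; linarith)
  refine (h.const_mul 2).mono' (by fun_prop) (ae_of_all _ fun z => ?_)
  have hpow : (1 + z ^ 2) ^ (-(2 - β) / 2) = (1 + z ^ 2) ^ (β / 2) * (1 + z ^ 2)⁻¹ := by
    rw [← Real.rpow_neg_one, ← Real.rpow_add (by positivity)]
    congr 1
    ring
  have hone : 1 ≤ (1 + z ^ 2) ^ (β / 2) :=
    Real.one_le_rpow (le_add_of_nonneg_right (sq_nonneg z)) (by positivity)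
  rw [Real.norm_of_nonneg (by positivity), Real.norm_eq_abs, sq_abs, hpow, ← mul_assoc]
  gcongr
  linarith [abs_rpow_le_one_add_sq_rpow hβ0 z]

/-- The smoothing of `K` by the law `ρ`, that is, the convolution of `K` with the reflection of
`ρ`: `smoothing K ρ x` is the mean of `K (x + Z)` for `Z` distributed as `ρ`. -/
noncomputable def smoothing (K : ℝ → ℝ) (ρ : Measure ℝ) (x : ℝ) : ℝ := ∫ z, K (x + z) ∂ρ

variable {α τ β C D : ℝ} {K p : ℝ → ℝ} {ρ : Measure ℝ}

lemma measurable_smoothing [SFinite ρ] (hK : Measurable K) : Measurable (smoothing K ρ) :=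
  (StronglyMeasurable.integral_prod_right
    (Measurable.stronglyMeasurable (f := fun p : ℝ × ℝ => K (p.1 + p.2)) (by fun_prop))).measurable

lemma abs_comp_add_le (hC : 0 ≤ C) (hβ0 : 0 ≤ β) (hβ1 : β ≤ 1)
    (hKC : ∀ z, |K z| ≤ C * (1 + |z| ^ β)) (x z : ℝ) :
    |K (x + z)| ≤ C * (1 + |x| ^ β) * (1 + |z| ^ β) := by
  rw [mul_assoc]
  exact (hKC _).trans (mul_le_mul_of_nonneg_left (one_add_abs_add_rpow_le hβ0 hβ1 x z) hC)

lemma integrable_comp_add [IsFiniteMeasure ρ] (hK : Measurable K) (hC : 0 ≤ C) (hβ0 : 0 ≤ β)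
    (hβ1 : β ≤ 1) (hKC : ∀ z, |K z| ≤ C * (1 + |z| ^ β)) (hρ : Integrable (fun z => |z| ^ β) ρ)
    (x : ℝ) : Integrable (fun z => K (x + z)) ρ :=
  (((integrable_const 1).add hρ).const_mul _).mono'
    (hK.comp (measurable_const_add x)).aestronglyMeasurable
    (ae_of_all _ (abs_comp_add_le hC hβ0 hβ1 hKC x))

lemma abs_smoothing_le [IsFiniteMeasure ρ] (hC : 0 ≤ C) (hβ0 : 0 ≤ β) (hβ1 : β ≤ 1)
    (hKC : ∀ z, |K z| ≤ C * (1 + |z| ^ β)) (hρ : Integrable (fun z => |z| ^ β) ρ) (x : ℝ) :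
    |smoothing K ρ x| ≤ (C * ∫ z, (1 + |z| ^ β) ∂ρ) * (1 + |x| ^ β) := by
  refine (norm_integral_le_of_norm_le (f := fun z => K (x + z))
    (g := fun z => C * (1 + |x| ^ β) * (1 + |z| ^ β))
    (((integrable_const 1).add hρ).const_mul _)
    (ae_of_all _ (abs_comp_add_le hC hβ0 hβ1 hKC x))).trans_eq ?_
  rw [integral_const_mul]
  ring

lemma smoothing_eq_integral_mul_density (hp : Measurable p) (hp0 : ∀ u, 0 ≤ p u)
    (hρp : ρ = volume.withDensity fun u => ENNReal.ofReal (p u)) (v y : ℝ) :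
    smoothing K ρ (v + y) = ∫ z, K (v + z) * p (z - y) := by
  rw [smoothing, hρp, integral_withDensity_eq_integral_toReal_smul (by fun_prop) (by simp),
    ← integral_sub_right_eq_self _ y]
  refine integral_congr_ae (ae_of_all _ fun z => ?_)
  simp only [ENNReal.toReal_ofReal (hp0 _), smul_eq_mul]
  rw [mul_comm, add_add_sub_cancel]

-- The increment of the smoothing is moved onto the density, whose increments are integrable
-- against the growth of `K`.
lemma abs_smoothing_sub_le_of_density [IsFiniteMeasure ρ] (hK : Measurable K) (hC : 0 ≤ C)
    (hβ0 : 0 ≤ β) (hβ1 : β < 1) (hKC : ∀ z, |K z| ≤ C * (1 + |z| ^ β))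
    (hρ : Integrable (fun z => |z| ^ β) ρ) (hp : Measurable p) (hp0 : ∀ u, 0 ≤ p u)
    (hρp : ρ = volume.withDensity fun u => ENNReal.ofReal (p u))
    (hpD : ∀ u δ, |δ| ≤ 1 → |p (u + δ) - p u| ≤ D * |δ| * (1 + u ^ 2)⁻¹) {y : ℝ} (hy : |y| ≤ 1)
    (v : ℝ) : |smoothing K ρ (v + y) - smoothing K ρ v| ≤
      (C * D * ∫ z, (1 + |z| ^ β) * (1 + z ^ 2)⁻¹) * ((1 + |v| ^ β) * |y|) := by
  have hint : ∀ x, Integrable fun z => K (x + z) * p z := fun x => by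
    have h := integrable_comp_add hK hC hβ0 hβ1.le hKC hρ x
    rw [hρp, integrable_withDensity_iff_integrable_smul' (by fun_prop) (by simp)] at h
    simpa only [ENNReal.toReal_ofReal (hp0 _), smul_eq_mul, mul_comm] using h
  have hint_shift : Integrable fun z => K (v + z) * p (z - y) := by
    simpa only [add_add_sub_cancel] using (hint (v + y)).comp_sub_right y
  have hsmoothing := smoothing_eq_integral_mul_density (K := K) hp hp0 hρp v
  have hzero := hsmoothing 0
  simp only [add_zero, sub_zero] at hzero
  rw [hsmoothing y, hzero, ← integral_sub hint_shift (hint v)]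
  have hbound : ∀ z, ‖K (v + z) * p (z - y) - K (v + z) * p z‖ ≤
      C * (1 + |v| ^ β) * (D * |y|) * ((1 + |z| ^ β) * (1 + z ^ 2)⁻¹) := fun z => by
    have hinc := hpD z (-y) (by rwa [abs_neg])
    rw [abs_neg, ← sub_eq_add_neg] at hinc
    rw [← mul_sub, norm_mul, Real.norm_eq_abs, Real.norm_eq_abs]
    calc |K (v + z)| * |p (z - y) - p z|
        ≤ C * (1 + |v| ^ β) * (1 + |z| ^ β) * (D * |y| * (1 + z ^ 2)⁻¹) :=
          mul_le_mul (abs_comp_add_le hC hβ0 hβ1.le hKC v z) hinc (abs_nonneg _) (by positivity)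
      _ = _ := by ring
  refine (norm_integral_le_of_norm_le
    ((integrable_one_add_abs_rpow_mul_inv_one_add_sq hβ0 hβ1).const_mul _)
    (ae_of_all _ hbound)).trans_eq ?_
  rw [integral_const_mul]
  ring

lemma abs_rpow_two_mul (y β : ℝ) : |y| ^ (2 * β) = (|y| ^ β) ^ 2 := by
  rw [mul_comm, Real.rpow_mul (abs_nonneg _), Real.rpow_two]

lemma abs_sub_le_of_abs_le_one_add_rpow {f : ℝ → ℝ} {B : ℝ} (hB : 0 ≤ B) (hβ0 : 0 ≤ β) (hβ1 : β ≤ 1)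
    (hf : ∀ x, |f x| ≤ B * (1 + |x| ^ β)) {y : ℝ} (hy : 1 ≤ |y|) (v : ℝ) :
    |f (v + y) - f v| ≤ 3 * B * ((1 + |v| ^ β) * |y| ^ β) := by
  have hy' : 1 ≤ |y| ^ β := Real.one_le_rpow hy hβ0
  calc |f (v + y) - f v| ≤ |f (v + y)| + |f v| := abs_sub _ _
    _ ≤ B * (1 + |v| ^ β) * (1 + |y| ^ β) + B * (1 + |v| ^ β) :=
        add_le_add (abs_comp_add_le hB hβ0 hβ1 hf v y) (hf v)
    _ = B * (1 + |v| ^ β) * (2 + |y| ^ β) := by ring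
    _ ≤ B * (1 + |v| ^ β) * (3 * |y| ^ β) := by gcongr; linarith
    _ = 3 * B * ((1 + |v| ^ β) * |y| ^ β) := by ring

lemma sq_sub_le_min_of_abs_sub_le {f : ℝ → ℝ} {A B : ℝ} (hB : 0 ≤ B) (hβ0 : 0 ≤ β)
    (hβ1 : β ≤ 1) (hf : ∀ x, |f x| ≤ B * (1 + |x| ^ β))
    (hfA : ∀ v y, |y| ≤ 1 → |f (v + y) - f v| ≤ A * ((1 + |v| ^ β) * |y|)) (v y : ℝ) :
    (f (v + y) - f v) ^ 2 ≤
      (A ^ 2 + (3 * B) ^ 2) * ((1 + |v| ^ β) ^ 2 * min (y ^ 2) (|y| ^ (2 * β))) := by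
  rcases le_total |y| 1 with hy | hy
  · have hmin : min (y ^ 2) (|y| ^ (2 * β)) = y ^ 2 := by
      rw [abs_rpow_two_mul, ← sq_abs, min_eq_left]
      gcongr
      simpa using Real.rpow_le_rpow_of_exponent_ge' (abs_nonneg y) hy hβ0 hβ1
    calc (f (v + y) - f v) ^ 2 ≤ (A * ((1 + |v| ^ β) * |y|)) ^ 2 := by
          rw [← sq_abs (f (v + y) - f v)]
          gcongr
          exact hfA v y hy
      _ = A ^ 2 * ((1 + |v| ^ β) ^ 2 * y ^ 2) := by rw [mul_pow, mul_pow, sq_abs]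
      _ ≤ _ := by
          rw [hmin]
          gcongr
          exact le_add_of_nonneg_right (sq_nonneg _)
  · have hmin : min (y ^ 2) (|y| ^ (2 * β)) = (|y| ^ β) ^ 2 := by
      rw [abs_rpow_two_mul, ← sq_abs, min_eq_right]
      gcongr
      simpa using Real.rpow_le_rpow_of_exponent_le hy hβ1
    calc (f (v + y) - f v) ^ 2 ≤ (3 * B * ((1 + |v| ^ β) * |y| ^ β)) ^ 2 := by
          rw [← sq_abs (f (v + y) - f v)]
          gcongr
          exact abs_sub_le_of_abs_le_one_add_rpow hB hβ0 hβ1 hf hy v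
      _ = (3 * B) ^ 2 * ((1 + |v| ^ β) ^ 2 * (|y| ^ β) ^ 2) := by ring
      _ ≤ _ := by
          rw [hmin]
          gcongr
          exact le_add_of_nonneg_left (sq_nonneg _)

lemma IsSAS.integrable_abs_rpow [IsProbabilityMeasure ρ] (h : IsSAS α τ ρ) (hα : 1 < α)
    (hτ : 0 ≤ τ) (hβ0 : 0 ≤ β) (hβ1 : β ≤ 1) : Integrable (fun z => |z| ^ β) ρ := by
  refine ((integrable_const 1).add (h.integrable_abs hα hτ)).mono' (by fun_prop)
    (ae_of_all _ fun z => ?_)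
  rw [Real.norm_of_nonneg (by positivity), Pi.add_apply]
  rcases le_total |z| 1 with hz | hz
  · linarith [Real.rpow_le_one (abs_nonneg z) hz hβ0, abs_nonneg z]
  · have hle := Real.rpow_le_rpow_of_exponent_le hz hβ1
    rw [Real.rpow_one] at hle
    linarith

lemma IsSAS.exists_sq_smoothing_sub_le [IsProbabilityMeasure ρ] (h : IsSAS α τ ρ) (hα : 1 < α)
    (hτ : 0 < τ) (hK : Measurable K) (hC : 0 ≤ C) (hβ0 : 0 ≤ β) (hβ1 : β < 1)
    (hKC : ∀ z, |K z| ≤ C * (1 + |z| ^ β)) : ∃ D, 0 ≤ D ∧ ∀ v y,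
      (smoothing K ρ (v + y) - smoothing K ρ v) ^ 2 ≤
        D * ((1 + |v| ^ β) ^ 2 * min (y ^ 2) (|y| ^ (2 * β))) := by
  have hρ := h.integrable_abs_rpow hα hτ.le hβ0 hβ1.le
  obtain ⟨p, D, hp, hp0, hρp, hpD⟩ := h.exists_density hα hτ
  exact ⟨_, by positivity, sq_sub_le_min_of_abs_sub_le
    (A := C * D * ∫ z, (1 + |z| ^ β) * (1 + z ^ 2)⁻¹) (B := C * ∫ z, (1 + |z| ^ β) ∂ρ)
    (mul_nonneg hC (integral_nonneg fun z => by positivity)) hβ0 hβ1.le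
    (abs_smoothing_le hC hβ0 hβ1.le hKC hρ)
    fun v y hy => abs_smoothing_sub_le_of_density hK hC hβ0 hβ1 hKC hρ hp hp0 hρp hpD hy v⟩

end Smoothing

lemma integrable_abs_sum_rpow {α : ℝ} (hα : 1 ≤ α) {X ι : Type*} [MeasurableSpace X]
    {μ : Measure X} {f : ι → X → ℝ} (hf : ∀ k, AEStronglyMeasurable (f k) μ)
    (hi : ∀ k, Integrable (fun x => |f k x| ^ α) μ) (s : Finset ι) :
    Integrable (fun x => |∑ k ∈ s, f k x| ^ α) μ := by
  have htoReal : (ENNReal.ofReal α).toReal = α := ENNReal.toReal_ofReal (by linarith)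
  have hpos : ENNReal.ofReal α ≠ 0 := by simpa using by linarith
  have hmem (k : ι) : MemLp (f k) (ENNReal.ofReal α) μ := by
    rw [← integrable_norm_rpow_iff (hf k) hpos (by simp), htoReal]
    exact hi k
  have hsum : MemLp (fun x => ∑ k ∈ s, f k x) (ENNReal.ofReal α) μ :=
    memLp_finsetSum s fun k _ => hmem k
  rwa [← integrable_norm_rpow_iff hsum.1 hpos (by simp), htoReal] at hsum

lemma integrable_abs_sum_mul_rpow {α : ℝ} (hα : 1 ≤ α) {X ι : Type*} [MeasurableSpace X]
    {μ : Measure X} {f : ι → X → ℝ} (hf : ∀ k, Measurable (f k))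
    (hi : ∀ k, Integrable (fun x => |f k x| ^ α) μ) (s : Finset ι) (u : ι → ℝ) :
    Integrable (fun x => |∑ k ∈ s, u k * f k x| ^ α) μ := by
  refine integrable_abs_sum_rpow hα (fun k => ((hf k).const_mul (u k)).aestronglyMeasurable)
    (fun k => ?_) s
  simpa only [abs_mul, mul_rpow (abs_nonneg _) (abs_nonneg _)] using (hi k).const_mul (|u k| ^ α)

section ExpLimit

variable {X : Type*} [MeasurableSpace X] {μ : Measure X} {g : X → ℝ}

lemma tendsto_mul_exp_sub_one (c : ℝ) :
    Tendsto (fun n : ℕ => (n : ℝ) * (exp (-((n : ℝ)⁻¹ * c)) - 1)) atTop (𝓝 (-c)) := by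
  have hderiv : HasDerivAt (fun t : ℝ => exp (-(t * c))) (-c) 0 := by
    simpa using (((hasDerivAt_id (0 : ℝ)).mul_const c).neg).exp
  have hinv : Tendsto (fun n : ℕ => (n : ℝ)⁻¹) atTop (𝓝[≠] 0) :=
    tendsto_nhdsWithin_iff.2 ⟨tendsto_inv_atTop_nhds_zero_nat,
      (eventually_gt_atTop 0).mono fun n hn => by simpa using by omega⟩
  refine (hderiv.tendsto_slope_zero.comp hinv).congr fun n => ?_
  simp

lemma abs_mul_exp_sub_one_le {c : ℝ} (hc : 0 ≤ c) (n : ℕ) :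
    |(n : ℝ) * (exp (-((n : ℝ)⁻¹ * c)) - 1)| ≤ c := by
  rcases Nat.eq_zero_or_pos n with rfl | hn
  · simpa using hc
  have hle : exp (-((n : ℝ)⁻¹ * c)) ≤ 1 := exp_le_one_iff.2 (by simpa using by positivity)
  rw [abs_mul, Nat.abs_cast, abs_of_nonpos (by linarith)]
  calc (n : ℝ) * -(exp (-((n : ℝ)⁻¹ * c)) - 1)
      ≤ n * ((n : ℝ)⁻¹ * c) := by
        gcongr
        linarith [add_one_le_exp (-((n : ℝ)⁻¹ * c))]
    _ = c := by field_simp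

lemma tendsto_integral_exp_neg_inv_mul_pow [IsProbabilityMeasure μ] (hg : Integrable g μ)
    (h0 : ∀ x, 0 ≤ g x) :
    Tendsto (fun n : ℕ => (∫ x, exp (-((n : ℝ)⁻¹ * g x)) ∂μ) ^ n) atTop
      (𝓝 (exp (-∫ x, g x ∂μ))) := by
  have hint (n : ℕ) : Integrable (fun x => exp (-((n : ℝ)⁻¹ * g x))) μ := by
    refine Integrable.of_bound (C := 1) (by have := hg.aestronglyMeasurable; fun_prop) ?_
    refine Eventually.of_forall fun x => ?_
    rw [norm_eq_abs, abs_exp, exp_le_one_iff, neg_nonpos]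
    exact mul_nonneg (by positivity) (h0 x)
  have hlim : Tendsto (fun n : ℕ => ∫ x, (n : ℝ) * (exp (-((n : ℝ)⁻¹ * g x)) - 1) ∂μ) atTop
      (𝓝 (∫ x, -g x ∂μ)) :=
    tendsto_integral_of_dominated_convergence g
      (fun n => (((hint n).sub (integrable_const 1)).const_mul _).aestronglyMeasurable) hg
      (fun n => Eventually.of_forall fun x => abs_mul_exp_sub_one_le (h0 x) n)
      (Eventually.of_forall fun x => tendsto_mul_exp_sub_one (g x))
  have hmean (n : ℕ) : ∫ x, (n : ℝ) * (exp (-((n : ℝ)⁻¹ * g x)) - 1) ∂μ =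
      n * (∫ x, exp (-((n : ℝ)⁻¹ * g x)) ∂μ - 1) := by
    rw [integral_const_mul, integral_sub (hint n) (integrable_const _)]
    simp
  simp_rw [hmean, integral_neg] at hlim
  refine (Real.tendsto_one_add_pow_exp_of_tendsto hlim).congr fun n => ?_
  rw [add_sub_cancel]

end ExpLimit

section Sequences

lemma isTightMeasureSet_range_of_eval {ι : Type*} [Countable ι] {κ : Type*}
    {μ : κ → Measure (ι → ℝ)}
    (h : ∀ k, IsTightMeasureSet (range fun n => (μ n).map fun x => x k)) :
    IsTightMeasureSet (range μ) := by
  rw [isTightMeasureSet_iff_exists_isCompact_measure_compl_le]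
  intro ε hε
  obtain ⟨δ, hδ, hsum⟩ := ENNReal.exists_pos_sum_of_countable' hε.ne' ι
  choose K hK hbound using fun k =>
    isTightMeasureSet_iff_exists_isCompact_measure_compl_le.1 (h k) (δ k) (hδ k)
  refine ⟨Set.pi univ K, isCompact_univ_pi hK, ?_⟩
  rintro _ ⟨n, rfl⟩
  have hcover : (Set.pi univ K)ᶜ ⊆ ⋃ k, (fun x : ι → ℝ => x k) ⁻¹' (K k)ᶜ := by
    intro x hx
    simpa using hx
  calc μ n (Set.pi univ K)ᶜ
      ≤ ∑' k, μ n ((fun x : ι → ℝ => x k) ⁻¹' (K k)ᶜ) :=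
        (measure_mono hcover).trans (measure_iUnion_le _)
    _ ≤ ∑' k, δ k := ENNReal.tsum_le_tsum fun k => by
        have := hbound k _ ⟨n, rfl⟩
        rwa [Measure.map_apply (by fun_prop) (hK k).measurableSet.compl] at this
    _ ≤ ε := hsum.le

lemma continuous_charFun_map {E : Type*} [TopologicalSpace E] [MeasurableSpace E]
    [OpensMeasurableSpace E] {L : E → ℝ} (hL : Continuous L) (t : ℝ) :
    Continuous fun ν : ProbabilityMeasure E => charFun ((ν : Measure E).map L) t := by
  let G : BoundedContinuousFunction E ℂ := .ofNormedAddCommGroup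
    (fun x => Complex.exp (t * L x * Complex.I)) (by fun_prop) 1
    (fun x => by rw [← Complex.ofReal_mul, Complex.norm_exp_ofReal_mul_I])
  have hG (ν : ProbabilityMeasure E) :
      charFun ((ν : Measure E).map L) t = ∫ x, G x ∂(ν : Measure E) := by
    rw [charFun_apply_real, integral_map hL.measurable.aemeasurable (by fun_prop)]
    rfl
  simp_rw [hG]
  exact continuous_iff_continuousAt.2 fun ν =>
    (ProbabilityMeasure.tendsto_iff_forall_integral_rclike_tendsto ℂ).1 tendsto_id G

lemma exists_measure_of_tendsto_charFun {μ : ℕ → Measure (ℕ → ℝ)}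
    [∀ n, IsProbabilityMeasure (μ n)] {φ : Finset ℕ → (ℕ → ℝ) → ℝ → ℂ}
    (hlim : ∀ s u t, Tendsto (fun n => charFun ((μ n).map fun x => ∑ k ∈ s, u k * x k) t) atTop
      (𝓝 (φ s u t)))
    (hcont : ∀ k, ContinuousAt (φ {k} 1) 0) :
    ∃ ν : Measure (ℕ → ℝ), IsProbabilityMeasure ν ∧
      ∀ s u, charFun (ν.map fun x => ∑ k ∈ s, u k * x k) = φ s u := by
  have htight : IsTightMeasureSet (range μ) := by
    refine isTightMeasureSet_range_of_eval fun k => ?_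
    have (n : ℕ) : IsProbabilityMeasure ((μ n).map fun x => x k) :=
      Measure.isProbabilityMeasure_map (measurable_pi_apply k).aemeasurable
    refine isTightMeasureSet_of_tendsto_charFun (hcont k) fun t => ?_
    simpa using hlim {k} 1 t
  let μ' : ℕ → ProbabilityMeasure (ℕ → ℝ) := fun n => ⟨μ n, inferInstance⟩
  have hcompact : IsCompact (closure (range μ')) := by
    refine isCompact_closure_of_isTightMeasureSet (htight.subset ?_)
    rintro _ ⟨_, ⟨n, rfl⟩, rfl⟩
    exact ⟨n, rfl⟩
  obtain ⟨ν, -, hν⟩ := hcompact.exists_mapClusterPt (f := atTop) (u := μ')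
    (tendsto_principal.2 (Eventually.of_forall fun n => subset_closure ⟨n, rfl⟩))
  refine ⟨ν, inferInstance, fun s u => funext fun t => ?_⟩
  have hcluster := hν.tendsto_comp ((continuous_charFun_map
    (L := fun x : ℕ → ℝ => ∑ k ∈ s, u k * x k) (by fun_prop) t).tendsto ν)
  exact eq_of_nhds_neBot (hcluster.neBot.mono (inf_le_inf_left _ (hlim s u t)))

end Sequences

section BlockLaw

variable {α : ℝ} {X : Type*} [MeasurableSpace X] {μ : Measure X} [IsProbabilityMeasure μ]

lemma charFun_map_sum_pi {E : Type*} [MeasurableSpace E] (lam : Measure E)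
    [IsProbabilityMeasure lam] {g : E → ℝ} (hg : Measurable g) (n : ℕ) (t : ℝ) :
    charFun ((Measure.pi fun _ : Fin n => lam).map fun v => ∑ j, g (v j)) t =
      charFun (lam.map g) t ^ n := by
  rw [charFun_apply_real, charFun_apply_real,
    integral_map (Finset.univ.measurable_sum fun j _ => by fun_prop).aemeasurable (by fun_prop),
    integral_map hg.aemeasurable (by fun_prop)]
  have hprod (v : Fin n → E) : Complex.exp (t * ((∑ j, g (v j) : ℝ) : ℂ) * Complex.I) =
      ∏ j, Complex.exp (t * g (v j) * Complex.I) := by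
    rw [← Complex.exp_sum, Complex.ofReal_sum, Finset.mul_sum, Finset.sum_mul]
  simp_rw [hprod]
  rw [integral_fintype_prod_eq_pow fun v => Complex.exp (t * g v * Complex.I), Fintype.card_fin]

lemma IsSAS.charFun_map_mul_prod {ρ : Measure ℝ} [IsProbabilityMeasure ρ] (hρ : IsSAS α 1 ρ)
    {g : X → ℝ} (hg : Measurable g) (t : ℝ) :
    charFun ((μ.prod ρ).map fun p => g p.1 * p.2) t =
      ((∫ x, exp (-(|t| ^ α * |g x| ^ α)) ∂μ : ℝ) : ℂ) := by
  rw [charFun_apply_real, integral_map (by fun_prop) (by fun_prop), integral_prod,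
    ← integral_complex_ofReal]
  · refine integral_congr_ae (Eventually.of_forall fun x => ?_)
    have := hρ (t * g x)
    rw [charFun_apply_real, abs_mul, mul_rpow (abs_nonneg _) (abs_nonneg _), one_mul] at this
    simp only [Complex.ofReal_exp, Complex.ofReal_neg, ← this]
    refine integral_congr_ae (Eventually.of_forall fun z => ?_)
    simp only [Complex.ofReal_mul, mul_assoc]
  · refine Integrable.of_bound (C := 1) (by fun_prop) (Eventually.of_forall fun p => ?_)
    rw [← Complex.ofReal_mul, Complex.norm_exp_ofReal_mul_I]

/-- Under `P` the family `X` has the law of the symmetric `α`-stable process `(∫ f k dM)_k`, where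
`M` is a symmetric `α`-stable random measure with control measure `μ`. The moving average driven by
`a` is the case `f n x = a (n - x)`. -/
def IsStableIntegral {ι S Ω : Type*} [MeasurableSpace S] [MeasurableSpace Ω] (α : ℝ)
    (μ : Measure S) (f : ι → S → ℝ) (X : ι → Ω → ℝ) (P : Measure Ω) : Prop :=
  ∀ (s : Finset ι) (u : ι → ℝ),
    IsSAS α (∫ x, |∑ k ∈ s, u k * f k x| ^ α ∂μ) (P.map fun ω => ∑ k ∈ s, u k * X k ω)

lemma IsStableIntegral.isSAS {ι S Ω : Type*} [MeasurableSpace S] [MeasurableSpace Ω] {α : ℝ}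
    {μ : Measure S} {f : ι → S → ℝ} {X : ι → Ω → ℝ} {P : Measure Ω}
    (h : IsStableIntegral α μ f X P) (k : ι) : IsSAS α (∫ x, |f k x| ^ α ∂μ) (P.map (X k)) := by
  simpa using h {k} 1

lemma IsSAS.charFun_map_sum_mul {ρ : Measure ℝ} [IsProbabilityMeasure ρ] (hρ : IsSAS α 1 ρ)
    (hα : 0 < α) {f : ℕ → X → ℝ} (hf : ∀ k, Measurable (f k)) (s : Finset ℕ) (u : ℕ → ℝ) (n : ℕ)
    (t : ℝ) :
    charFun (((Measure.pi fun _ : Fin n => μ.prod ρ).map fun p k =>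
        (n : ℝ) ^ (-1 / α) * ∑ j, f k (p j).1 * (p j).2).map fun x => ∑ k ∈ s, u k * x k) t =
      (((∫ x, exp (-((n : ℝ)⁻¹ * (|t| ^ α * |∑ k ∈ s, u k * f k x| ^ α))) ∂μ) ^ n : ℝ) : ℂ) := by
  have hlin : (fun x : ℕ → ℝ => ∑ k ∈ s, u k * x k) ∘ (fun (p : Fin n → X × ℝ) k =>
      (n : ℝ) ^ (-1 / α) * ∑ j, f k (p j).1 * (p j).2) =
      fun p => ∑ j, ((n : ℝ) ^ (-1 / α) * ∑ k ∈ s, u k * f k (p j).1) * (p j).2 := by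
    ext p
    simp only [Function.comp_apply, Finset.mul_sum, Finset.sum_mul]
    rw [Finset.sum_comm]
    exact Finset.sum_congr rfl fun j _ => Finset.sum_congr rfl fun k _ => by ring
  have hpow : ((n : ℝ) ^ (-1 / α)) ^ α = (n : ℝ)⁻¹ := by
    rw [← rpow_mul (Nat.cast_nonneg n), div_mul_cancel₀ _ hα.ne', rpow_neg_one]
  rw [Measure.map_map (by fun_prop) (by fun_prop), hlin,
    charFun_map_sum_pi (μ.prod ρ)
      (g := fun p => ((n : ℝ) ^ (-1 / α) * ∑ k ∈ s, u k * f k p.1) * p.2) (by fun_prop),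
    hρ.charFun_map_mul_prod (g := fun x => (n : ℝ) ^ (-1 / α) * ∑ k ∈ s, u k * f k x)
      (by fun_prop), Complex.ofReal_pow]
  simp only [abs_mul, abs_of_nonneg (rpow_nonneg (Nat.cast_nonneg n) _),
    mul_rpow (rpow_nonneg (Nat.cast_nonneg n) _) (abs_nonneg _), hpow, mul_left_comm]

-- The law is the limit of the laws of `n ^ (-1 / α) * ∑ j < n, f k (X j) * ζ j` with `X j` i.i.d.
-- of law `μ` and `ζ j` i.i.d. standard stable, independent of the `X j`.
lemma IsSAS.exists_isStableIntegral {ρ : Measure ℝ} [IsProbabilityMeasure ρ]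
    (hρ : IsSAS α 1 ρ) (hα : 1 < α) {f : ℕ → X → ℝ} (hf : ∀ k, Measurable (f k))
    (hi : ∀ k, Integrable (fun x => |f k x| ^ α) μ) :
    ∃ ν : Measure (ℕ → ℝ), IsProbabilityMeasure ν ∧ IsStableIntegral α μ f (fun k e => e k) ν := by
  let m (n : ℕ) : Measure (ℕ → ℝ) := (Measure.pi fun _ : Fin n => μ.prod ρ).map fun p k =>
    (n : ℝ) ^ (-1 / α) * ∑ j, f k (p j).1 * (p j).2
  have (n : ℕ) : IsProbabilityMeasure (m n) := Measure.isProbabilityMeasure_map (by fun_prop)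
  obtain ⟨ν, hν, hchar⟩ := exists_measure_of_tendsto_charFun (μ := m)
    (φ := fun s u t => Complex.exp (-(((∫ x, |∑ k ∈ s, u k * f k x| ^ α ∂μ) * |t| ^ α : ℝ) : ℂ)))
    (fun s u t => by
      have hlim := (Complex.continuous_ofReal.tendsto _).comp (tendsto_integral_exp_neg_inv_mul_pow
        ((integrable_abs_sum_mul_rpow hα.le hf hi s u).const_mul (|t| ^ α)) (by intro; positivity))
      rw [integral_const_mul, mul_comm, Complex.ofReal_exp, Complex.ofReal_neg] at hlim
      exact hlim.congr fun n => (hρ.charFun_map_sum_mul (by linarith) hf s u n t).symm)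
    (fun k => by
      have hpow : Continuous fun t : ℝ => |t| ^ α :=
        continuous_abs.rpow_const fun _ => .inr (by linarith)
      exact (Complex.continuous_exp.comp
        (Complex.continuous_ofReal.comp (continuous_const.mul hpow)).neg).continuousAt)
  exact ⟨ν, hν, fun s u t => congrFun (hchar s u) t⟩

end BlockLaw

lemma integral_comp_of_measurePreserving {X Y G : Type*} [MeasurableSpace X] [MeasurableSpace Y]
    [NormedAddCommGroup G] [NormedSpace ℝ G] {μ : Measure X} {κ : Measure Y} {g : X → Y}
    (hg : MeasurePreserving g μ κ) {f : Y → G} (hf : AEStronglyMeasurable f κ) :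
    ∫ x, f (g x) ∂μ = ∫ y, f y ∂κ := by
  rw [← integral_map hg.aemeasurable (by rwa [hg.map_eq]), hg.map_eq]

lemma map_comp_of_measurePreserving {X Y Z : Type*} [MeasurableSpace X] [MeasurableSpace Y]
    [MeasurableSpace Z] {μ : Measure X} {κ : Measure Y} {g : X → Y} (hg : MeasurePreserving g μ κ)
    {f : Y → Z} (hf : AEMeasurable f κ) : μ.map (f ∘ g) = κ.map f := by
  rw [← AEMeasurable.map_map_of_aemeasurable (by rwa [hg.map_eq]) hg.aemeasurable, hg.map_eq]

section MergeShift

variable {E : Type*}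

open Classical in
/-- The sequence that agrees with the first component of `p` on `A` and with the second off `A`.
Integrating out the second component gives conditional expectations. -/
noncomputable def merge (A : Set ℤ) (p : (ℤ → E) × (ℤ → E)) : ℤ → E := A.piecewise p.1 p.2

/-- The shift of two-sided sequences by `n` steps. -/
def shift (n : ℤ) (ω : ℤ → E) : ℤ → E := fun i => ω (i + n)

variable (A B : Set ℤ) (ω ω' ω'' : ℤ → E)

lemma merge_merge : merge B (merge A (ω, ω'), ω'') = merge (A ∩ B) (ω, merge B (ω', ω'')) := by
  classical
  funext i
  by_cases hA : i ∈ A <;> by_cases hB : i ∈ B <;> simp [merge, hA, hB]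

lemma merge_merge_self : merge A (merge A (ω, ω'), ω'') = merge A (ω, ω'') := by
  classical
  funext i
  by_cases hA : i ∈ A <;> simp [merge, hA]

lemma merge_compl : merge Aᶜ (ω', ω) = merge A (ω, ω') := by
  classical
  funext i
  by_cases hA : i ∈ A <;> simp [merge, hA]

lemma merge_empty : merge ∅ (ω, ω') = ω' := by
  classical
  funext i
  simp [merge]

lemma shift_merge (n : ℤ) :
    shift n (merge A (ω, ω')) = merge {i | i + n ∈ A} (shift n ω, shift n ω') := by
  classical
  funext i
  by_cases hA : i + n ∈ A <;> simp [merge, shift, hA]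

lemma shift_zero : shift 0 ω = ω := by
  funext i
  simp [shift]

lemma shift_shift (m n : ℤ) : shift m (shift n ω) = shift (m + n) ω := by
  funext i
  simp [shift, add_assoc]

variable [MeasurableSpace E]

lemma measurable_merge : Measurable (merge (E := E) A) := by
  classical
  refine measurable_pi_iff.2 fun i => ?_
  by_cases hA : i ∈ A
  · simpa [merge, hA] using by fun_prop
  · simpa [merge, hA] using by fun_prop

lemma measurable_shift (n : ℤ) : Measurable (shift (E := E) n) :=
  measurable_pi_iff.2 fun i => measurable_pi_apply (i + n)

end MergeShift

section IidLaw

variable {E : Type*} [MeasurableSpace E] (ν : Measure E)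

/-- The law of a two-sided sequence of independent random elements of law `ν`. -/
noncomputable abbrev iidLaw : Measure (ℤ → E) := Measure.infinitePi fun _ : ℤ => ν

/-- The Hilbert space of square integrable functions of an i.i.d. two-sided sequence. -/
abbrev IidL2 : Type _ := Lp ℝ 2 (iidLaw ν)

variable [IsProbabilityMeasure ν] (A B : Set ℤ)

lemma measurePreserving_merge :
    MeasurePreserving (merge A) ((iidLaw ν).prod (iidLaw ν)) (iidLaw ν) := by
  classical
  refine ⟨measurable_merge A, Measure.eq_infinitePi _ fun s t ht => ?_⟩
  have hpre : merge A ⁻¹' (s : Set ℤ).pi t =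
      ((s.filter (· ∈ A) : Finset ℤ) : Set ℤ).pi t ×ˢ
        ((s.filter (· ∉ A) : Finset ℤ) : Set ℤ).pi t := by
    ext ⟨ω, ω'⟩
    simp only [mem_preimage, Set.mem_pi, Finset.mem_coe, Finset.mem_filter, mem_prod, merge,
      ← forall_and]
    refine forall_congr' fun i => ?_
    by_cases hA : i ∈ A <;> simp [hA]
  rw [Measure.map_apply (measurable_merge A) (.pi s.countable_toSet fun i _ => ht i), hpre,
    Measure.prod_prod, Measure.infinitePi_pi _ fun i _ => ht i,
    Measure.infinitePi_pi _ fun i _ => ht i]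
  exact Finset.prod_filter_mul_prod_filter_not s (· ∈ A) fun i => ν (t i)

lemma measurePreserving_shift (n : ℤ) : MeasurePreserving (shift n) (iidLaw ν) (iidLaw ν) := by
  refine ⟨measurable_shift n, Measure.eq_infinitePi _ fun s t ht => ?_⟩
  have hpre : shift n ⁻¹' (s : Set ℤ).pi t =
      ((s.map (Equiv.addRight n).toEmbedding : Finset ℤ) : Set ℤ).pi fun i => t (i - n) := by
    ext ω
    simp only [shift, mem_preimage, Set.mem_pi, Finset.mem_coe, Finset.mem_map_equiv]
    exact ⟨fun h i hi => by simpa [sub_eq_add_neg] using h _ hi,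
      fun h i hi => by simpa using h (i + n) (by simpa)⟩
  rw [Measure.map_apply (measurable_shift n) (.pi s.countable_toSet fun i _ => ht i), hpre,
    Measure.infinitePi_pi _ fun i _ => ht _, Finset.prod_map]
  simp

/-- The unitary operator on `IidL2 ν` induced by the shift. -/
noncomputable def shiftL2 (n : ℤ) : IidL2 ν →ₗᵢ[ℝ] IidL2 ν :=
  Lp.compMeasurePreservingₗᵢ ℝ (shift n) (measurePreserving_shift ν n)

/-- The conditional expectation given the coordinates in `A`, as an operator on `IidL2 ν`. -/
noncomputable def condOn : IidL2 ν →L[ℝ] IidL2 ν :=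
  (ContinuousLinearMap.adjoint
    (Lp.compMeasurePreservingₗᵢ ℝ (Prod.fst : (ℤ → E) × (ℤ → E) → (ℤ → E))
      (measurePreserving_fst (μ := iidLaw ν) (ν := iidLaw ν))).toContinuousLinearMap) ∘L
  (Lp.compMeasurePreservingₗᵢ ℝ (merge A) (measurePreserving_merge ν A)).toContinuousLinearMap

variable {ν} (x y : IidL2 ν)

lemma shiftL2_ae_eq (n : ℤ) : shiftL2 ν n x =ᵐ[iidLaw ν] fun ω => x (shift n ω) :=
  Lp.coeFn_compMeasurePreserving x (measurePreserving_shift ν n)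

lemma norm_condOn_le : ‖condOn ν A x‖ ≤ ‖x‖ := by
  rw [condOn, ContinuousLinearMap.comp_apply]
  refine (ContinuousLinearMap.le_opNorm _ _).trans ?_
  rw [LinearIsometryEquiv.norm_map, LinearIsometry.coe_toContinuousLinearMap,
    LinearIsometry.norm_map]
  exact mul_le_of_le_one_left (norm_nonneg x) (LinearIsometry.norm_toContinuousLinearMap_le _)

lemma integrable_coeFn_iidL2 : Integrable x (iidLaw ν) := (Lp.memLp x).integrable (by norm_num)

lemma integrable_comp_merge :
    Integrable (fun p => x (merge A p)) ((iidLaw ν).prod (iidLaw ν)) :=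
  (measurePreserving_merge ν A).integrable_comp_of_integrable (integrable_coeFn_iidL2 x)

lemma condOn_ae_eq :
    condOn ν A x =ᵐ[iidLaw ν] fun ω => ∫ ω', x (merge A (ω, ω')) ∂(iidLaw ν) := by
  have hint := integrable_comp_merge A x
  have hfst := measurePreserving_fst (μ := iidLaw ν) (ν := iidLaw ν)
  refine Integrable.ae_eq_of_forall_setIntegral_eq _ _ (integrable_coeFn_iidL2 _)
    hint.integral_prod_left fun s hs hfin => ?_
  have hind : (Lp.compMeasurePreservingₗᵢ ℝ Prod.fst hfst).toContinuousLinearMap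
      (indicatorConstLp 2 hs hfin.ne (1 : ℝ)) =
      indicatorConstLp 2 (hfst.measurable hs) (measure_ne_top _ _) (1 : ℝ) :=
    Lp.indicatorConstLp_compMeasurePreserving hs hfin.ne (1 : ℝ) _
  have hmerge : ∀ᵐ p ∂((iidLaw ν).prod (iidLaw ν)).restrict (Prod.fst ⁻¹' s),
      (Lp.compMeasurePreservingₗᵢ ℝ (merge A)
        (measurePreserving_merge ν A)).toContinuousLinearMap x p = x (merge A p) :=
    ae_restrict_of_ae (Lp.coeFn_compMeasurePreserving x (measurePreserving_merge ν A))
  rw [← L2.inner_indicatorConstLp_one hs hfin.ne (condOn ν A x), condOn,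
    ContinuousLinearMap.comp_apply, ContinuousLinearMap.adjoint_inner_right, hind,
    L2.inner_indicatorConstLp_one, integral_congr_ae hmerge, ← prod_univ,
    setIntegral_prod _ hint.integrableOn]
  simp

lemma ae_integrable_comp_merge :
    ∀ᵐ ω ∂(iidLaw ν), Integrable (fun ω' => x (merge A (ω, ω'))) (iidLaw ν) :=
  (integrable_comp_merge A x).prod_right_ae

lemma condOn_condOn : condOn ν A (condOn ν B x) = condOn ν (A ∩ B) x := by
  have hae := Measure.ae_ae_of_ae_prod
    ((measurePreserving_merge ν A).quasiMeasurePreserving.ae (condOn_ae_eq B x))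
  refine Lp.ext ?_
  filter_upwards [condOn_ae_eq A (condOn ν B x), condOn_ae_eq (A ∩ B) x, hae,
    ae_integrable_comp_merge (A ∩ B) x] with ω hA hAB hB hint
  have hprod := (measurePreserving_merge ν B).integrable_comp_of_integrable hint
  rw [hA, hAB, integral_congr_ae hB]
  simp_rw [merge_merge]
  exact (integral_prod _ hprod).symm.trans
    (integral_comp_of_measurePreserving (measurePreserving_merge ν B) hint.1)

lemma condOn_comm : condOn ν A (condOn ν B x) = condOn ν B (condOn ν A x) := by
  rw [condOn_condOn, condOn_condOn, inter_comm]

lemma condOn_self : condOn ν A (condOn ν A x) = condOn ν A x := by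
  rw [condOn_condOn, inter_self]

lemma condOn_empty_ae_eq : condOn ν ∅ x =ᵐ[iidLaw ν] fun _ => ∫ ω, x ω ∂(iidLaw ν) := by
  filter_upwards [condOn_ae_eq ∅ x] with ω hω
  simp only [hω, merge_empty]

lemma integral_eq_zero_of_condOn_empty {x : IidL2 ν} (h : condOn ν ∅ x = 0) :
    ∫ ω, x ω ∂(iidLaw ν) = 0 := by
  have hae := condOn_empty_ae_eq x
  rw [h] at hae
  obtain ⟨_, hω⟩ := (hae.symm.trans (Lp.coeFn_zero ℝ 2 (iidLaw ν))).exists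
  exact hω

lemma inner_eq_zero_of_idempotent_of_norm_le {H : Type*} [NormedAddCommGroup H]
    [InnerProductSpace ℝ H] {T : H →L[ℝ] H} (hT : ∀ x, ‖T x‖ ≤ ‖x‖) {u v : H} (hu : T u = u)
    (hv : T v = 0) : inner ℝ u v = 0 := by
  have hquad (t : ℝ) : 0 ≤ ‖v‖ ^ 2 * (t * t) + 2 * inner ℝ u v * t + 0 := by
    have hle := hT (u + t • v)
    rw [map_add, map_smul, hu, hv, smul_zero, add_zero, ← sq_le_sq₀ (norm_nonneg _)
      (norm_nonneg _), norm_add_sq_real, inner_smul_right, norm_smul, mul_pow, norm_eq_abs,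
      sq_abs] at hle
    linarith
  have := discrim_le_zero hquad
  rw [discrim, mul_zero, sub_zero] at this
  simpa using sq_nonpos_iff _ |>.1 this

lemma inner_apply_left_of_idempotent_of_norm_le {H : Type*} [NormedAddCommGroup H]
    [InnerProductSpace ℝ H] {T : H →L[ℝ] H} (hidem : ∀ x, T (T x) = T x)
    (hT : ∀ x, ‖T x‖ ≤ ‖x‖) (x y : H) : inner ℝ (T x) y = inner ℝ x (T y) := by
  have hker (z : H) : T (z - T z) = 0 := by rw [map_sub, hidem, sub_self]
  have hxy := inner_eq_zero_of_idempotent_of_norm_le hT (hidem x) (hker y)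
  have hyx := inner_eq_zero_of_idempotent_of_norm_le hT (hidem y) (hker x)
  rw [real_inner_comm] at hyx
  rw [inner_sub_right, sub_eq_zero] at hxy
  rw [inner_sub_left, sub_eq_zero] at hyx
  rw [hxy, hyx]

lemma inner_condOn_left : inner ℝ (condOn ν A x) y = inner ℝ x (condOn ν A y) :=
  inner_apply_left_of_idempotent_of_norm_le (condOn_self A) (norm_condOn_le A) x y

lemma condOn_shiftL2 (n : ℤ) :
    condOn ν A (shiftL2 ν n x) = shiftL2 ν n (condOn ν {i | i + n ∈ A} x) := by
  have hshift := (measurePreserving_shift ν n).quasiMeasurePreserving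
  have hmerge := Measure.ae_ae_of_ae_prod
    ((measurePreserving_merge ν A).quasiMeasurePreserving.ae (shiftL2_ae_eq x n))
  refine Lp.ext ?_
  filter_upwards [condOn_ae_eq A (shiftL2 ν n x), shiftL2_ae_eq (condOn ν {i | i + n ∈ A} x) n,
    hmerge, hshift.ae (condOn_ae_eq {i | i + n ∈ A} x),
    hshift.ae (ae_integrable_comp_merge {i | i + n ∈ A} x)] with ω hl hr hm hc hint
  rw [hl, hr, hc, integral_congr_ae hm]
  simp_rw [shift_merge]
  exact integral_comp_of_measurePreserving (measurePreserving_shift ν n) hint.1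

lemma shiftL2_shiftL2 (m n : ℤ) : shiftL2 ν m (shiftL2 ν n x) = shiftL2 ν (m + n) x := by
  refine Lp.ext ?_
  filter_upwards [shiftL2_ae_eq (shiftL2 ν n x) m, shiftL2_ae_eq x (m + n),
    (measurePreserving_shift ν m).quasiMeasurePreserving.ae (shiftL2_ae_eq x n)] with ω hl hr hn
  rw [hl, hn, hr, shift_shift, add_comm]

end IidLaw

section Determined

variable {E : Type*} [MeasurableSpace E] {ν : Measure E} [IsProbabilityMeasure ν] {A B : Set ℤ}
  {x y : IidL2 ν}

lemma condOn_eq_self_mono (h : A ⊆ B) (hx : condOn ν A x = x) : condOn ν B x = x := by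
  rw [← hx, condOn_condOn, inter_eq_self_of_subset_right h]

lemma condOn_shiftL2_eq_self (n : ℤ) (hx : condOn ν A x = x) :
    condOn ν {i | i - n ∈ A} (shiftL2 ν n x) = shiftL2 ν n x := by
  have hset : {i | i + n ∈ {i | i - n ∈ A}} = A := by
    ext i
    simp
  rw [condOn_shiftL2, hset, hx]

lemma condOn_sum_eq_self {ι : Type*} {s : Finset ι} {f : ι → IidL2 ν}
    (h : ∀ i ∈ s, condOn ν A (f i) = f i) : condOn ν A (∑ i ∈ s, f i) = ∑ i ∈ s, f i := by
  rw [map_sum]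
  exact Finset.sum_congr rfl h

lemma ae_comp_merge_eq (hx : condOn ν A x = x) :
    ∀ᵐ p ∂((iidLaw ν).prod (iidLaw ν)), x (merge A p) = x p.1 := by
  have hae := condOn_ae_eq A x
  rw [hx] at hae
  filter_upwards [(measurePreserving_merge ν A).quasiMeasurePreserving.ae hae,
    Measure.quasiMeasurePreserving_fst.ae hae] with ⟨ω, ω'⟩ hmerge hfst
  simp only [hmerge, hfst, merge_merge_self]

lemma condOn_eq_self_of_ae {f : (ℤ → E) → ℝ} (hf : x =ᵐ[iidLaw ν] f)
    (hA : ∀ᵐ p ∂((iidLaw ν).prod (iidLaw ν)), f (merge A p) = f p.1) : condOn ν A x = x := by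
  have hmerge := Measure.ae_ae_of_ae_prod
    ((measurePreserving_merge ν A).quasiMeasurePreserving.ae hf)
  refine Lp.ext ?_
  filter_upwards [condOn_ae_eq A x, hf, hmerge, Measure.ae_ae_of_ae_prod hA] with ω hc hω hm hA
  rw [hc, hω, integral_congr_ae hm, integral_congr_ae hA]
  simp

lemma charFun_map_add_of_condOn (hx : condOn ν A x = x) (hy : condOn ν Aᶜ y = y) (t : ℝ) :
    charFun ((iidLaw ν).map (x + y : IidL2 ν)) t =
      charFun ((iidLaw ν).map x) t * charFun ((iidLaw ν).map y) t := by
  have haem (z : IidL2 ν) : AEMeasurable z (iidLaw ν) := (Lp.aestronglyMeasurable z).aemeasurable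
  have hexp : Continuous fun r : ℝ => Complex.exp (t * r * Complex.I) := by fun_prop
  simp only [charFun_apply_real]
  rw [integral_map (haem _) (by fun_prop), integral_map (haem _) (by fun_prop),
    integral_map (haem _) (by fun_prop), ← integral_prod_mul,
    ← integral_comp_of_measurePreserving (measurePreserving_merge ν A)
      (hexp.comp_aestronglyMeasurable (Lp.aestronglyMeasurable (x + y)))]
  refine integral_congr_ae ?_
  filter_upwards [(measurePreserving_merge ν A).quasiMeasurePreserving.ae (Lp.coeFn_add x y),
    ae_comp_merge_eq hx, Measure.measurePreserving_swap.quasiMeasurePreserving.ae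
      (ae_comp_merge_eq hy)] with ⟨ω, ω'⟩ hadd hfst hsnd
  simp only [Prod.swap_prod_mk, merge_compl] at hsnd
  rw [hadd, Pi.add_apply, hfst, hsnd, ← Complex.exp_add]
  push_cast
  ring_nf

lemma charFun_map_shiftL2 (n : ℤ) (x : IidL2 ν) (t : ℝ) :
    charFun ((iidLaw ν).map (shiftL2 ν n x)) t = charFun ((iidLaw ν).map x) t := by
  have hx := (Lp.aestronglyMeasurable x).aemeasurable
  rw [Measure.map_congr (shiftL2_ae_eq x n),
    ← map_comp_of_measurePreserving (measurePreserving_shift ν n) hx]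
  rfl

end Determined

section CharFunL2

variable {X : Type*} [MeasurableSpace X] {μ : Measure X}

lemma norm_sq_eq_integral_sq (x : Lp ℝ 2 μ) : ‖x‖ ^ 2 = ∫ ω, x ω ^ 2 ∂μ := by
  rw [← real_inner_self_eq_norm_sq, L2.inner_def]
  simp [sq]

variable [IsProbabilityMeasure μ]

lemma integral_abs_le_norm (x : Lp ℝ 2 μ) : ∫ ω, |x ω| ∂μ ≤ ‖x‖ := by
  simp_rw [← norm_eq_abs]
  rw [integral_norm_eq_lintegral_enorm (Lp.aestronglyMeasurable x),
    ← eLpNorm_one_eq_lintegral_enorm, Lp.norm_def]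
  exact ENNReal.toReal_mono (Lp.eLpNorm_ne_top x)
    (eLpNorm_le_eLpNorm_of_exponent_le one_le_two (Lp.aestronglyMeasurable x))

lemma norm_charFun_map_sub_le (s t : ℝ) (x y : Lp ℝ 2 μ) :
    ‖charFun (μ.map x) s - charFun (μ.map y) t‖ ≤ ‖s • x - t • y‖ := by
  have haem (z : Lp ℝ 2 μ) : AEMeasurable z μ := (Lp.aestronglyMeasurable z).aemeasurable
  have hint (r : ℝ) (z : Lp ℝ 2 μ) : Integrable (fun ω => Complex.exp (r * z ω * Complex.I)) μ := by
    refine .of_bound (C := 1) (by have := Lp.aestronglyMeasurable z; fun_prop)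
      (Eventually.of_forall fun ω => ?_)
    rw [← Complex.ofReal_mul, Complex.norm_exp_ofReal_mul_I]
  rw [charFun_apply_real, charFun_apply_real, integral_map (haem x) (by fun_prop),
    integral_map (haem y) (by fun_prop), ← integral_sub (hint s x) (hint t y)]
  refine (norm_integral_le_integral_norm _).trans (le_trans ?_ (integral_abs_le_norm _))
  refine integral_mono_ae ((hint s x).sub (hint t y)).norm
    ((Lp.memLp (s • x - t • y)).integrable (by norm_num)).abs ?_
  filter_upwards [Lp.coeFn_sub (s • x) (t • y), Lp.coeFn_smul s x, Lp.coeFn_smul t y]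
    with ω hsub hsx hty
  rw [hsub, Pi.sub_apply, hsx, hty]
  have hfactor : Complex.exp (s * x ω * Complex.I) - Complex.exp (t * y ω * Complex.I) =
      Complex.exp ((t * y ω : ℝ) * Complex.I) *
        (Complex.exp (Complex.I * ((s * x ω - t * y ω : ℝ) : ℂ)) - 1) := by
    rw [mul_sub, ← Complex.exp_add]
    push_cast
    ring_nf
  rw [hfactor, norm_mul, Complex.norm_exp_ofReal_mul_I, one_mul]
  exact norm_exp_I_mul_ofReal_sub_one_le

end CharFunL2

section ShiftSystem

variable {H : Type*} [NormedAddCommGroup H] [InnerProductSpace ℝ H]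

/-- A group of shifts `U` together with a compatible increasing family of orthogonal projections
`Q`: the Hilbert space form of a stationary filtration. -/
structure IsShiftSystem (U : ℤ → H →ₗᵢ[ℝ] H) (Q : ℤ → H →L[ℝ] H) : Prop where
  shift_shift : ∀ m n x, U m (U n x) = U (m + n) x
  proj_proj : ∀ i j x, Q i (Q j x) = Q (min i j) x
  inner_proj_left : ∀ i x y, inner ℝ (Q i x) y = inner ℝ x (Q i y)
  proj_shift : ∀ j n x, Q j (U n x) = U n (Q (j - n) x)

/-- The projection onto the `i`-th martingale difference space of the filtration `Q`. -/
def diffProj (Q : ℤ → H →L[ℝ] H) (i : ℤ) : H →L[ℝ] H := Q i - Q (i - 1)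

/-- The norm of the projection of `x` onto the martingale difference space at time `-k`. -/
noncomputable def projNorm (Q : ℤ → H →L[ℝ] H) (x : H) (k : ℕ) : ℝ := ‖diffProj Q (-(k : ℤ)) x‖

/-- Hannan's condition: `x` is determined by the past, has no component in the remote past, and
its martingale difference projections have summable norms. -/
structure IsHannan (Q : ℤ → H →L[ℝ] H) (x : H) : Prop where
  proj_zero : Q 0 x = x
  tendsto_proj : Tendsto (fun k : ℕ => Q (-(k : ℤ)) x) atTop (𝓝 0)
  summable_projNorm : Summable (projNorm Q x)

/-- The partial sum of the stationary sequence `U n x`. -/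
noncomputable def partialSum (U : ℤ → H →ₗᵢ[ℝ] H) (x : H) (N : ℕ) : H :=
  ∑ n ∈ Finset.range N, U n x

/-- The long-run variance of the stationary sequence `U n x`. -/
noncomputable def longRunVar (U : ℤ → H →ₗᵢ[ℝ] H) (x : H) : ℝ :=
  ‖x‖ ^ 2 + 2 * ∑' n : ℕ, inner ℝ x (U ((n : ℤ) + 1) x)

variable {U : ℤ → H →ₗᵢ[ℝ] H} {Q : ℤ → H →L[ℝ] H} {x y : H}

lemma diffProj_apply (i : ℤ) (x : H) : diffProj Q i x = Q i x - Q (i - 1) x := rfl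

lemma projNorm_nonneg (x : H) (k : ℕ) : 0 ≤ projNorm Q x k := norm_nonneg _

lemma projNorm_sub_le (x y : H) (k : ℕ) :
    projNorm Q (x - y) k ≤ projNorm Q x k + projNorm Q y k := by
  rw [projNorm, map_sub]
  exact norm_sub_le _ _

lemma sum_diffProj (hx : Q 0 x = x) (N : ℕ) :
    ∑ k ∈ Finset.range N, diffProj Q (-(k : ℤ)) x = x - Q (-(N : ℤ)) x := by
  have htele := Finset.sum_range_sub' (fun k : ℕ => Q (-(k : ℤ)) x) N
  rw [Nat.cast_zero, neg_zero, hx] at htele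
  rw [← htele]
  refine Finset.sum_congr rfl fun k _ => ?_
  rw [diffProj_apply, Nat.cast_add_one, neg_add']

namespace IsShiftSystem

variable (h : IsShiftSystem U Q)

include h

lemma diffProj_diffProj_of_ne {i j : ℤ} (hij : i ≠ j) (x : H) :
    diffProj Q i (diffProj Q j x) = 0 := by
  simp only [diffProj_apply, map_sub, h.proj_proj]
  rcases lt_or_gt_of_ne hij with hlt | hlt
  · simp [min_eq_left (by omega : i ≤ j), min_eq_left (by omega : i ≤ j - 1),
      min_eq_left (by omega : i - 1 ≤ j), min_eq_left (by omega : i - 1 ≤ j - 1)]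
  · simp [min_eq_right (by omega : j ≤ i), min_eq_right (by omega : j ≤ i - 1),
      min_eq_right (by omega : j - 1 ≤ i), min_eq_right (by omega : j - 1 ≤ i - 1)]

lemma diffProj_diffProj_self (i : ℤ) (x : H) : diffProj Q i (diffProj Q i x) = diffProj Q i x := by
  simp [diffProj_apply, h.proj_proj]

lemma inner_diffProj_left (i : ℤ) (x y : H) :
    inner ℝ (diffProj Q i x) y = inner ℝ x (diffProj Q i y) := by
  simp only [diffProj_apply, inner_sub_left, inner_sub_right, h.inner_proj_left]

lemma diffProj_shift (i n : ℤ) (x : H) : diffProj Q i (U n x) = U n (diffProj Q (i - n) x) := by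
  simp only [diffProj_apply, map_sub, h.proj_shift, sub_right_comm]

lemma norm_sum_shift_diffProj (s : Finset ℕ) (k : ℤ) (x : H) :
    ‖∑ n ∈ s, U n (diffProj Q k x)‖ = √s.card * ‖diffProj Q k x‖ := by
  have hswap (n : ℕ) : U n (diffProj Q k x) = diffProj Q (k + n) (U n x) := by
    rw [h.diffProj_shift, add_sub_cancel_right]
  have horth (n : ℕ) (hn : n ∈ s) :
      inner ℝ (U n (diffProj Q k x)) (∑ m ∈ s, U m (diffProj Q k x)) = ‖diffProj Q k x‖ ^ 2 := by
    rw [inner_sum, Finset.sum_eq_single_of_mem n hn, LinearIsometry.inner_map_map,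
      real_inner_self_eq_norm_sq]
    intro m _ hmn
    rw [hswap n, hswap m, h.inner_diffProj_left, h.diffProj_diffProj_of_ne (by omega),
      inner_zero_right]
  rw [← sqrt_sq (norm_nonneg (∑ n ∈ s, U n (diffProj Q k x))), ← real_inner_self_eq_norm_sq,
    sum_inner, Finset.sum_congr rfl horth, Finset.sum_const, nsmul_eq_mul,
    sqrt_mul (Nat.cast_nonneg _), sqrt_sq (norm_nonneg _)]

lemma abs_inner_diffProj_shift_le (x : H) (n k : ℕ) :
    |inner ℝ (diffProj Q (-(k : ℤ)) x) (U n x)| ≤ projNorm Q x k * projNorm Q x (n + k) := by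
  have hidx : -(k : ℤ) - n = -((n + k : ℕ) : ℤ) := by push_cast; ring
  rw [← h.diffProj_diffProj_self, h.inner_diffProj_left, h.diffProj_shift, hidx]
  refine (abs_real_inner_le_norm _ _).trans ?_
  rw [LinearIsometry.norm_map, projNorm, projNorm]

lemma norm_sq_partialSum (x : H) (N : ℕ) :
    ‖partialSum U x N‖ ^ 2 =
      ∑ i ∈ Finset.range N,
        (‖x‖ ^ 2 + 2 * ∑ n ∈ Finset.range i, inner ℝ x (U ((n : ℤ) + 1) x)) := by
  induction N with
  | zero => simp [partialSum]
  | succ N ih =>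
    have hcross : inner ℝ (partialSum U x N) (U N x) =
        ∑ n ∈ Finset.range N, inner ℝ x (U ((n : ℤ) + 1) x) := by
      rw [partialSum, sum_inner, ← Finset.sum_range_reflect]
      refine Finset.sum_congr rfl fun n hn => ?_
      have hsplit : (N : ℤ) = (N - 1 - n : ℕ) + ((n : ℤ) + 1) := by
        have := Finset.mem_range.1 hn
        omega
      rw [← LinearIsometry.inner_map_map (U (N - 1 - n : ℕ)) x, h.shift_shift, ← hsplit]
    rw [Finset.sum_range_succ, ← ih, partialSum, Finset.sum_range_succ, ← partialSum,
      norm_add_sq_real, LinearIsometry.norm_map, hcross]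
    ring

lemma tendsto_norm_sq_partialSum_div (hs : Summable fun n : ℕ => |inner ℝ x (U n x)|) :
    Tendsto (fun N : ℕ => ‖partialSum U x N‖ ^ 2 / N) atTop (𝓝 (longRunVar U x)) := by
  have hs' : Summable fun n : ℕ => inner ℝ x (U ((n : ℤ) + 1) x) := by
    simpa using (summable_nat_add_iff 1).2 hs.of_abs
  have hsum := tendsto_const_nhds (x := ‖x‖ ^ 2) |>.add (hs'.hasSum.tendsto_sum_nat.const_mul 2)
  refine hsum.cesaro.congr fun N => ?_
  rw [h.norm_sq_partialSum, div_eq_inv_mul]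

end IsShiftSystem

namespace IsHannan

lemma tendsto_sum_diffProj (hx : IsHannan Q x) :
    Tendsto (fun N => ∑ k ∈ Finset.range N, diffProj Q (-(k : ℤ)) x) atTop (𝓝 x) := by
  simp_rw [sum_diffProj hx.proj_zero]
  simpa using tendsto_const_nhds.sub hx.tendsto_proj

lemma sub (hx : IsHannan Q x) (hy : IsHannan Q y) : IsHannan Q (x - y) where
  proj_zero := by rw [map_sub, hx.proj_zero, hy.proj_zero]
  tendsto_proj := by simpa using hx.tendsto_proj.sub hy.tendsto_proj
  summable_projNorm := .of_nonneg_of_le (projNorm_nonneg _) (projNorm_sub_le x y)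
    (hx.summable_projNorm.add hy.summable_projNorm)

lemma projNorm_map_le {R : H →L[ℝ] H} (hR : ∀ z, ‖R z‖ ≤ ‖z‖)
    (hcomm : ∀ i z, Q i (R z) = R (Q i z)) (x : H) (k : ℕ) :
    projNorm Q (R x) k ≤ projNorm Q x k := by
  rw [projNorm, diffProj_apply, hcomm, hcomm, ← map_sub]
  exact hR _

lemma map (hx : IsHannan Q x) {R : H →L[ℝ] H} (hR : ∀ z, ‖R z‖ ≤ ‖z‖)
    (hcomm : ∀ i z, Q i (R z) = R (Q i z)) : IsHannan Q (R x) where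
  proj_zero := by rw [hcomm, hx.proj_zero]
  tendsto_proj := by
    simp_rw [hcomm]
    simpa [Function.comp_def] using (R.continuous.tendsto 0).comp hx.tendsto_proj
  summable_projNorm := .of_nonneg_of_le (projNorm_nonneg _) (projNorm_map_le hR hcomm x)
    hx.summable_projNorm

variable (h : IsShiftSystem U Q)

include h

lemma norm_sum_shift_le (hx : IsHannan Q x) (s : Finset ℕ) :
    ‖∑ n ∈ s, U n x‖ ≤ √s.card * ∑' k, projNorm Q x k := by
  have hlim : Tendsto
      (fun N => ‖∑ n ∈ s, U n (∑ k ∈ Finset.range N, diffProj Q (-(k : ℤ)) x)‖) atTop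
      (𝓝 ‖∑ n ∈ s, U n x‖) :=
    (tendsto_finsetSum s fun n _ =>
      ((U (n : ℤ)).continuous.tendsto x).comp hx.tendsto_sum_diffProj).norm
  refine le_of_tendsto hlim (Eventually.of_forall fun N => ?_)
  simp_rw [map_sum]
  rw [Finset.sum_comm]
  calc ‖∑ k ∈ Finset.range N, ∑ n ∈ s, U n (diffProj Q (-(k : ℤ)) x)‖
      ≤ ∑ k ∈ Finset.range N, ‖∑ n ∈ s, U n (diffProj Q (-(k : ℤ)) x)‖ := norm_sum_le _ _
    _ = √s.card * ∑ k ∈ Finset.range N, projNorm Q x k := by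
      rw [Finset.mul_sum]
      exact Finset.sum_congr rfl fun k _ => h.norm_sum_shift_diffProj s _ x
    _ ≤ √s.card * ∑' k, projNorm Q x k := by
      gcongr
      exact hx.summable_projNorm.sum_le_tsum _ fun k _ => projNorm_nonneg x k

lemma summable_abs_inner (hx : IsHannan Q x) : Summable fun n : ℕ => |inner ℝ x (U n x)| := by
  have hle (s : Finset ℕ) : ∑ k ∈ s, projNorm Q x k ≤ ∑' k, projNorm Q x k :=
    hx.summable_projNorm.sum_le_tsum s fun k _ => projNorm_nonneg x k
  refine summable_of_sum_le (c := (∑' k, projNorm Q x k) * ∑' k, projNorm Q x k)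
    (fun _ => abs_nonneg _) fun s => ?_
  have hlim : Tendsto
      (fun N => ∑ n ∈ s, |inner ℝ (∑ k ∈ Finset.range N, diffProj Q (-(k : ℤ)) x) (U n x)|) atTop
      (𝓝 (∑ n ∈ s, |inner ℝ x (U n x)|)) :=
    tendsto_finsetSum _ fun n _ => (hx.tendsto_sum_diffProj.inner tendsto_const_nhds).abs
  refine le_of_tendsto hlim (Eventually.of_forall fun N => ?_)
  calc ∑ n ∈ s, |inner ℝ (∑ k ∈ Finset.range N, diffProj Q (-(k : ℤ)) x) (U n x)|
      ≤ ∑ n ∈ s, ∑ k ∈ Finset.range N, projNorm Q x k * projNorm Q x (n + k) := by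
        gcongr with n _
        rw [sum_inner]
        exact (Finset.abs_sum_le_sum_abs _ _).trans
          (Finset.sum_le_sum fun k _ => h.abs_inner_diffProj_shift_le x n k)
    _ = ∑ k ∈ Finset.range N, projNorm Q x k * ∑ m ∈ s.map (addRightEmbedding k),
          projNorm Q x m := by
        rw [Finset.sum_comm]
        simp_rw [Finset.mul_sum, Finset.sum_map, addRightEmbedding_apply]
    _ ≤ ∑ k ∈ Finset.range N, projNorm Q x k * ∑' k, projNorm Q x k := by
        gcongr with k _
        · exact projNorm_nonneg x k
        · exact hle _
    _ ≤ (∑' k, projNorm Q x k) * ∑' k, projNorm Q x k := by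
        rw [← Finset.sum_mul]
        exact mul_le_mul_of_nonneg_right (hle _) (tsum_nonneg fun k => projNorm_nonneg x k)

lemma tendsto_norm_sq_partialSum_div (hx : IsHannan Q x) :
    Tendsto (fun N : ℕ => ‖partialSum U x N‖ ^ 2 / N) atTop (𝓝 (longRunVar U x)) :=
  h.tendsto_norm_sq_partialSum_div (hx.summable_abs_inner h)

lemma longRunVar_nonneg (hx : IsHannan Q x) : 0 ≤ longRunVar U x :=
  ge_of_tendsto' (hx.tendsto_norm_sq_partialSum_div h) fun N => by positivity

lemma norm_partialSum_sub_le (hx : IsHannan Q x) (hy : IsHannan Q y) (N : ℕ) :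
    ‖partialSum U x N - partialSum U y N‖ ≤ √N * ∑' k, projNorm Q (x - y) k := by
  have hsum := (hx.sub hy).norm_sum_shift_le h (Finset.range N)
  simp only [map_sub, Finset.sum_sub_distrib, Finset.card_range] at hsum
  exact hsum

lemma abs_sqrt_longRunVar_sub_le (hx : IsHannan Q x) (hy : IsHannan Q y) :
    |√(longRunVar U x) - √(longRunVar U y)| ≤ ∑' k, projNorm Q (x - y) k := by
  refine le_of_tendsto ((hx.tendsto_norm_sq_partialSum_div h).sqrt.sub
    (hy.tendsto_norm_sq_partialSum_div h).sqrt).abs ?_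
  filter_upwards [eventually_gt_atTop 0] with N hN
  have hsN : 0 < √(N : ℝ) := sqrt_pos.2 (by exact_mod_cast hN)
  rw [sqrt_div (sq_nonneg _), sqrt_div (sq_nonneg _), sqrt_sq (norm_nonneg _),
    sqrt_sq (norm_nonneg _), ← sub_div, abs_div, abs_of_pos hsN, div_le_iff₀' hsN]
  exact (abs_norm_sub_norm_le _ _).trans (hx.norm_partialSum_sub_le h hy N)

omit h in
lemma tendsto_tsum_projNorm_sub_map (hx : IsHannan Q x) {R : ℕ → H →L[ℝ] H}
    (hR : ∀ L z, ‖R L z‖ ≤ ‖z‖) (hcomm : ∀ L i z, Q i (R L z) = R L (Q i z))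
    (hRx : Tendsto (fun L => R L x) atTop (𝓝 x)) :
    Tendsto (fun L => ∑' k, projNorm Q (x - R L x) k) atTop (𝓝 0) := by
  have hbound (L k : ℕ) : projNorm Q (x - R L x) k ≤ projNorm Q x k + projNorm Q x k :=
    (projNorm_sub_le x _ k).trans
      (add_le_add_right (projNorm_map_le (hR L) (hcomm L) x k) _)
  have hzero (k : ℕ) : Tendsto (fun L => projNorm Q (x - R L x) k) atTop (𝓝 0) := by
    have hcont : Continuous fun z => projNorm Q (x - z) k := by
      unfold projNorm
      fun_prop
    simpa [projNorm, Function.comp_def] using (hcont.tendsto x).comp hRx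
  rw [← tsum_zero (α := ℝ) (β := ℕ)]
  refine tendsto_tsum_of_dominated_convergence
    (hx.summable_projNorm.add hx.summable_projNorm) hzero (Eventually.of_forall fun L k => ?_)
  rw [norm_of_nonneg (projNorm_nonneg _ k)]
  exact hbound L k

lemma tendsto_longRunVar_map (hx : IsHannan Q x) {R : ℕ → H →L[ℝ] H}
    (hR : ∀ L z, ‖R L z‖ ≤ ‖z‖) (hcomm : ∀ L i z, Q i (R L z) = R L (Q i z))
    (hRx : Tendsto (fun L => R L x) atTop (𝓝 x)) :
    Tendsto (fun L => longRunVar U (R L x)) atTop (𝓝 (longRunVar U x)) := by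
  have hRH (L : ℕ) : IsHannan Q (R L x) := hx.map (hR L) (hcomm L)
  have hsqrt : Tendsto (fun L => √(longRunVar U (R L x))) atTop (𝓝 √(longRunVar U x)) := by
    refine tendsto_iff_norm_sub_tendsto_zero.2 (squeeze_zero (fun _ => norm_nonneg _) (fun L => ?_)
      (hx.tendsto_tsum_projNorm_sub_map hR hcomm hRx))
    rw [norm_sub_rev]
    exact hx.abs_sqrt_longRunVar_sub_le h (hRH L)
  simpa only [sq_sqrt ((hRH _).longRunVar_nonneg h), sq_sqrt (hx.longRunVar_nonneg h)]
    using hsqrt.pow 2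

end IsHannan

/-- The sum of `M` blocks of length `p` starting at the multiples of `q`. -/
noncomputable def blockSum (U : ℤ → H →ₗᵢ[ℝ] H) (x : H) (p q M : ℕ) : H :=
  ∑ i ∈ Finset.range M, U ((i * q : ℕ) : ℤ) (partialSum U x p)

lemma IsShiftSystem.exists_partialSum_eq_blockSum_add (h : IsShiftSystem U Q) (x : H)
    {p q M N : ℕ} (hpq : p ≤ q) (hM : M * q ≤ N) :
    ∃ s : Finset ℕ, s.card + M * p = N ∧
      partialSum U x N = blockSum U x p q M + ∑ n ∈ s, U n x := by
  classical
  have hend {i j : ℕ} (hij : i < j) : i * q + p ≤ j * q := by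
    nlinarith [Nat.mul_le_mul_right q (Nat.succ_le_of_lt hij)]
  have hdisj : ∀ i ∈ Finset.range M, ∀ j ∈ Finset.range M, i ≠ j →
      Disjoint (Finset.Ico (i * q) (i * q + p)) (Finset.Ico (j * q) (j * q + p)) := by
    intro i _ j _ hij
    rw [Finset.disjoint_left]
    intro n hi hj
    rw [Finset.mem_Ico] at hi hj
    rcases lt_or_gt_of_ne hij with hlt | hlt
    · exact (hi.2.trans_le (hend hlt)).not_ge hj.1
    · exact (hj.2.trans_le (hend hlt)).not_ge hi.1
  have hsub : (Finset.range M).biUnion (fun i => Finset.Ico (i * q) (i * q + p)) ⊆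
      Finset.range N := by
    intro n hn
    obtain ⟨i, hi, hin⟩ := Finset.mem_biUnion.1 hn
    exact Finset.mem_range.2 ((Finset.mem_Ico.1 hin).2.trans_le
      ((hend (Finset.mem_range.1 hi)).trans hM))
  refine ⟨Finset.range N \ (Finset.range M).biUnion fun i => Finset.Ico (i * q) (i * q + p),
    ?_, ?_⟩
  · have hcard := Finset.card_sdiff_add_card_eq_card hsub
    rw [Finset.card_biUnion hdisj, Finset.card_range] at hcard
    simpa using hcard
  · rw [partialSum, ← Finset.sum_sdiff hsub, add_comm, Finset.sum_biUnion hdisj, blockSum]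
    refine congrArg (· + _) (Finset.sum_congr rfl fun i _ => ?_)
    rw [Finset.sum_Ico_eq_sum_range, add_tsub_cancel_left, partialSum, map_sum]
    exact Finset.sum_congr rfl fun r _ => by rw [h.shift_shift, Nat.cast_add]

lemma IsHannan.norm_smul_partialSum_sub_blockSum_le (h : IsShiftSystem U Q) (hx : IsHannan Q x)
    {p q M N : ℕ} (hpq : p ≤ q) (hM0 : 0 < M) (hq0 : 0 < q) (hM : M * q ≤ N) (t : ℝ) :
    ‖(t / √N) • partialSum U x N - (t / √(q : ℝ) / √M) • blockSum U x p q M‖ ≤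
      |t| * (∑' k, projNorm Q x k) * (|1 - √(N / (q * M))| + √(N / (q * M) - p / q)) := by
  obtain ⟨s, hcard, hsum⟩ := h.exists_partialSum_eq_blockSum_add x hpq hM
  have : (0 : ℝ) < q * M := by positivity
  have hN : (0 : ℝ) < N := by exact_mod_cast (Nat.mul_pos hM0 hq0).trans_le hM
  have hS := hx.norm_sum_shift_le h (Finset.range N)
  rw [Finset.card_range, ← partialSum] at hS
  have hratio : (s.card : ℝ) / (q * M) = N / (q * M) - p / q := by
    rw [← hcard]
    push_cast
    field_simp
    ring
  rw [div_div, ← sqrt_mul (Nat.cast_nonneg q)]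
  have hsplit : (t / √N) • partialSum U x N - (t / √(q * M)) • blockSum U x p q M =
      (t / √N - t / √(q * M)) • partialSum U x N + (t / √(q * M)) • ∑ n ∈ s, U n x := by
    rw [← sub_eq_iff_eq_add'.2 hsum, smul_sub, sub_smul]
    abel
  have hcoef : t / √N - t / √(q * M) = t / √N * (1 - √(N / (q * M))) := by
    rw [sqrt_div hN.le]
    field_simp
  rw [hsplit]
  calc ‖(t / √N - t / √(q * M)) • partialSum U x N + (t / √(q * M)) • ∑ n ∈ s, U n x‖
      ≤ |t / √N - t / √(q * M)| * (√N * ∑' k, projNorm Q x k) +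
          |t / √(q * M)| * (√s.card * ∑' k, projNorm Q x k) := by
        refine (norm_add_le _ _).trans ?_
        rw [norm_smul, norm_smul, norm_eq_abs, norm_eq_abs]
        gcongr
        exact hx.norm_sum_shift_le h s
    _ = |t| * (∑' k, projNorm Q x k) * (|1 - √(N / (q * M))| + √(N / (q * M) - p / q)) := by
        rw [← hratio, hcoef, abs_mul, abs_div, abs_div, abs_of_nonneg (sqrt_nonneg (N : ℝ)),
          abs_of_nonneg (sqrt_nonneg (q * M : ℝ)), sqrt_div (Nat.cast_nonneg s.card)]
        field_simp

end ShiftSystem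

section Truncation

lemma tendsto_apply_of_forall_eq_zero {H : Type*} [NormedAddCommGroup H] [InnerProductSpace ℝ H]
    [CompleteSpace H] {P : ℕ → H →L[ℝ] H} (hmin : ∀ m n x, P m (P n x) = P (min m n) x)
    (hnorm : ∀ n x, ‖P n x‖ ≤ ‖x‖) (hzero : ∀ x, (∀ n, P n x = 0) → x = 0) (x : H) :
    Tendsto (fun n => P n x) atTop (𝓝 x) := by
  let W : Submodule ℝ H :=
    { carrier := {z | Tendsto (fun n => P n z) atTop (𝓝 z)}
      add_mem' := fun hy hz => by simpa using Tendsto.add hy hz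
      zero_mem' := by simp
      smul_mem' := fun c z hz => by simpa using Tendsto.const_smul hz c }
  have hequi : Equicontinuous fun n z => P n z :=
    (LipschitzWith.uniformEquicontinuous (fun n z => P n z) 1 fun n =>
      LipschitzWith.of_dist_le_mul fun y z => by
        simpa [dist_eq_norm, ← map_sub] using hnorm n (y - z)).equicontinuous
  have hclosed : IsClosed (W : Set H) := hequi.isClosed_setOfPred_tendsto continuous_id
  have hrange (n : ℕ) (y : H) : P n y ∈ W := by
    refine tendsto_const_nhds.congr' ?_
    filter_upwards [eventually_ge_atTop n] with m hm
    rw [hmin, min_eq_right hm]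
  have hbot : Wᗮ = ⊥ := by
    refine (Submodule.eq_bot_iff _).2 fun y hy => hzero y fun n => ?_
    have hidem (z : H) : P n (P n z) = P n z := by rw [hmin, min_self]
    have hinner := hy _ (hrange n y)
    rwa [← hidem, inner_apply_left_of_idempotent_of_norm_le hidem (hnorm n),
      inner_self_eq_zero] at hinner
  have htop : W = ⊤ := by
    rw [← hclosed.submodule_topologicalClosure_eq, Submodule.topologicalClosure_eq_top_iff, hbot]
  have hx : x ∈ W := htop ▸ Submodule.mem_top
  exact hx

variable {E : Type*} [MeasurableSpace E] {ν : Measure E} [IsProbabilityMeasure ν] {x : IidL2 ν}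

lemma exists_subset_Icc_neg (I : Finset ℤ) : ∃ n : ℕ, (I : Set ℤ) ⊆ Icc (-(n : ℤ)) n := by
  refine ⟨∑ i ∈ I, i.natAbs, fun i hi => ?_⟩
  have := Finset.single_le_sum (f := Int.natAbs) (fun _ _ => Nat.zero_le _) hi
  simp only [mem_Icc]
  omega

lemma condOn_indicator_cylinder {I : Finset ℤ} {S : Set (I → E)} (hS : MeasurableSet S)
    {A : Set ℤ} (hIA : (I : Set ℤ) ⊆ A) :
    condOn ν A (indicatorConstLp 2 (hS.cylinder I) (measure_ne_top (iidLaw ν) _) 1) =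
      indicatorConstLp 2 (hS.cylinder I) (measure_ne_top (iidLaw ν) _) 1 := by
  refine condOn_eq_self_of_ae indicatorConstLp_coeFn (Eventually.of_forall fun p => ?_)
  have hmem : merge A p ∈ cylinder I S ↔ p.1 ∈ cylinder I S := by
    have : I.restrict (merge A p) = I.restrict p.1 := by
      classical
      ext i
      simp [merge, hIA i.2]
    rw [mem_cylinder, mem_cylinder, this]
  by_cases h : p.1 ∈ cylinder I S <;> simp [h, hmem]

lemma setIntegral_cylinder_eq_zero (hx : ∀ n : ℕ, condOn ν (Icc (-(n : ℤ)) n) x = 0)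
    (I : Finset ℤ) {S : Set (I → E)} (hS : MeasurableSet S) :
    ∫ ω in cylinder I S, x ω ∂(iidLaw ν) = 0 := by
  obtain ⟨n, hn⟩ := exists_subset_Icc_neg I
  rw [← L2.inner_indicatorConstLp_one (𝕜 := ℝ) (hS.cylinder I) (measure_ne_top (iidLaw ν) _) x,
    ← condOn_indicator_cylinder hS hn, inner_condOn_left, hx, inner_zero_right]

lemma eq_zero_of_condOn_Icc_eq_zero (hx : ∀ n : ℕ, condOn ν (Icc (-(n : ℤ)) n) x = 0) :
    x = 0 := by
  have hint : Integrable x (iidLaw ν) := integrable_coeFn_iidL2 x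
  have hzero (s : Set (ℤ → E)) (hs : MeasurableSet s) : ∫ ω in s, x ω ∂(iidLaw ν) = 0 := by
    induction s, hs using MeasurableSpace.induction_on_inter
      generateFrom_measurableCylinders.symm isPiSystem_measurableCylinders with
    | empty => simp
    | basic s hs =>
      obtain ⟨I, S, hS, rfl⟩ := (mem_measurableCylinders s).1 hs
      exact setIntegral_cylinder_eq_zero hx I hS
    | compl s hs ih =>
      have huniv := setIntegral_cylinder_eq_zero hx ∅ MeasurableSet.univ
      rw [cylinder_univ, setIntegral_univ] at huniv
      rw [setIntegral_compl hs hint, huniv, ih, sub_zero]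
    | iUnion f hdisj hf ih =>
      rw [integral_iUnion hf hdisj hint.integrableOn]
      simp [ih]
  refine (Lp.eq_zero_iff_ae_eq_zero).2 ?_
  exact hint.ae_eq_zero_of_forall_setIntegral_eq_zero fun s hs _ => hzero s hs

lemma tendsto_condOn_Icc (x : IidL2 ν) :
    Tendsto (fun n : ℕ => condOn ν (Icc (-(n : ℤ)) n) x) atTop (𝓝 x) := by
  refine tendsto_apply_of_forall_eq_zero (fun m n x => ?_) (fun n => norm_condOn_le _)
    (fun _ => eq_zero_of_condOn_Icc_eq_zero) x
  rw [condOn_condOn, Icc_inter_Icc]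
  congr 2
  ext
  simp only [mem_Icc]
  omega

lemma tendsto_condOn_Icc_zero (hx : condOn ν (Iic 0) x = x) :
    Tendsto (fun n : ℕ => condOn ν (Icc (-(n : ℤ)) 0) x) atTop (𝓝 x) := by
  refine (tendsto_condOn_Icc x).congr fun n => ?_
  nth_rw 1 [← hx]
  rw [condOn_condOn]
  congr 2
  ext
  simp only [mem_inter_iff, mem_Icc, mem_Iic]
  omega

lemma tendsto_condOn_Iic_neg (hx : condOn ν ∅ x = 0) :
    Tendsto (fun k : ℕ => condOn ν (Iic (-(k : ℤ))) x) atTop (𝓝 0) := by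
  have hlim : Tendsto (fun n : ℕ => ‖x - condOn ν (Icc (-(n : ℤ)) n) x‖) atTop (𝓝 0) := by
    simpa using (tendsto_const_nhds (x := x).sub (tendsto_condOn_Icc x)).norm
  rw [← tendsto_add_atTop_iff_nat 1]
  refine squeeze_zero_norm (fun n => ?_) hlim
  have hdisj : Iic (-((n + 1 : ℕ) : ℤ)) ∩ Icc (-(n : ℤ)) n = ∅ := by
    ext
    simp only [mem_inter_iff, mem_Iic, mem_Icc, mem_empty_iff_false, iff_false]
    omega
  have hrepr : condOn ν (Iic (-((n + 1 : ℕ) : ℤ))) x =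
      condOn ν (Iic (-((n + 1 : ℕ) : ℤ))) (x - condOn ν (Icc (-(n : ℤ)) n) x) := by
    rw [map_sub, condOn_condOn, hdisj, hx, sub_zero]
  rw [hrepr]
  exact norm_condOn_le _ _

lemma isShiftSystem_iid (ν : Measure E) [IsProbabilityMeasure ν] :
    IsShiftSystem (shiftL2 ν) fun j => condOn ν (Iic j) where
  shift_shift m n x := shiftL2_shiftL2 x m n
  proj_proj i j x := by rw [condOn_condOn, Iic_inter_Iic]
  inner_proj_left i := inner_condOn_left _
  proj_shift j n x := by
    rw [condOn_shiftL2]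
    congr 3
    ext
    simp only [mem_ofPred_eq, mem_Iic]
    omega

lemma isHannan_iid (hx : condOn ν (Iic 0) x = x) (h0 : condOn ν ∅ x = 0)
    (hs : Summable (projNorm (fun j => condOn ν (Iic j)) x)) :
    IsHannan (fun j => condOn ν (Iic j)) x where
  proj_zero := hx
  tendsto_proj := tendsto_condOn_Iic_neg h0
  summable_projNorm := hs

lemma IsHannan.condOn_empty (hx : IsHannan (fun j => condOn ν (Iic j)) x) :
    condOn ν ∅ x = 0 := by
  have hlim := ((condOn ν ∅).continuous.tendsto 0).comp hx.tendsto_proj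
  refine tendsto_nhds_unique ?_ (map_zero (condOn ν ∅) ▸ hlim)
  simp [Function.comp_def, condOn_condOn]

end Truncation

section IidCentralLimit

lemma tendsto_of_eventually_norm_sub_le {f : ℕ → ℂ} {F : ℕ → ℕ → ℂ} {B : ℕ → ℕ → ℝ} {G : ℕ → ℂ}
    {b : ℕ → ℝ} {g : ℂ} (hle : ∀ᶠ p in atTop, ∀ᶠ N in atTop, ‖f N - F p N‖ ≤ B p N)
    (hF : ∀ᶠ p in atTop, Tendsto (F p) atTop (𝓝 (G p)))
    (hB : ∀ᶠ p in atTop, Tendsto (B p) atTop (𝓝 (b p)))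
    (hG : Tendsto G atTop (𝓝 g)) (hb : Tendsto b atTop (𝓝 0)) : Tendsto f atTop (𝓝 g) := by
  refine Metric.tendsto_nhds.2 fun ε hε => ?_
  obtain ⟨p, hle, hF, hB, hG, hb⟩ := (hle.and <| hF.and <| hB.and <|
    (Metric.tendsto_nhds.1 hG (ε / 3) (by positivity)).and <|
    hb.eventually_lt_const (by positivity : 0 < ε / 3)).exists
  filter_upwards [hle, Metric.tendsto_nhds.1 hF (ε / 3) (by positivity),
    hB.eventually_lt_const hb] with N hle hF hB
  rw [← dist_eq_norm] at hle
  linarith [dist_triangle4 (f N) (F p N) (G p) g]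

lemma tendsto_natCast_div_mul_div {q : ℕ} (hq : 0 < q) :
    Tendsto (fun N : ℕ => (N : ℝ) / (q * (N / q : ℕ))) atTop (𝓝 1) := by
  have hq' : (0 : ℝ) < q := Nat.cast_pos.2 hq
  have hfloor := (tendsto_nat_floor_div_atTop (R := ℝ)).comp
    (tendsto_natCast_atTop_atTop.atTop_div_const hq')
  refine (inv_one (G := ℝ) ▸ hfloor.inv₀ one_ne_zero).congr fun N => ?_
  rw [Function.comp_apply, Nat.floor_div_eq_div, inv_div, div_div]

lemma charFun_map_coeFn_zero {X : Type*} [MeasurableSpace X] {μ : Measure X}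
    [IsProbabilityMeasure μ] (t : ℝ) : charFun (μ.map (0 : Lp ℝ 2 μ)) t = 1 := by
  rw [Measure.map_congr (Lp.coeFn_zero ℝ 2 μ), Pi.zero_def, Measure.map_const]
  simp

lemma tendsto_charFun_map_div_sqrt_pow {X : Type*} [MeasurableSpace X] {μ : Measure X}
    [IsProbabilityMeasure μ] {y : Lp ℝ 2 μ} (hy : ∫ ω, y ω ∂μ = 0) (s : ℝ) :
    Tendsto (fun M : ℕ => charFun (μ.map y) (s / √M) ^ M) atTop
      (𝓝 (Complex.exp (-((s ^ 2 * ‖y‖ ^ 2 / 2 : ℝ) : ℂ)))) := by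
  rcases eq_or_ne y 0 with rfl | hy0
  · simp_rw [charFun_map_coeFn_zero]
    simp
  have hnorm : ‖y‖ ≠ 0 := norm_ne_zero_iff.2 hy0
  have haem : AEMeasurable y μ := (Lp.aestronglyMeasurable y).aemeasurable
  have hmean : ∫ ω, ‖y‖⁻¹ * y ω ∂μ = 0 := by rw [integral_const_mul, hy, mul_zero]
  have hvar : ∫ ω, ((fun ω => ‖y‖⁻¹ * y ω) ^ 2) ω ∂μ = 1 := by
    simp only [Pi.pow_apply, mul_pow, integral_const_mul]
    rw [← norm_sq_eq_integral_sq, ← mul_pow, inv_mul_cancel₀ hnorm, one_pow]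
  have hclt := ProbabilityTheory.tendsto_charFun_inv_sqrt_mul_pow (haem.const_mul _) hmean hvar
    (s * ‖y‖)
  have hlim : -((s * ‖y‖ : ℝ) : ℂ) ^ 2 / 2 = -((s ^ 2 * ‖y‖ ^ 2 / 2 : ℝ) : ℂ) := by
    push_cast
    ring
  rw [hlim] at hclt
  refine hclt.congr fun M => ?_
  have hmap : μ.map (fun ω => ‖y‖⁻¹ * y ω) = (μ.map y).map (‖y‖⁻¹ * ·) :=
    (AEMeasurable.map_map_of_aemeasurable (by fun_prop) haem).symm
  rw [hmap, charFun_map_mul]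
  congr 2
  field_simp

variable {E : Type*} [MeasurableSpace E] {ν : Measure E} [IsProbabilityMeasure ν] {x y : IidL2 ν}

lemma condOn_partialSum_eq_self {L : ℕ} (hy : condOn ν (Icc (-(L : ℤ)) 0) y = y) (p : ℕ) :
    condOn ν (Icc (-(L : ℤ)) (p - 1)) (partialSum (shiftL2 ν) y p) =
      partialSum (shiftL2 ν) y p := by
  refine condOn_sum_eq_self fun n hn => condOn_eq_self_mono ?_ (condOn_shiftL2_eq_self n hy)
  have := Finset.mem_range.1 hn
  intro j hj
  simp only [mem_ofPred_eq, mem_Icc] at hj ⊢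
  omega

lemma condOn_empty_partialSum (hx : condOn ν ∅ x = 0) (N : ℕ) :
    condOn ν ∅ (partialSum (shiftL2 ν) x N) = 0 := by
  rw [partialSum, map_sum]
  refine Finset.sum_eq_zero fun n _ => ?_
  rw [condOn_shiftL2]
  simp [hx]

lemma charFun_map_blockSum {L : ℕ} (hy : condOn ν (Icc (-(L : ℤ)) 0) y = y) (p M : ℕ) (t : ℝ) :
    charFun ((iidLaw ν).map (blockSum (shiftL2 ν) y p (p + L) M : IidL2 ν)) t =
      charFun ((iidLaw ν).map (partialSum (shiftL2 ν) y p : IidL2 ν)) t ^ M := by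
  have hB := condOn_partialSum_eq_self hy p
  induction M with
  | zero => rw [blockSum, Finset.sum_range_zero, charFun_map_coeFn_zero, pow_zero]
  | succ M ih =>
    rw [pow_succ, ← ih, blockSum, Finset.sum_range_succ, ← blockSum,
      charFun_map_add_of_condOn (A := Iic ((M * (p + L) : ℕ) - L - 1)), charFun_map_shiftL2]
    · refine condOn_sum_eq_self fun i hi => condOn_eq_self_mono ?_ (condOn_shiftL2_eq_self _ hB)
      have hi : (i + 1) * (p + L) ≤ M * (p + L) := Nat.mul_le_mul_right _ (Finset.mem_range.1 hi)
      rw [add_one_mul] at hi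
      intro j hj
      simp only [mem_ofPred_eq, mem_Icc, mem_Iic] at hj ⊢
      omega
    · refine condOn_eq_self_mono ?_ (condOn_shiftL2_eq_self _ hB)
      intro j hj
      simp only [mem_ofPred_eq, mem_Icc, mem_Iic, mem_compl_iff] at hj ⊢
      omega

-- Big blocks of length `p` separated by gaps of length `L` are independent; the gaps are
-- negligible as `p → ∞`.
lemma IsHannan.tendsto_charFun_partialSum_of_condOn_Icc
    (hy : IsHannan (fun j => condOn ν (Iic j)) y) {L : ℕ}
    (hyL : condOn ν (Icc (-(L : ℤ)) 0) y = y) (t : ℝ) :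
    Tendsto (fun N : ℕ =>
        charFun ((iidLaw ν).map (partialSum (shiftL2 ν) y N : IidL2 ν)) (t / √N)) atTop
      (𝓝 (Complex.exp (-((t ^ 2 * longRunVar (shiftL2 ν) y / 2 : ℝ) : ℂ)))) := by
  have h := isShiftSystem_iid ν
  have hratio : Tendsto (fun p : ℕ => (p : ℝ) / (p + L : ℕ)) atTop (𝓝 1) := by
    simpa using tendsto_natCast_div_add_atTop (𝕜 := ℝ) (L : ℝ)
  refine tendsto_of_eventually_norm_sub_le
    (F := fun p N => charFun ((iidLaw ν).map (partialSum (shiftL2 ν) y p : IidL2 ν))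
      (t / √(p + L : ℕ) / √(N / (p + L) : ℕ)) ^ (N / (p + L)))
    (B := fun p N => |t| * (∑' k, projNorm (fun j => condOn ν (Iic j)) y k) *
      (|1 - √(N / ((p + L : ℕ) * (N / (p + L) : ℕ)))| +
        √(N / ((p + L : ℕ) * (N / (p + L) : ℕ)) - p / (p + L : ℕ))))
    (G := fun p => Complex.exp (-(((t / √(p + L : ℕ)) ^ 2 *
      ‖partialSum (shiftL2 ν) y p‖ ^ 2 / 2 : ℝ) : ℂ)))
    (b := fun p => |t| * (∑' k, projNorm (fun j => condOn ν (Iic j)) y k) *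
      (|1 - √1| + √(1 - p / (p + L : ℕ)))) ?_ ?_ ?_ ?_ ?_
  · filter_upwards [eventually_gt_atTop 0] with p hp
    filter_upwards [eventually_ge_atTop (p + L)] with N hN
    rw [← charFun_map_blockSum hyL]
    exact (norm_charFun_map_sub_le _ _ _ _).trans
      (hy.norm_smul_partialSum_sub_blockSum_le h (Nat.le_add_right p L)
        (Nat.div_pos hN (by omega)) (by omega) (Nat.div_mul_le_self _ _) t)
  · filter_upwards [eventually_gt_atTop 0] with p hp
    have hmean := integral_eq_zero_of_condOn_empty (condOn_empty_partialSum hy.condOn_empty p)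
    exact (tendsto_charFun_map_div_sqrt_pow hmean _).comp
      (Nat.tendsto_div_const_atTop (by omega))
  · filter_upwards [eventually_gt_atTop 0] with p hp
    have hone := tendsto_natCast_div_mul_div (q := p + L) (by omega)
    exact ((tendsto_const_nhds.sub hone.sqrt).abs.add (hone.sub_const _).sqrt).const_mul _
  · have hcont : Continuous fun r : ℝ => Complex.exp (-((t ^ 2 * r / 2 : ℝ) : ℂ)) := by fun_prop
    have hvar := hratio.mul (h.tendsto_norm_sq_partialSum_div (hy.summable_abs_inner h))
    rw [one_mul] at hvar
    refine ((hcont.tendsto _).comp hvar).congr' ?_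
    filter_upwards [eventually_gt_atTop 0] with p hp
    have : (p : ℝ) ≠ 0 := by positivity
    rw [Function.comp_apply, div_pow, sq_sqrt (Nat.cast_nonneg _)]
    congr 4
    field_simp
  · simpa using ((tendsto_const_nhds (x := (1 : ℝ)).sub hratio).sqrt).const_mul
      (|t| * ∑' k, projNorm (fun j => condOn ν (Iic j)) y k)

theorem IsHannan.tendsto_charFun_partialSum (hx : IsHannan (fun j => condOn ν (Iic j)) x) (t : ℝ) :
    Tendsto (fun N : ℕ =>
        charFun ((iidLaw ν).map (partialSum (shiftL2 ν) x N : IidL2 ν)) (t / √N)) atTop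
      (𝓝 (Complex.exp (-((t ^ 2 * longRunVar (shiftL2 ν) x / 2 : ℝ) : ℂ)))) := by
  have h := isShiftSystem_iid ν
  have hnorm (L : ℕ) (z : IidL2 ν) : ‖condOn ν (Icc (-(L : ℤ)) 0) z‖ ≤ ‖z‖ := norm_condOn_le _ z
  have hcomm (L : ℕ) (i : ℤ) (z : IidL2 ν) : condOn ν (Iic i) (condOn ν (Icc (-(L : ℤ)) 0) z) =
      condOn ν (Icc (-(L : ℤ)) 0) (condOn ν (Iic i) z) := condOn_comm _ _ z
  have hlim := tendsto_condOn_Icc_zero hx.proj_zero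
  have hmap (L : ℕ) := hx.map (hnorm L) (hcomm L)
  refine tendsto_of_eventually_norm_sub_le
    (B := fun L _ => |t| * ∑' k, projNorm (fun j => condOn ν (Iic j))
      (x - condOn ν (Icc (-(L : ℤ)) 0) x) k)
    (.of_forall fun L => ?_)
    (.of_forall fun L => (hmap L).tendsto_charFun_partialSum_of_condOn_Icc (condOn_self _ x) t)
    (.of_forall fun L => tendsto_const_nhds) ?_ ?_
  · filter_upwards [eventually_gt_atTop 0] with N hN
    have hN' : (0 : ℝ) < √N := by positivity
    refine (norm_charFun_map_sub_le _ _ _ _).trans ?_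
    rw [← smul_sub, norm_smul, norm_eq_abs, abs_div, abs_of_pos hN', div_mul_eq_mul_div,
      mul_div_assoc]
    gcongr
    rw [div_le_iff₀' hN']
    exact hx.norm_partialSum_sub_le h (hmap L) N
  · have hcont : Continuous fun r : ℝ => Complex.exp (-((t ^ 2 * r / 2 : ℝ) : ℂ)) := by fun_prop
    exact (hcont.tendsto _).comp (hx.tendsto_longRunVar_map h hnorm hcomm hlim)
  · simpa using (hx.tendsto_tsum_projNorm_sub_map hnorm hcomm hlim).const_mul |t|

end IidCentralLimit

section SumsOfStable

variable {α : ℝ} {ι : Type*}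

lemma IsSAS.of_hasSum [Countable ι] {X : Type*} [MeasurableSpace X] {μ : Measure X}
    [IsProbabilityMeasure μ] {Y : ι → X → ℝ} {Z : X → ℝ} {c : ι → ℝ} {C : ℝ}
    (hY : ∀ i, Measurable (Y i)) (hZ : Measurable Z)
    (hlaw : ∀ s : Finset ι, IsSAS α (∑ i ∈ s, c i) (μ.map fun ω => ∑ i ∈ s, Y i ω))
    (hc : HasSum c C) (hYZ : ∀ᵐ ω ∂μ, HasSum (fun i => Y i ω) (Z ω)) :
    IsSAS α C (μ.map Z) := by
  intro t
  have hcharFun : ∀ {V : X → ℝ}, Measurable V →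
      charFun (μ.map V) t = ∫ ω, Complex.exp (t * V ω * Complex.I) ∂μ := fun hV => by
    rw [charFun_apply_real, integral_map hV.aemeasurable (by fun_prop)]
  have hleft : Tendsto (fun s : Finset ι => charFun (μ.map fun ω => ∑ i ∈ s, Y i ω) t) atTop
      (𝓝 (charFun (μ.map Z) t)) := by
    rw [hcharFun hZ]
    simp_rw [fun s : Finset ι => hcharFun (Finset.measurable_fun_sum s fun i _ => hY i)]
    refine tendsto_integral_filter_of_dominated_convergence (fun _ => 1)
      (.of_forall fun s => by fun_prop) (.of_forall fun s => .of_forall fun ω => ?_)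
      (integrable_const 1) ?_
    · rw [← Complex.ofReal_mul, Complex.norm_exp_ofReal_mul_I]
    · filter_upwards [hYZ] with ω hω
      have hcont : Continuous fun y : ℝ => Complex.exp (t * y * Complex.I) := by fun_prop
      exact (hcont.tendsto _).comp hω
  have hexp : Continuous fun y : ℝ => Complex.exp (-((y * |t| ^ α : ℝ) : ℂ)) := by fun_prop
  exact tendsto_nhds_unique hleft
    (((hexp.tendsto C).comp hc).congr fun s => (hlaw s t).symm)

lemma isSAS_map_sum_eval {E : Type*} [MeasurableSpace E] {ν : Measure E} [IsProbabilityMeasure ν]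
    {f : ι → ℤ} (hf : Function.Injective f) {g : ι → E → ℝ} (hg : ∀ i, Measurable (g i))
    {c : ι → ℝ} (h : ∀ i, IsSAS α (c i) (ν.map (g i))) (s : Finset ι) :
    IsSAS α (∑ i ∈ s, c i) ((iidLaw ν).map fun ω => ∑ i ∈ s, g i (ω (f i))) := by
  intro t
  have hcoord : ProbabilityTheory.iIndepFun (fun i (ω : ℤ → E) => ω (f i)) (iidLaw ν) :=
    (ProbabilityTheory.iIndepFun_infinitePi (P := fun _ : ℤ => ν) (X := fun _ => id)
      fun _ => measurable_id).precomp hf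
  have hindep : ProbabilityTheory.iIndepFun (fun i (ω : ℤ → E) => g i (ω (f i))) (iidLaw ν) :=
    hcoord.comp g hg
  have hlaw : ∀ i, charFun ((iidLaw ν).map fun ω => g i (ω (f i))) t =
      Complex.exp (-((c i * |t| ^ α : ℝ) : ℂ)) := fun i => by
    have heval : MeasurePreserving (Function.eval (f i)) (iidLaw ν) ν :=
      measurePreserving_eval_infinitePi (fun _ : ℤ => ν) (f i)
    have hmap : (iidLaw ν).map (g i ∘ Function.eval (f i)) = ν.map (g i) := by
      rw [← Measure.map_map (hg i) heval.measurable, heval.map_eq]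
    exact (congrArg (charFun · t) hmap).trans (h i t)
  have hmeas : ∀ i, Measurable fun ω : ℤ → E => g i (ω (f i)) :=
    fun i => (hg i).comp (measurable_pi_apply (f i))
  rw [(hindep.restrict s).charFun_map_fun_finsetSum_eq_prod fun i _ =>
    (hmeas i).aemeasurable, Finset.prod_apply,
    Finset.prod_congr rfl fun i _ => hlaw i, ← Complex.exp_sum, Finset.sum_mul,
    Complex.ofReal_sum, Finset.sum_neg_distrib]

lemma IsStableIntegral.isSAS_map_sum {κ S Ω : Type*} [MeasurableSpace S] [MeasurableSpace Ω]
    {μ : Measure S} {f : κ → S → ℝ} {X : κ → Ω → ℝ} {P : Measure Ω}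
    (h : IsStableIntegral α μ f X P) (s : Finset ι) (u : ι → ℝ) (k : ι → κ) :
    IsSAS α (∫ x, |∑ j ∈ s, u j * f (k j) x| ^ α ∂μ)
      (P.map fun ω => ∑ j ∈ s, u j * X (k j) ω) := by
  classical
  have hfiber : ∀ v : κ → ℝ,
      ∑ l ∈ s.image k, (∑ j ∈ s with k j = l, u j) * v l = ∑ j ∈ s, u j * v (k j) := fun v => by
    rw [← Finset.sum_fiberwise_of_maps_to fun j hj => Finset.mem_image_of_mem k hj]
    refine Finset.sum_congr rfl fun l _ => ?_
    rw [Finset.sum_mul]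
    exact Finset.sum_congr rfl fun j hj => by rw [(Finset.mem_filter.1 hj).2]
  have hsum := h (s.image k) fun l => ∑ j ∈ s with k j = l, u j
  simp_rw [hfiber fun l => f l _, hfiber fun l => X l _] at hsum
  exact hsum

end SumsOfStable

section Blocks

/-- The `α`-mass of the kernel `a` on the `m`-th unit block: the scale of the contribution to the
moving average of the innovations lying `m` blocks back. -/
noncomputable def blockMass (α : ℝ) (a : ℝ → ℝ) (m : ℕ) : ℝ := ∫ x in Ioc (m : ℝ) (m + 1), |a x| ^ α

/-- `ν` is the law of one block of innovations: of the sequence whose `k`-th entry is the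
contribution of a given unit block to the value of the moving average `k` blocks later. -/
def IsBlockLaw (α : ℝ) (a : ℝ → ℝ) (ν : Measure (ℕ → ℝ)) : Prop :=
  IsStableIntegral α (volume.restrict (Ioc 0 1)) (fun (k : ℕ) x => a (k + x)) (fun k e => e k) ν

variable {α : ℝ} {a : ℝ → ℝ}

lemma blockMass_nonneg (m : ℕ) : 0 ≤ blockMass α a m := by
  unfold blockMass
  positivity

lemma setIntegral_abs_comp_natCast_add (m : ℕ) :
    ∫ x in Ioc (0 : ℝ) 1, |a (m + x)| ^ α = blockMass α a m := by
  rw [blockMass, ← intervalIntegral.integral_of_le zero_le_one,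
    ← intervalIntegral.integral_of_le (by linarith),
    intervalIntegral.integral_comp_add_left fun y => |a y| ^ α, add_zero]

lemma hasSum_integral_comp_intCast_sub {f : ℝ → ℝ} (hf : Integrable f) :
    HasSum (fun i : ℤ => ∫ x in Ioc (0 : ℝ) 1, f (i - x)) (∫ x, f x) := by
  refine (hf.hasSum_intervalIntegral (-1)).congr_fun fun i => ?_
  rw [← intervalIntegral.integral_of_le zero_le_one, intervalIntegral.integral_comp_sub_left]
  congr 1 <;> ring

lemma summable_rpow_of_le {ι : Type*} {c : ι → ℝ} (hc : ∀ i, 0 ≤ c i) {p q : ℝ} (hp : 0 < p)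
    (hpq : p ≤ q) (h : Summable fun i => c i ^ p) : Summable fun i => c i ^ q := by
  refine h.of_norm_bounded_eventually ?_
  filter_upwards [h.tendsto_cofinite_zero.eventually_lt_const zero_lt_one] with i hi
  have hle : c i ≤ 1 := not_lt.1 fun hlt => hi.not_ge (one_le_rpow hlt.le hp.le)
  rw [norm_of_nonneg (rpow_nonneg (hc i) q)]
  exact rpow_le_rpow_of_exponent_ge_of_imp (hc i) hle hpq
    fun _ hq => absurd hq (hp.trans_le hpq).ne'

end Blocks

section LagSum

/-- The contribution to the moving average at time `0` of the innovations `m` blocks back, summed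
over the lags `m` in `A`. The entry `ω i k` is the stochastic integral of `x ↦ a (k + x)` over the
`i`-th block of innovations. -/
noncomputable def lagSum (A : Set ℕ) (ω : ℤ → ℕ → ℝ) : ℝ := ∑' m : A, ω (-(m : ℤ)) m

/-- The scale of `lagSum A`. -/
noncomputable def lagMass (α : ℝ) (a : ℝ → ℝ) (A : Set ℕ) : ℝ := ∑' m : A, blockMass α a m

variable {α : ℝ} {a : ℝ → ℝ} {ν : Measure (ℕ → ℝ)}

@[fun_prop]
lemma measurable_lagSum (A : Set ℕ) : Measurable (lagSum A) :=
  Measurable.tsum fun _ => (measurable_pi_apply _).comp (measurable_pi_apply _)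

lemma lagMass_nonneg (A : Set ℕ) : 0 ≤ lagMass α a A := tsum_nonneg fun m => blockMass_nonneg m

lemma lagSum_univ_shift (n : ℤ) (ω : ℤ → ℕ → ℝ) :
    lagSum univ (shift n ω) = ∑' m : ℕ, ω (n - m) m := by
  simp only [lagSum, shift, neg_add_eq_sub]
  exact tsum_univ fun m : ℕ => ω (n - m) m

variable [IsProbabilityMeasure ν]
  (hν : IsBlockLaw α a ν)
include hν

omit [IsProbabilityMeasure ν] in
lemma isSAS_eval_law (m : ℕ) : IsSAS α (blockMass α a m) (ν.map fun e => e m) := by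
  simpa [setIntegral_abs_comp_natCast_add] using IsStableIntegral.isSAS hν m

lemma isSAS_eval_eval (i : ℤ) (m : ℕ) :
    IsSAS α (blockMass α a m) ((iidLaw ν).map fun ω => ω i m) := by
  simpa using isSAS_map_sum_eval (f := fun _ : Unit => i) (Function.injective_of_subsingleton _)
    (fun _ => measurable_pi_apply m) (fun _ => isSAS_eval_law hν m) {()}

variable (hα : 1 < α) (hα2 : α ≤ 2) (hs : Summable fun m => blockMass α a m ^ (1 / 2 : ℝ))
include hα hα2 hs

lemma ae_summable_eval_sub (n : ℤ) : ∀ᵐ ω ∂iidLaw ν, Summable fun m : ℕ => ω (n - m) m := by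
  have hY : ∀ m : ℕ, Measurable fun ω : ℤ → ℕ → ℝ => ω (n - m) m := fun m => by fun_prop
  have hmoment : ∀ m : ℕ, eLpNorm (fun ω : ℤ → ℕ → ℝ => ω (n - m) m) 1 (iidLaw ν) ≤
      ENNReal.ofReal ((1 + π ^ 2 / (2 * (α - 1))) *
        (blockMass α a m ^ (1 / α) + (1 / 2) ^ m)) := fun m => by
    have : IsProbabilityMeasure ((iidLaw ν).map fun ω => ω (n - m) m) :=
      Measure.isProbabilityMeasure_map (hY m).aemeasurable
    have hlaw := isSAS_eval_eval hν (n - m) m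
    have hτ : 0 ≤ blockMass α a m := blockMass_nonneg m
    have hint : Integrable (fun ω : ℤ → ℕ → ℝ => |ω (n - m) m|) (iidLaw ν) :=
      (integrable_map_measure (by fun_prop) (hY m).aemeasurable).1 (hlaw.integrable_abs hα hτ)
    have hle := hlaw.integral_abs_le hα hτ (s := blockMass α a m ^ (1 / α) + (1 / 2) ^ m)
      (by positivity) <| calc
        blockMass α a m = (blockMass α a m ^ (1 / α)) ^ α := by
          rw [← rpow_mul hτ, one_div_mul_cancel (by linarith), rpow_one]
        _ ≤ _ := rpow_le_rpow (by positivity) (le_add_of_nonneg_right (by positivity))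
          (by linarith)
    rw [integral_map (hY m).aemeasurable (by fun_prop)] at hle
    rw [eLpNorm_one_eq_lintegral_enorm]
    simp_rw [Real.enorm_eq_ofReal_abs]
    rw [← ofReal_integral_eq_lintegral_ofReal hint (.of_forall fun ω => abs_nonneg _)]
    exact ENNReal.ofReal_le_ofReal hle
  have hsum : Summable fun m : ℕ => (1 + π ^ 2 / (2 * (α - 1))) *
      (blockMass α a m ^ (1 / α) + (1 / 2) ^ m) :=
    ((summable_rpow_of_le blockMass_nonneg one_half_pos
      (one_div_le_one_div_of_le (by linarith) hα2) hs).add summable_geometric_two).mul_left _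
  filter_upwards [summable_norm_of_tsum_eLpNorm_ne_top le_rfl
    (fun m => (hY m).aestronglyMeasurable)
    (ne_top_of_le_ne_top hsum.tsum_ofReal_ne_top (ENNReal.tsum_le_tsum hmoment))] with ω hω
  exact hω.of_norm

omit hν hα hα2 [IsProbabilityMeasure ν] in
lemma summable_blockMass : Summable (blockMass α a) := by
  simpa using summable_rpow_of_le blockMass_nonneg one_half_pos one_half_lt_one.le hs

lemma isSAS_lagSum (A : Set ℕ) : IsSAS α (lagMass α a A) ((iidLaw ν).map (lagSum A)) := by
  have hinj : Function.Injective fun m : A => -((m : ℕ) : ℤ) := fun m m' h =>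
    Subtype.ext (by simpa using h)
  refine IsSAS.of_hasSum (Y := fun (m : A) ω => ω (-((m : ℕ) : ℤ)) m)
    (fun m => (measurable_pi_apply _).comp (measurable_pi_apply _)) (measurable_lagSum A)
    (isSAS_map_sum_eval hinj (g := fun (m : A) (e : ℕ → ℝ) => e m) (fun m => measurable_pi_apply _)
      fun m => isSAS_eval_law hν m)
    ((summable_blockMass hs).subtype A).hasSum ?_
  filter_upwards [ae_summable_eval_sub hν hα hα2 hs 0] with ω hω
  have hsub : Summable fun m : A => ω (-((m : ℕ) : ℤ)) m := by
    simpa [Function.comp_def] using hω.comp_injective (Subtype.val_injective (p := (· ∈ A)))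
  exact hsub.hasSum

end LagSum

section MovingAverageLaw

variable {α : ℝ} {a : ℝ → ℝ} {ν : Measure (ℕ → ℝ)} {ι : Type*} [Fintype ι]

lemma ae_sum_filter_natCast_add_eq (hc : ∀ x < 0, a x = 0) (n : ι → ℤ) (u : ι → ℝ) (i : ℤ) :
    ∀ᵐ x ∂volume.restrict (Ioc (0 : ℝ) 1),
      ∑ j with i ≤ n j, u j * a ((n j - i).toNat + x) = ∑ j, u j * a (n j - (i - x)) := by
  have hne : ∀ᵐ x : ℝ ∂volume.restrict (Ioc (0 : ℝ) 1), x ≠ 1 :=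
    ae_restrict_of_ae (Measure.ae_ne volume 1)
  filter_upwards [hne, ae_restrict_mem measurableSet_Ioc] with x hx1 hx
  rw [Finset.sum_filter]
  refine Finset.sum_congr rfl fun j _ => ?_
  split_ifs with hij
  · have hcast : (((n j - i).toNat : ℕ) : ℝ) = n j - i := by
      exact_mod_cast Int.toNat_of_nonneg (sub_nonneg.2 hij)
    rw [hcast, sub_sub_eq_add_sub, sub_add_eq_add_sub]
  · have hle : (n j : ℝ) + 1 ≤ i := by exact_mod_cast not_le.1 hij
    rw [hc _ (by linarith [hx.2.lt_of_ne hx1]), mul_zero]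

variable [IsProbabilityMeasure ν]
  (hν : IsBlockLaw α a ν)
  (hα : 1 < α) (hα2 : α ≤ 2) (hs : Summable fun m => blockMass α a m ^ (1 / 2 : ℝ))
include hν hα hα2 hs

lemma ae_hasSum_lagSum_univ_shift (n : ℤ) : ∀ᵐ ω ∂iidLaw ν,
    HasSum (fun i : ℤ => if i ≤ n then ω i (n - i).toNat else 0) (lagSum univ (shift n ω)) := by
  filter_upwards [ae_summable_eval_sub hν hα hα2 hs n] with ω hω
  have hinj : Function.Injective fun m : ℕ => n - m := fun m m' h => by simpa using h
  rw [lagSum_univ_shift, ← hinj.hasSum_iff fun i hi => if_neg fun hle =>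
    hi ⟨(n - i).toNat, by simp only [Int.toNat_of_nonneg (sub_nonneg.2 hle), sub_sub_cancel]⟩]
  simpa [Function.comp_def] using hω.hasSum

lemma isSAS_sum_lagSum_shift (ham : Measurable a) (hai : Integrable fun x => |a x| ^ α)
    (hc : ∀ x < 0, a x = 0) (n : ι → ℤ) (u : ι → ℝ) :
    IsSAS α (∫ x, |∑ j, u j * a (n j - x)| ^ α)
      ((iidLaw ν).map fun ω => ∑ j, u j * lagSum univ (shift (n j) ω)) := by
  have hblock : ∀ i : ℤ, IsSAS α (∫ x in Ioc (0 : ℝ) 1, |∑ j, u j * a (n j - (i - x))| ^ α)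
      (ν.map fun e => ∑ j with i ≤ n j, u j * e (n j - i).toNat) := fun i => by
    rw [← integral_congr_ae ((ae_sum_filter_natCast_add_eq hc n u i).mono
      fun x hx => congrArg (fun y : ℝ => |y| ^ α) hx)]
    exact IsStableIntegral.isSAS_map_sum hν _ u fun j => (n j - i).toNat
  have hmass := hasSum_integral_comp_intCast_sub (integrable_abs_sum_mul_rpow hα.le
    (fun j => ham.comp (measurable_const.sub measurable_id))
    (fun j => hai.comp_sub_left (n j : ℝ)) Finset.univ u)
  have hg : ∀ i : ℤ, Measurable fun e : ℕ → ℝ => ∑ j with i ≤ n j, u j * e (n j - i).toNat :=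
    fun i => by fun_prop
  refine IsSAS.of_hasSum (fun i => (hg i).comp (measurable_pi_apply i))
    (Finset.measurable_fun_sum _ fun j _ =>
      ((measurable_lagSum univ).comp (measurable_shift (n j))).const_mul (u j))
    (isSAS_map_sum_eval Function.injective_id hg hblock) hmass ?_
  filter_upwards [ae_all_iff.2 fun j => ae_hasSum_lagSum_univ_shift hν hα hα2 hs (n j)] with ω hω
  simpa [Finset.sum_filter] using hasSum_sum fun j (_ : j ∈ Finset.univ) => (hω j).mul_left (u j)

end MovingAverageLaw

section Lags

variable {α β : ℝ} {a : ℝ → ℝ} {A B : Set ℕ} {ω ω' : ℤ → ℕ → ℝ}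

lemma lagSum_congr (h : ∀ m ∈ B, ω (-(m : ℤ)) = ω' (-(m : ℤ))) : lagSum B ω = lagSum B ω' :=
  tsum_congr fun m => congrFun (h m m.2) m

lemma lagSum_merge_of_mem {S : Set ℤ} (h : ∀ m ∈ B, -(m : ℤ) ∈ S) :
    lagSum B (merge S (ω, ω')) = lagSum B ω := by
  classical
  exact lagSum_congr fun m hm => S.piecewise_eq_of_mem _ _ (h m hm)

lemma lagSum_merge_of_notMem {S : Set ℤ} (h : ∀ m ∈ B, -(m : ℤ) ∉ S) :
    lagSum B (merge S (ω, ω')) = lagSum B ω' := by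
  classical
  exact lagSum_congr fun m hm => S.piecewise_eq_of_notMem _ _ (h m hm)

lemma lagSum_union (hω : Summable fun m : ℕ => ω (-(m : ℤ)) m) (h : Disjoint A B) :
    lagSum (A ∪ B) ω = lagSum A ω + lagSum B ω :=
  Summable.tsum_union_disjoint (f := fun m : ℕ => ω (-(m : ℤ)) m) h
    (hω.comp_injective (Subtype.val_injective (p := (· ∈ A))))
    (hω.comp_injective (Subtype.val_injective (p := (· ∈ B))))

lemma lagSum_singleton (k : ℕ) : lagSum {k} ω = ω (-(k : ℤ)) k :=
  tsum_singleton k fun m : ℕ => ω (-(m : ℤ)) m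

lemma lagMass_le_univ (hs : Summable (blockMass α a)) : lagMass α a A ≤ lagMass α a univ := by
  rw [lagMass, lagMass, tsum_univ]
  exact hs.tsum_subtype_le _ A blockMass_nonneg

lemma lagMass_pos (hs : Summable (blockMass α a)) {m : ℕ} (hm : m ∈ A) (h : 0 < blockMass α a m) :
    0 < lagMass α a A :=
  (hs.comp_injective (Subtype.val_injective (p := (· ∈ A)))).tsum_pos
    (fun _ => blockMass_nonneg _) ⟨m, hm⟩ h

end Lags

section SecondMoments

variable {α β τ : ℝ} {ρ : Measure ℝ}

lemma sq_one_add_abs_rpow_le (hβ0 : 0 ≤ β) (hβ1 : β ≤ 1) (v : ℝ) :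
    (1 + |v| ^ β) ^ 2 ≤ 4 + 2 * min (v ^ 2) (|v| ^ (2 * β)) := by
  rw [abs_rpow_two_mul]
  rcases le_total |v| 1 with hv | hv
  · have hpow : |v| ^ β ≤ 1 := rpow_le_one (abs_nonneg _) hv hβ0
    have hmin : 0 ≤ min (v ^ 2) ((|v| ^ β) ^ 2) := by positivity
    nlinarith [rpow_nonneg (abs_nonneg v) β]
  · have hpow : |v| ^ β ≤ |v| := by simpa using rpow_le_rpow_of_exponent_le hv hβ1
    have hsq : (|v| ^ β) ^ 2 ≤ v ^ 2 := by
      rw [← sq_abs v]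
      gcongr
    rw [min_eq_right hsq]
    nlinarith [sq_nonneg (1 - |v| ^ β)]

variable [IsProbabilityMeasure ρ]

lemma IsSAS.integrable_sq_one_add_rpow (h : IsSAS α τ ρ) (hα2 : α ≤ 2) (hτ : 0 ≤ τ) (hβ0 : 0 < β)
    (hβ : β < α / 2) : Integrable (fun y : ℝ => (1 + |y| ^ β) ^ 2) ρ := by
  have hmin := h.integrable_min_sq_rpow (q := 2 * β) (by linarith) (by linarith) (by linarith) hτ
  refine ((integrable_const 4).add (hmin.const_mul 2)).mono'
    (Measurable.aestronglyMeasurable (by fun_prop)) (ae_of_all _ fun y => ?_)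
  rw [norm_of_nonneg (by positivity)]
  exact sq_one_add_abs_rpow_le hβ0.le (by linarith) y

lemma IsSAS.integral_sq_one_add_rpow_le (h : IsSAS α τ ρ) (hα2 : α ≤ 2) (hτ : 0 ≤ τ) (hβ0 : 0 < β)
    (hβ : β < α / 2) : ∫ y, (1 + |y| ^ β) ^ 2 ∂ρ ≤
      4 + 2 * (π ^ 2 * (2 - 2 * β) / (2 * (α - 2 * β)) * τ) := by
  have hq : 0 < 2 * β := by linarith
  have hqα : 2 * β < α := by linarith
  have hq2 : 2 * β < 2 := by linarith
  have hmin := h.integrable_min_sq_rpow hq hqα hq2 hτ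
  calc ∫ y, (1 + |y| ^ β) ^ 2 ∂ρ ≤ ∫ y, (4 + 2 * min (y ^ 2) (|y| ^ (2 * β))) ∂ρ :=
        integral_mono (h.integrable_sq_one_add_rpow hα2 hτ hβ0 hβ)
          ((integrable_const 4).add (hmin.const_mul 2))
          fun y => sq_one_add_abs_rpow_le hβ0.le (by linarith) y
    _ = 4 + 2 * ∫ y, min (y ^ 2) (|y| ^ (2 * β)) ∂ρ := by
        rw [integral_add (integrable_const 4) (hmin.const_mul 2), integral_const_mul]
        simp
    _ ≤ 4 + 2 * (π ^ 2 * (2 - 2 * β) / (2 * (α - 2 * β)) * τ) := by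
        gcongr
        exact h.integral_min_sq_rpow_le hq hqα hq2 hτ

end SecondMoments

section DiffProjIid

variable {E : Type*} [MeasurableSpace E] {ν : Measure E} [IsProbabilityMeasure ν]

lemma indepFun_of_comp_merge {F G : Type*} [MeasurableSpace F] [MeasurableSpace G] {S : Set ℤ}
    {f : (ℤ → E) → F} {g : (ℤ → E) → G} (hf : Measurable f) (hg : Measurable g)
    (hfS : ∀ p, f (merge S p) = f p.1) (hgS : ∀ p, g (merge S p) = g p.2) :
    ProbabilityTheory.IndepFun f g (iidLaw ν) := by
  rw [ProbabilityTheory.indepFun_iff_measure_inter_preimage_eq_mul]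
  intro s t hs ht
  have hpre : merge S ⁻¹' (f ⁻¹' s ∩ g ⁻¹' t) = (f ⁻¹' s) ×ˢ (g ⁻¹' t) := by
    ext p
    simp [hfS, hgS]
  rw [← (measurePreserving_merge ν S).measure_preimage
    ((hf hs).inter (hg ht)).nullMeasurableSet, hpre, Measure.prod_prod]

lemma norm_diffProj_le (i : ℤ) (x : IidL2 ν) :
    ‖diffProj (fun j => condOn ν (Iic j)) i x‖ ≤ 2 * ‖x‖ := by
  rw [diffProj_apply, two_mul]
  exact (norm_sub_le _ _).trans (add_le_add (norm_condOn_le _ x) (norm_condOn_le _ x))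

lemma diffProj_condOn_Iic {i j : ℤ} (hij : i ≤ j) (x : IidL2 ν) :
    diffProj (fun j => condOn ν (Iic j)) i (condOn ν (Iic j) x) =
      diffProj (fun j => condOn ν (Iic j)) i x := by
  simp only [diffProj_apply, condOn_condOn, Iic_inter_Iic]
  rw [min_eq_left hij, min_eq_left (by omega)]

lemma diffProj_eq_zero_of_condOn_compl {i : ℤ} {y : IidL2 ν} (hy : condOn ν {i}ᶜ y = y) :
    diffProj (fun j => condOn ν (Iic j)) i y = 0 := by
  have hset : Iic i ∩ {i}ᶜ = Iic (i - 1) ∩ {i}ᶜ := by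
    ext j
    simp only [mem_inter_iff, mem_Iic, mem_compl_iff, mem_singleton_iff]
    omega
  rw [diffProj_apply, ← hy, condOn_condOn, condOn_condOn, hset, sub_self]

lemma norm_diffProj_le_of_condOn_compl {i j : ℤ} (hij : i ≤ j) (x : IidL2 ν) {y : IidL2 ν}
    (hy : condOn ν {i}ᶜ y = y) :
    ‖diffProj (fun j => condOn ν (Iic j)) i x‖ ≤ 2 * ‖condOn ν (Iic j) x - y‖ := by
  rw [← diffProj_condOn_Iic hij, ← sub_zero (diffProj _ i _),
    ← diffProj_eq_zero_of_condOn_compl hy, ← map_sub]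
  exact norm_diffProj_le i _

lemma projNorm_sub_condOn_empty (x : IidL2 ν) :
    projNorm (fun j => condOn ν (Iic j)) (x - condOn ν ∅ x) =
      projNorm (fun j => condOn ν (Iic j)) x := by
  funext k
  rw [projNorm, projNorm, map_sub, diffProj_apply _ (condOn ν ∅ x), condOn_condOn, condOn_condOn,
    inter_empty, inter_empty, sub_self, sub_zero]

lemma indepFun_lagSum_eval {ν : Measure (ℕ → ℝ)} [IsProbabilityMeasure ν] {B : Set ℕ} {k : ℕ}
    (hk : k ∉ B) :
    ProbabilityTheory.IndepFun (lagSum B) (fun ω => ω (-(k : ℤ)) k) (iidLaw ν) := by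
  classical
  refine indepFun_of_comp_merge (S := {-(k : ℤ)}ᶜ) (by fun_prop) (by fun_prop)
    (fun p => lagSum_merge_of_mem fun m hm => ?_) fun p => ?_
  · simpa using fun h : m = k => hk (h ▸ hm)
  · simp [merge]

end DiffProjIid

section ProjectionDecay

variable {α β C : ℝ} {a K : ℝ → ℝ} {ν : Measure (ℕ → ℝ)} [IsProbabilityMeasure ν]
  (hν : IsBlockLaw α a ν)
  (hα : 1 < α) (hα2 : α ≤ 2) (hs : Summable fun m => blockMass α a m ^ (1 / 2 : ℝ))
include hν hα hα2 hs

lemma memLp_comp_lagSum (hβ0 : 0 < β) (hβ : β < α / 2) (hK : Measurable K)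
    (hKC : ∀ v, |K v| ≤ C * (1 + |v| ^ β)) (B : Set ℕ) :
    MemLp (fun ω => K (lagSum B ω)) 2 (iidLaw ν) := by
  have : IsProbabilityMeasure ((iidLaw ν).map (lagSum B)) :=
    Measure.isProbabilityMeasure_map (by fun_prop)
  have hint := (isSAS_lagSum hν hα hα2 hs B).integrable_sq_one_add_rpow hα2 (lagMass_nonneg B)
    hβ0 hβ
  have hK2 : MemLp K 2 ((iidLaw ν).map (lagSum B)) := by
    rw [memLp_two_iff_integrable_sq hK.aestronglyMeasurable]
    refine (hint.const_mul (C ^ 2)).mono' (by fun_prop) (ae_of_all _ fun v => ?_)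
    rw [norm_of_nonneg (sq_nonneg _), ← mul_pow, ← sq_abs]
    exact pow_le_pow_left₀ (abs_nonneg _) (hKC v) 2
  exact hK2.comp_of_map (by fun_prop)

lemma exists_integral_sq_lagSum_mul_min_le (hβ0 : 0 < β) (hβ : β < α / 2) :
    ∃ D, 0 ≤ D ∧ ∀ (k : ℕ) (B : Set ℕ), k ∉ B →
      Integrable (fun ω => (1 + |lagSum B ω| ^ β) ^ 2 *
        min (ω (-(k : ℤ)) k ^ 2) (|ω (-(k : ℤ)) k| ^ (2 * β))) (iidLaw ν) ∧
      ∫ ω, (1 + |lagSum B ω| ^ β) ^ 2 *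
        min (ω (-(k : ℤ)) k ^ 2) (|ω (-(k : ℤ)) k| ^ (2 * β)) ∂(iidLaw ν) ≤
        D * blockMass α a k := by
  have hq : 0 < α - 2 * β := by linarith
  have hq2 : 0 ≤ 2 - 2 * β := by linarith
  have hT : 0 ≤ lagMass α a univ := lagMass_nonneg univ
  refine ⟨(4 + 2 * (π ^ 2 * (2 - 2 * β) / (2 * (α - 2 * β)) * lagMass α a univ)) *
    (π ^ 2 * (2 - 2 * β) / (2 * (α - 2 * β))), by positivity, fun k B hk => ?_⟩
  have hY : Measurable fun ω : ℤ → ℕ → ℝ => ω (-(k : ℤ)) k := by fun_prop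
  have : IsProbabilityMeasure ((iidLaw ν).map (lagSum B)) :=
    Measure.isProbabilityMeasure_map (by fun_prop)
  have : IsProbabilityMeasure ((iidLaw ν).map fun ω => ω (-(k : ℤ)) k) :=
    Measure.isProbabilityMeasure_map hY.aemeasurable
  have hlaw := isSAS_lagSum hν hα hα2 hs B
  have hlawY := isSAS_eval_eval hν (-(k : ℤ)) k
  have hf : Measurable fun v : ℝ => (1 + |v| ^ β) ^ 2 := by fun_prop
  have hg : Measurable fun y : ℝ => min (y ^ 2) (|y| ^ (2 * β)) := by fun_prop
  have hfi := hlaw.integrable_sq_one_add_rpow hα2 (lagMass_nonneg B) hβ0 hβ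
  have hgi := hlawY.integrable_min_sq_rpow (q := 2 * β) (by linarith) (by linarith) (by linarith)
    (blockMass_nonneg k)
  have hfg := (indepFun_lagSum_eval (ν := ν) hk).comp hf hg
  refine ⟨hfg.integrable_mul (hfi.comp_measurable (measurable_lagSum B))
    (hgi.comp_measurable hY), ?_⟩
  refine (hfg.integral_fun_mul_eq_mul_integral
    (hf.comp (measurable_lagSum B)).aestronglyMeasurable
    (hg.comp hY).aestronglyMeasurable).trans_le ?_
  simp only [Function.comp_def]
  rw [← integral_map (φ := lagSum B) (by fun_prop) hf.aestronglyMeasurable,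
    ← integral_map (φ := fun ω : ℤ → ℕ → ℝ => ω (-(k : ℤ)) k) hY.aemeasurable
      hg.aestronglyMeasurable, mul_assoc]
  gcongr
  · refine (hlaw.integral_sq_one_add_rpow_le hα2 (lagMass_nonneg B) hβ0 hβ).trans ?_
    gcongr
    exact lagMass_le_univ (summable_blockMass hs)
  · exact hlawY.integral_min_sq_rpow_le (by linarith) (by linarith) (by linarith)
      (blockMass_nonneg k)

lemma condOn_Iic_toLp_ae_eq_smoothing (hK : Measurable K)
    (hF : MemLp (fun ω => K (lagSum univ ω)) 2 (iidLaw ν)) (k : ℕ) :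
    condOn ν (Iic (-(k : ℤ))) (hF.toLp _) =ᵐ[iidLaw ν]
      fun ω => smoothing K ((iidLaw ν).map (lagSum (Iio k))) (lagSum (Ici k) ω) := by
  have hmerge := (measurePreserving_merge ν (Iic (-(k : ℤ)))).quasiMeasurePreserving
  have hsum := ae_summable_eval_sub hν hα hα2 hs 0
  simp only [zero_sub] at hsum
  filter_upwards [condOn_ae_eq (Iic (-(k : ℤ))) (hF.toLp _),
    Measure.ae_ae_of_ae_prod (hmerge.ae hF.coeFn_toLp),
    Measure.ae_ae_of_ae_prod (hmerge.ae hsum)] with ω hω hFω hsumω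
  rw [hω, smoothing, integral_map (by fun_prop)
    (Measurable.aestronglyMeasurable (by fun_prop))]
  refine integral_congr_ae ?_
  filter_upwards [hFω, hsumω] with ω' hFω' hω'
  rw [hFω', ← Ici_union_Iio (a := k), lagSum_union hω' (Ici_disjoint_Iio le_rfl),
    lagSum_merge_of_mem, lagSum_merge_of_notMem]
  · intro m hm
    simpa using hm
  · intro m hm
    simpa using hm

lemma exists_norm_sq_condOn_sub_smoothing_le (hβ0 : 0 < β) (hβ : β < α / 2) (hK : Measurable K)
    (hC : 0 ≤ C) (hKC : ∀ v, |K v| ≤ C * (1 + |v| ^ β))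
    (hF : MemLp (fun ω => K (lagSum univ ω)) 2 (iidLaw ν)) {k₀ : ℕ}
    (hk₀ : 0 < lagMass α a (Iio k₀)) :
    ∃ D, 0 ≤ D ∧ ∀ k ≥ k₀, ∀ y : IidL2 ν,
      y =ᵐ[iidLaw ν] (fun ω => smoothing K ((iidLaw ν).map (lagSum (Iio k₀)))
        (lagSum (Ici k₀ \ {k}) ω)) →
      ‖condOn ν (Iic (-(k₀ : ℤ))) (hF.toLp _) - y‖ ^ 2 ≤ D * blockMass α a k := by
  have : IsProbabilityMeasure ((iidLaw ν).map (lagSum (Iio k₀))) :=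
    Measure.isProbabilityMeasure_map (by fun_prop)
  obtain ⟨D₁, hD₁, hsmooth⟩ := (isSAS_lagSum hν hα hα2 hs (Iio k₀)).exists_sq_smoothing_sub_le
    hα hk₀ hK hC hβ0.le (by linarith) hKC
  obtain ⟨D₂, hD₂, hmoment⟩ := exists_integral_sq_lagSum_mul_min_le hν hα hα2 hs hβ0 hβ
  have hsum := ae_summable_eval_sub hν hα hα2 hs 0
  simp only [zero_sub] at hsum
  refine ⟨D₁ * D₂, mul_nonneg hD₁ hD₂, fun k hk y hy => ?_⟩
  have hkB : k ∉ Ici k₀ \ {k} := by simp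
  obtain ⟨hint, hle⟩ := hmoment k _ hkB
  rw [norm_sq_eq_integral_sq, mul_assoc]
  refine le_trans ?_ (mul_le_mul_of_nonneg_left hle hD₁)
  rw [← integral_const_mul]
  refine integral_mono_of_nonneg (ae_of_all _ fun ω => sq_nonneg _) (hint.const_mul D₁) ?_
  filter_upwards [Lp.coeFn_sub (condOn ν (Iic (-(k₀ : ℤ))) (hF.toLp _)) y, hy,
    condOn_Iic_toLp_ae_eq_smoothing hν hα hα2 hs hK hF k₀, hsum] with ω hsub hyω hcond hω
  have hsplit : lagSum (Ici k₀) ω = lagSum (Ici k₀ \ {k}) ω + ω (-(k : ℤ)) k := by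
    rw [← lagSum_singleton k (ω := ω), ← lagSum_union hω disjoint_sdiff_left,
      sdiff_union_of_subset (singleton_subset_iff.2 (mem_Ici.2 hk))]
  rw [hsub, Pi.sub_apply, hyω, hcond, hsplit]
  exact hsmooth _ _

-- Subtracting the smoothing of `K` evaluated without the `k`-th innovation does not change the
-- `k`-th projection, and leaves a remainder whose squared norm is of the order of the scale of that
-- innovation.
lemma exists_projNorm_le (hβ0 : 0 < β) (hβ : β < α / 2) (hK : Measurable K)
    (hC : 0 ≤ C) (hKC : ∀ v, |K v| ≤ C * (1 + |v| ^ β))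
    (hF : MemLp (fun ω => K (lagSum univ ω)) 2 (iidLaw ν)) {k₀ : ℕ}
    (hk₀ : 0 < lagMass α a (Iio k₀)) :
    ∃ D, ∀ k ≥ k₀,
      projNorm (fun j => condOn ν (Iic j)) (hF.toLp _) k ≤ D * blockMass α a k ^ (1 / 2 : ℝ) := by
  have : IsProbabilityMeasure ((iidLaw ν).map (lagSum (Iio k₀))) :=
    Measure.isProbabilityMeasure_map (by fun_prop)
  obtain ⟨D, hD, hnorm⟩ :=
    exists_norm_sq_condOn_sub_smoothing_le hν hα hα2 hs hβ0 hβ hK hC hKC hF hk₀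
  have hmem := memLp_comp_lagSum hν hα hα2 hs hβ0 hβ
    (measurable_smoothing (ρ := (iidLaw ν).map (lagSum (Iio k₀))) hK)
    (abs_smoothing_le hC hβ0.le (by linarith) hKC ((isSAS_lagSum hν hα hα2 hs
      (Iio k₀)).integrable_abs_rpow hα hk₀.le hβ0.le (by linarith)))
  refine ⟨2 * √D, fun k hk => ?_⟩
  have hy := (hmem (Ici k₀ \ {k})).coeFn_toLp
  have hindep := condOn_eq_self_of_ae (A := {-(k : ℤ)}ᶜ) hy (ae_of_all _ fun p =>
    congrArg _ (lagSum_merge_of_mem fun m hm => by simpa using hm.2))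
  refine (norm_diffProj_le_of_condOn_compl (j := -(k₀ : ℤ)) (by omega) _ hindep).trans ?_
  rw [mul_assoc, ← sqrt_eq_rpow, ← sqrt_mul hD]
  gcongr
  exact le_sqrt_of_sq_le (hnorm k hk _ hy)

lemma exists_isHannan_comp_lagSum (hβ0 : 0 < β) (hβ : β < α / 2) (hK : Measurable K) (hC : 0 ≤ C)
    (hKC : ∀ v, |K v| ≤ C * (1 + |v| ^ β)) {m₀ : ℕ} (hm₀ : 0 < blockMass α a m₀) :
    ∃ x : IidL2 ν, IsHannan (fun j => condOn ν (Iic j)) x ∧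
      x =ᵐ[iidLaw ν] fun ω => K (lagSum univ ω) - ∫ ω', K (lagSum univ ω') ∂(iidLaw ν) := by
  have hF := memLp_comp_lagSum hν hα hα2 hs hβ0 hβ hK hKC univ
  have hpast : condOn ν (Iic 0) (hF.toLp _) = hF.toLp _ :=
    condOn_eq_self_of_ae hF.coeFn_toLp (ae_of_all _ fun p =>
      congrArg K (lagSum_merge_of_mem fun m _ => by simp))
  obtain ⟨D, hD⟩ := exists_projNorm_le hν hα hα2 hs hβ0 hβ hK hC hKC hF
    (lagMass_pos (summable_blockMass hs) (mem_Iio.2 m₀.lt_succ_self) hm₀)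
  refine ⟨hF.toLp _ - condOn ν ∅ (hF.toLp _), isHannan_iid ?_ ?_ ?_, ?_⟩
  · rw [map_sub, hpast, condOn_condOn, inter_empty]
  · rw [map_sub, condOn_self, sub_self]
  · rw [projNorm_sub_condOn_empty]
    refine (hs.mul_left D).of_norm_bounded_eventually ?_
    rw [Nat.cofinite_eq_atTop]
    filter_upwards [eventually_ge_atTop m₀.succ] with k hk
    rw [norm_of_nonneg (projNorm_nonneg _ _)]
    exact hD k hk
  · filter_upwards [Lp.coeFn_sub (hF.toLp _) (condOn ν ∅ (hF.toLp _)), hF.coeFn_toLp,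
      condOn_empty_ae_eq (hF.toLp _)] with ω hsub hω hempty
    rw [hsub, Pi.sub_apply, hω, hempty, integral_congr_ae hF.coeFn_toLp]

end ProjectionDecay

open ProbabilityTheory

section FiniteDimensionalLaws

variable {ι S Ω Ω' : Type*} [MeasurableSpace S] [MeasurableSpace Ω] [MeasurableSpace Ω'] {α : ℝ}
  {μ : Measure S} {f : ι → S → ℝ} {P : Measure Ω} {P' : Measure Ω'} {X : ι → Ω → ℝ}
  {X' : ι → Ω' → ℝ}

lemma isStableIntegral_of_integral_exp (hX : ∀ i, Measurable (X i))
    (h : ∀ (m : ℕ) (n : Fin m → ι) (u : Fin m → ℝ),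
      ∫ ω, Complex.exp (Complex.I * ((∑ j, u j * X (n j) ω : ℝ) : ℂ)) ∂P =
        Complex.exp (-((∫ x, |∑ j, u j * f (n j) x| ^ α ∂μ : ℝ) : ℂ))) :
    IsStableIntegral α μ f X P := fun s u t => by
  have hsum : ∀ g : ι → ℝ, ∑ j, t * u (s.equivFin.symm j) * g (s.equivFin.symm j) =
      t * ∑ k ∈ s, u k * g k := fun g => by
    rw [Equiv.sum_comp s.equivFin.symm fun k : s => t * u k * g k,
      Finset.sum_coe_sort s fun k => t * u k * g k, Finset.mul_sum]
    simp only [mul_assoc]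
  have hexp := h s.card (fun j => s.equivFin.symm j) fun j => t * u (s.equivFin.symm j)
  simp only [fun ω => hsum fun k => X k ω, fun x => hsum fun k => f k x, abs_mul,
    mul_rpow (abs_nonneg _) (abs_nonneg _), integral_const_mul] at hexp
  rw [charFun_apply_real, integral_map (by fun_prop) (by fun_prop), mul_comm, ← hexp]
  simp only [Complex.ofReal_mul, mul_comm]

lemma ext_of_map_sum_mul {κ : Type*} [Fintype κ] {ν ν' : Measure (κ → ℝ)} [IsFiniteMeasure ν]
    [IsFiniteMeasure ν'] (h : ∀ u : κ → ℝ, ν.map (fun v => ∑ k, u k * v k) =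
      ν'.map fun v => ∑ k, u k * v k) : ν = ν' := by
  classical
  refine Measure.ext_of_charFunDual (funext fun L => ?_)
  have hL : (fun v : κ → ℝ => ∑ k, L (Pi.single k 1) * v k) = L := funext fun v => by
    conv_rhs => rw [pi_eq_sum_univ' v, map_sum]
    simp only [map_smul, smul_eq_mul, mul_comm]
  rw [charFunDual_eq_charFun_map_one, charFunDual_eq_charFun_map_one, ← hL, h]

lemma IsStableIntegral.identDistrib [IsProbabilityMeasure P] [IsProbabilityMeasure P']
    (h : IsStableIntegral α μ f X P) (h' : IsStableIntegral α μ f X' P')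
    (hX : ∀ i, Measurable (X i)) (hX' : ∀ i, Measurable (X' i)) :
    IdentDistrib (fun ω i => X i ω) (fun ω i => X' i ω) P P' where
  aemeasurable_fst := (measurable_pi_lambda _ hX).aemeasurable
  aemeasurable_snd := (measurable_pi_lambda _ hX').aemeasurable
  map_eq := by
    have hfinite : ∀ s : Finset ι,
        P.map (fun ω => s.restrict (X · ω)) = P'.map fun ω => s.restrict (X' · ω) := fun s => by
      have hs : Measurable fun ω => s.restrict (X · ω) := measurable_pi_lambda _ fun i => hX i
      have hs' : Measurable fun ω => s.restrict (X' · ω) := measurable_pi_lambda _ fun i => hX' i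
      have := Measure.isFiniteMeasure_map P fun ω => s.restrict (X · ω)
      refine ext_of_map_sum_mul fun u => ?_
      rw [Measure.map_map (by fun_prop) hs, Measure.map_map (by fun_prop) hs']
      refine Measure.ext_of_charFun (funext fun t => ?_)
      exact (h.isSAS_map_sum Finset.univ u Subtype.val t).trans
        (h'.isSAS_map_sum Finset.univ u Subtype.val t).symm
    have hlim := isProjectiveLimit_map (P := P) (measurable_pi_lambda _ hX).aemeasurable
    simp_rw [hfinite] at hlim
    exact hlim.unique (isProjectiveLimit_map (measurable_pi_lambda _ hX').aemeasurable)

end FiniteDimensionalLaws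

section CentralLimit

variable {Ω Ω' : Type*} [MeasurableSpace Ω] [MeasurableSpace Ω'] {P : Measure Ω} {P' : Measure Ω'}
  {Z : ℤ → Ω → ℝ} {Z' : ℤ → Ω' → ℝ}

/-- The partial sum `S_N` of the centred variables `Z n - E (Z n)`, `1 ≤ n ≤ N`. -/
noncomputable def centeredSum (P : Measure Ω) (Z : ℤ → Ω → ℝ) (N : ℕ) (ω : Ω) : ℝ :=
  ∑ n ∈ Finset.range N, (Z ((n : ℤ) + 1) ω - ∫ ω', Z ((n : ℤ) + 1) ω' ∂P)

/-- The covariance of `Z 0` and `Z n`. -/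
noncomputable def autocov (P : Measure Ω) (Z : ℤ → Ω → ℝ) (n : ℤ) : ℝ :=
  (∫ ω, Z 0 ω * Z n ω ∂P) - (∫ ω, Z 0 ω ∂P) * (∫ ω, Z n ω ∂P)

/-- The central limit theorem for the stationary sequence `Z`, with the variance of the limit given
by the absolutely convergent series of autocovariances. -/
def SatisfiesCLT (P : Measure Ω) (Z : ℤ → Ω → ℝ) : Prop :=
  Integrable (fun ω => Z 0 ω ^ 2) P ∧
  Summable (fun n : ℕ => |autocov P Z ((n : ℤ) + 1)|) ∧
  ∃ σ2 : ℝ,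
    σ2 = ((∫ ω, Z 0 ω ^ 2 ∂P) - (∫ ω, Z 0 ω ∂P) ^ 2) + 2 * ∑' n : ℕ, autocov P Z ((n : ℤ) + 1) ∧
    Tendsto (fun N : ℕ => ((∫ ω, centeredSum P Z N ω ^ 2 ∂P) -
      (∫ ω, centeredSum P Z N ω ∂P) ^ 2) / N) atTop (𝓝 σ2) ∧
    ∀ φ : BoundedContinuousFunction ℝ ℝ,
      Tendsto (fun N : ℕ => ∫ ω, φ (centeredSum P Z N ω / √N) ∂P) atTop
        (𝓝 (∫ x, φ x ∂(gaussianReal 0 σ2.toNNReal)))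

lemma SatisfiesCLT.of_identDistrib
    (h : IdentDistrib (fun ω n => Z n ω) (fun ω n => Z' n ω) P P')
    (hZ' : SatisfiesCLT P' Z') : SatisfiesCLT P Z := by
  have hmean : ∀ n, ∫ ω, Z n ω ∂P = ∫ ω, Z' n ω ∂P' := fun n =>
    (h.comp (measurable_pi_apply n)).integral_eq
  have hsq := h.comp ((measurable_pi_apply (0 : ℤ)).pow_const 2)
  have hcov : ∀ n, autocov P Z n = autocov P' Z' n := fun n => by
    have hmul := (h.comp ((measurable_pi_apply 0).mul (measurable_pi_apply n))).integral_eq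
    rw [autocov, autocov, hmean, hmean]
    exact congrArg (· - _) hmul
  have hsum : ∀ N, IdentDistrib (centeredSum P Z N) (centeredSum P' Z' N) P P' :=
    fun N => by
      have hcomp := h.comp (u := fun z : ℤ → ℝ =>
        ∑ n ∈ Finset.range N, (z ((n : ℤ) + 1) - ∫ ω', Z' ((n : ℤ) + 1) ω' ∂P')) (by fun_prop)
      unfold centeredSum
      simp only [hmean]
      exact hcomp
  obtain ⟨hint, hsummable, σ2, hσ2, hvar, hclt⟩ := hZ'
  refine ⟨hsq.integrable_iff.2 hint, by simpa only [hcov] using hsummable, σ2, ?_, ?_, fun φ => ?_⟩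
  · have hsq_eq : ∫ ω, Z 0 ω ^ 2 ∂P = ∫ ω, Z' 0 ω ^ 2 ∂P' := hsq.integral_eq
    simpa only [hsq_eq, hmean, hcov] using hσ2
  · refine hvar.congr fun N => ?_
    rw [(hsum N).integral_eq]
    exact congrArg (fun r => (r - _) / _) (hsum N).sq.integral_eq.symm
  · refine (hclt φ).congr fun N => ?_
    exact ((hsum N).comp (u := fun y => φ (y / √N)) (by fun_prop)).integral_eq.symm

lemma tendsto_integral_of_tendsto_charFun [IsProbabilityMeasure P] {S : ℕ → Ω → ℝ}
    (hS : ∀ N, AEMeasurable (S N) P) {σ2 : ℝ} (hσ2 : 0 ≤ σ2)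
    (h : ∀ t : ℝ, Tendsto (fun N : ℕ => charFun (P.map (S N)) (t / √N)) atTop
      (𝓝 (Complex.exp (-((t ^ 2 * σ2 / 2 : ℝ) : ℂ)))))
    (φ : BoundedContinuousFunction ℝ ℝ) :
    Tendsto (fun N : ℕ => ∫ ω, φ (S N ω / √N) ∂P) atTop
      (𝓝 (∫ x, φ x ∂(gaussianReal 0 σ2.toNNReal))) := by
  have hmeas : ∀ N, AEMeasurable (fun ω => S N ω / √N) P := fun N => (hS N).div_const _
  let law (N : ℕ) : ProbabilityMeasure ℝ :=
    ⟨P.map fun ω => S N ω / √N, Measure.isProbabilityMeasure_map (hmeas N)⟩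
  let gauss : ProbabilityMeasure ℝ :=
    ⟨gaussianReal 0 σ2.toNNReal, inferInstance⟩
  have hlaw : Tendsto law atTop (𝓝 gauss) := by
    refine ProbabilityMeasure.tendsto_iff_tendsto_charFun.2 fun t => ?_
    have hgauss : charFun (gauss : Measure ℝ) t = Complex.exp (-((t ^ 2 * σ2 / 2 : ℝ) : ℂ)) := by
      simp only [gauss, ProbabilityMeasure.coe_mk, charFun_gaussianReal,
        coe_toNNReal _ hσ2]
      push_cast
      ring_nf
    rw [hgauss]
    refine (h t).congr fun N => ?_
    simp only [law, ProbabilityMeasure.coe_mk]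
    rw [charFun_apply_real, charFun_apply_real, integral_map (hS N) (by fun_prop),
      integral_map (hmeas N) (by fun_prop)]
    refine integral_congr_ae (ae_of_all _ fun ω => ?_)
    push_cast
    ring_nf
  refine (ProbabilityMeasure.tendsto_iff_forall_integral_tendsto.1 hlaw φ).congr fun N => ?_
  exact integral_map (hmeas N) φ.continuous.aestronglyMeasurable

end CentralLimit

section ModelCentralLimit

variable {E : Type*} [MeasurableSpace E] {ν : Measure E} [IsProbabilityMeasure ν]
  {f : (ℤ → E) → ℝ} {x : IidL2 ν}

lemma shiftL2_ae_eq_of_ae_eq (hxf : x =ᵐ[iidLaw ν] fun ω => f ω - ∫ ω', f ω' ∂(iidLaw ν)) (n : ℤ) :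
    shiftL2 ν n x =ᵐ[iidLaw ν] fun ω => f (shift n ω) - ∫ ω', f ω' ∂(iidLaw ν) :=
  (shiftL2_ae_eq x n).trans ((measurePreserving_shift ν n).quasiMeasurePreserving.ae_eq_comp hxf)

lemma integral_comp_shift (hf : MemLp f 2 (iidLaw ν)) (n : ℤ) :
    ∫ ω, f (shift n ω) ∂(iidLaw ν) = ∫ ω, f ω ∂(iidLaw ν) :=
  integral_comp_of_measurePreserving (measurePreserving_shift ν n) hf.aestronglyMeasurable

lemma inner_shiftL2_eq_autocov (hf : MemLp f 2 (iidLaw ν))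
    (hxf : x =ᵐ[iidLaw ν] fun ω => f ω - ∫ ω', f ω' ∂(iidLaw ν)) (n : ℤ) :
    inner ℝ x (shiftL2 ν n x) = autocov (iidLaw ν) (fun m ω => f (shift m ω)) n := by
  have hmem (m : ℤ) : MemLp (fun ω => f (shift m ω)) 2 (iidLaw ν) :=
    hf.comp_measurePreserving (measurePreserving_shift ν m)
  rw [autocov]
  refine Eq.trans ?_ (covariance_eq_sub (hmem 0) (hmem n))
  rw [covariance, L2.inner_def, integral_comp_shift hf, integral_comp_shift hf]
  refine integral_congr_ae ?_
  filter_upwards [hxf, shiftL2_ae_eq_of_ae_eq hxf n] with ω hx hn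
  simp [hx, hn, shift_zero, mul_comm]

lemma norm_sq_eq_variance (hf : MemLp f 2 (iidLaw ν))
    (hxf : x =ᵐ[iidLaw ν] fun ω => f ω - ∫ ω', f ω' ∂(iidLaw ν)) :
    ‖x‖ ^ 2 = (∫ ω, f ω ^ 2 ∂(iidLaw ν)) - (∫ ω, f ω ∂(iidLaw ν)) ^ 2 := by
  refine Eq.trans ?_ (variance_eq_sub hf)
  rw [variance_eq_integral hf.aestronglyMeasurable.aemeasurable, norm_sq_eq_integral_sq]
  exact integral_congr_ae (hxf.mono fun ω hω => congrArg (· ^ 2) hω)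

lemma identDistrib_centeredSum_partialSum (hf : MemLp f 2 (iidLaw ν))
    (hxf : x =ᵐ[iidLaw ν] fun ω => f ω - ∫ ω', f ω' ∂(iidLaw ν)) (N : ℕ) :
    IdentDistrib (centeredSum (iidLaw ν) (fun n ω => f (shift n ω)) N)
      (partialSum (shiftL2 ν) x N : IidL2 ν) (iidLaw ν) (iidLaw ν) := by
  have hshift := measurePreserving_shift ν (1 : ℤ)
  have hmeas := (Lp.aestronglyMeasurable (partialSum (shiftL2 ν) x N)).aemeasurable
  have hae : (fun ω => partialSum (shiftL2 ν) x N (shift 1 ω)) =ᵐ[iidLaw ν]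
      centeredSum (iidLaw ν) (fun n ω => f (shift n ω)) N := by
    filter_upwards [hshift.quasiMeasurePreserving.ae
        (Lp.coeFn_finsetSum (Finset.range N) fun n : ℕ => shiftL2 ν n x),
      hshift.quasiMeasurePreserving.ae
        (ae_all_iff.2 fun n : ℕ => shiftL2_ae_eq_of_ae_eq hxf (n : ℤ))] with ω hsum hn
    rw [partialSum, hsum, centeredSum, Finset.sum_apply]
    refine Finset.sum_congr rfl fun n _ => ?_
    rw [hn, shift_shift, integral_comp_shift hf]
  have hmeas' := hmeas.comp_quasiMeasurePreserving hshift.quasiMeasurePreserving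
  exact (IdentDistrib.of_ae_eq hmeas' hae).symm.trans
    ⟨hmeas', hmeas, map_comp_of_measurePreserving hshift hmeas⟩

theorem IsHannan.satisfiesCLT (hx : IsHannan (fun j => condOn ν (Iic j)) x)
    (hf : MemLp f 2 (iidLaw ν)) (hxf : x =ᵐ[iidLaw ν] fun ω => f ω - ∫ ω', f ω' ∂(iidLaw ν)) :
    SatisfiesCLT (iidLaw ν) fun n ω => f (shift n ω) := by
  have h := isShiftSystem_iid ν
  have hlaw := identDistrib_centeredSum_partialSum hf hxf
  refine ⟨by simpa only [shift_zero] using hf.integrable_sq, ?_, longRunVar (shiftL2 ν) x, ?_, ?_,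
    tendsto_integral_of_tendsto_charFun (fun N => (hlaw N).aemeasurable_fst)
      (hx.longRunVar_nonneg h) fun t => ?_⟩
  · simpa [inner_shiftL2_eq_autocov hf hxf] using
      (summable_nat_add_iff 1).2 (hx.summable_abs_inner h)
  · simp only [longRunVar, norm_sq_eq_variance hf hxf, inner_shiftL2_eq_autocov hf hxf, shift_zero]
  · refine (hx.tendsto_norm_sq_partialSum_div h).congr fun N => ?_
    have hmean := integral_eq_zero_of_condOn_empty (condOn_empty_partialSum hx.condOn_empty N)
    have hsq := (hlaw N).sq.integral_eq
    rw [(hlaw N).integral_eq, hmean, norm_sq_eq_integral_sq, zero_pow two_ne_zero, sub_zero]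
    exact congrArg (· / (N : ℝ)) hsq.symm
  · simpa only [(hlaw _).map_eq] using hx.tendsto_charFun_partialSum t

end ModelCentralLimit

section MovingAverage

variable {α β C τ : ℝ} {a K : ℝ → ℝ}

lemma exists_blockMass_pos (hai : Integrable fun x => |a x| ^ α) (hane : 0 < ∫ x, |a x| ^ α)
    (hα : α ≠ 0) (hc : ∀ x < 0, a x = 0) : ∃ m, 0 < blockMass α a m := by
  by_contra! hzero
  refine hane.ne' ((hai.hasSum_intervalIntegral 0).unique (hasSum_zero.congr_fun fun n => ?_))
  obtain hn | hn := le_or_gt 0 n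
  · lift n to ℕ using hn
    rw [intervalIntegral.integral_of_le (by linarith), zero_add]
    exact le_antisymm (hzero n) (blockMass_nonneg n)
  · have hn' : (n : ℝ) + 1 ≤ 0 := by exact_mod_cast hn
    refine intervalIntegral.integral_zero_ae ((Measure.ae_ne volume 0).mono fun x hx0 hx => ?_)
    rw [uIoc_of_le (by linarith), zero_add, mem_Ioc] at hx
    rw [hc x (lt_of_le_of_ne (hx.2.trans hn') hx0), abs_zero, zero_rpow hα]

lemma IsSAS.exists_isBlockLaw {ρ : Measure ℝ} [IsProbabilityMeasure ρ] (h : IsSAS α τ ρ)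
    (hα : 1 < α) (hτ : 0 < τ) (ham : Measurable a) (hai : Integrable fun x => |a x| ^ α) :
    ∃ ν, IsProbabilityMeasure ν ∧ IsBlockLaw α a ν := by
  have hscale : |τ ^ (-1 / α)| ^ α * τ = 1 := by
    rw [abs_of_pos (rpow_pos_of_pos hτ _), ← rpow_mul hτ.le, div_mul_cancel₀ _ (by linarith),
      rpow_neg_one, inv_mul_cancel₀ hτ.ne']
  have : IsProbabilityMeasure (ρ.map fun x => τ ^ (-1 / α) * x) :=
    Measure.isProbabilityMeasure_map (by fun_prop)
  have : IsProbabilityMeasure (volume.restrict (Ioc (0 : ℝ) 1)) := ⟨by simp⟩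
  exact (hscale ▸ h.map_mul (τ ^ (-1 / α))).exists_isStableIntegral hα (fun k => by fun_prop)
    fun k => (hai.comp_add_left (k : ℝ)).integrableOn

lemma isStableIntegral_lagSum {ν : Measure (ℕ → ℝ)} [IsProbabilityMeasure ν]
    (hν : IsBlockLaw α a ν) (hα : 1 < α) (hα2 : α ≤ 2)
    (hs : Summable fun m => blockMass α a m ^ (1 / 2 : ℝ)) (ham : Measurable a)
    (hai : Integrable fun x => |a x| ^ α) (hc : ∀ x < 0, a x = 0) :
    IsStableIntegral α volume (fun (n : ℤ) x => a (n - x)) (fun n ω => lagSum univ (shift n ω))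
      (iidLaw ν) := fun s u => by
  have h := isSAS_sum_lagSum_shift hν hα hα2 hs ham hai hc (fun j : s => (j : ℤ)) fun j => u j
  simpa only [fun x => Finset.sum_coe_sort s fun k => u k * a (k - x),
    fun ω => Finset.sum_coe_sort s fun k => u k * lagSum univ (shift k ω)] using h

variable {Ω : Type*} [MeasurableSpace Ω] {P : Measure Ω} {ξ : ℤ → Ω → ℝ}

lemma IsStableIntegral.isSAS_map_movingAverage
    (h : IsStableIntegral α volume (fun (n : ℤ) x => a (n - x)) ξ P) (n : ℤ) :
    IsSAS α (∫ x, |a x| ^ α) (P.map (ξ n)) :=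
  integral_sub_left_eq_self (fun y => |a y| ^ α) volume (n : ℝ) ▸ h.isSAS n

lemma IsStableIntegral.satisfiesCLT_comp [IsProbabilityMeasure P]
    (h : IsStableIntegral α volume (fun (n : ℤ) x => a (n - x)) ξ P) (hξ : ∀ n, Measurable (ξ n))
    (hα : 1 < α) (hα2 : α ≤ 2) (ham : Measurable a) (hai : Integrable fun x => |a x| ^ α)
    (hane : 0 < ∫ x, |a x| ^ α) (hc : ∀ x < 0, a x = 0)
    (hs : Summable fun m => blockMass α a m ^ (1 / 2 : ℝ)) (hβ0 : 0 < β) (hβ : β < α / 2)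
    (hK : Measurable K) (hKC : ∀ v, |K v| ≤ C * (1 + |v| ^ β)) :
    SatisfiesCLT P fun n ω => K (ξ n ω) := by
  have hC : 0 ≤ C := (abs_nonneg (K 0)).trans (by simpa [hβ0.ne'] using hKC 0)
  have := Measure.isProbabilityMeasure_map (μ := P) (hξ 0).aemeasurable
  obtain ⟨ν, _, hν⟩ := (h.isSAS_map_movingAverage 0).exists_isBlockLaw hα hane ham hai
  obtain ⟨m₀, hm₀⟩ := exists_blockMass_pos hai hane (by linarith) hc
  obtain ⟨x, hx, hxK⟩ := exists_isHannan_comp_lagSum hν hα hα2 hs hβ0 hβ hK hC hKC hm₀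
  have hmem := memLp_comp_lagSum hν hα hα2 hs hβ0 hβ hK hKC univ
  have hlaw := h.identDistrib (isStableIntegral_lagSum hν hα hα2 hs ham hai hc) hξ
    fun n => (measurable_lagSum univ).comp (measurable_shift n)
  exact .of_identDistrib (hlaw.comp (u := fun z n => K (z n)) (by fun_prop))
    (hx.satisfiesCLT hmem hxK)

end MovingAverage

section Growth

variable {β C : ℝ} {K : ℝ → ℝ}

lemma ae_abs_le_mul_one_add_rpow {x₀ M : ℝ} {T : Set ℝ} (hT : T.Countable)
    (hM : ∀ x, |x| ≤ x₀ → x ∉ T → |K x| ≤ M) (hC : ∀ x, x₀ < |x| → |K x| ≤ C * |x| ^ β) :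
    ∀ᵐ x, |K x| ≤ (|M| + |C|) * (1 + |x| ^ β) := by
  filter_upwards [hT.ae_notMem volume] with x hxT
  have hpow : 0 ≤ |x| ^ β := by positivity
  obtain hx | hx := le_or_gt |x| x₀
  · calc |K x| ≤ |M| := (hM x hx hxT).trans (le_abs_self M)
      _ ≤ (|M| + |C|) * (1 + |x| ^ β) := by nlinarith [abs_nonneg M, abs_nonneg C]
  · calc |K x| ≤ |C| * |x| ^ β := (hC x hx).trans (by gcongr; exact le_abs_self C)
      _ ≤ (|M| + |C|) * (1 + |x| ^ β) := by nlinarith [abs_nonneg M, abs_nonneg C]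

lemma exists_measurable_ae_eq_of_ae_abs_le (hK : Measurable K)
    (hKC : ∀ᵐ x, |K x| ≤ C * (1 + |x| ^ β)) :
    ∃ L : ℝ → ℝ, Measurable L ∧ (∀ x, |L x| ≤ C * (1 + |x| ^ β)) ∧ L =ᵐ[volume] K := by
  obtain ⟨x₁, hx₁⟩ := hKC.exists
  have hpow (x : ℝ) : 0 < 1 + |x| ^ β := by positivity
  have hC : 0 ≤ C := nonneg_of_mul_nonneg_left ((abs_nonneg _).trans hx₁) (hpow x₁)
  refine ⟨fun x => if |K x| ≤ C * (1 + |x| ^ β) then K x else 0,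
    hK.ite (measurableSet_le (by fun_prop) (by fun_prop)) measurable_const, fun x => ?_,
    hKC.mono fun x hx => if_pos hx⟩
  dsimp only
  split_ifs with hx
  · exact hx
  · rw [abs_zero]
    exact mul_nonneg hC (hpow x).le

end Growth

end StableMovingAverage

open StableMovingAverage in
theorem stmt18_general {α β C : ℝ} (hα : 1 < α) (hα2 : α ≤ 2) {a : ℝ → ℝ} (ham : Measurable a)
    (hai : Integrable fun x => |a x| ^ α) (hane : 0 < ∫ x, |a x| ^ α) (hc : ∀ x < 0, a x = 0)
    {Ω : Type*} [MeasurableSpace Ω] {P : Measure Ω} [IsProbabilityMeasure P] {ξ : ℤ → Ω → ℝ}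
    (hξ : ∀ n, Measurable (ξ n))
    (h : IsStableIntegral α volume (fun (n : ℤ) x => a (n - x)) ξ P)
    {K : ℝ → ℝ} (hK : Measurable K) (hβ0 : 0 < β) (hβ : β < α / 2)
    (hKC : ∀ᵐ x, |K x| ≤ C * (1 + |x| ^ β))
    (hs : Summable fun m => blockMass α a m ^ (1 / 2 : ℝ)) :
    SatisfiesCLT P fun n ω => K (ξ n ω) := by
  obtain ⟨L, hL, hLC, hLK⟩ := exists_measurable_ae_eq_of_ae_abs_le hK hKC
  have hae (n : ℤ) : ∀ᵐ ω ∂P, L (ξ n ω) = K (ξ n ω) := by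
    have := Measure.isProbabilityMeasure_map (μ := P) (hξ n).aemeasurable
    exact ae_of_ae_map (hξ n).aemeasurable
      (((h.isSAS_map_movingAverage n).absolutelyContinuous hα hane).ae_le hLK)
  have hmeas : Measurable fun ω n => L (ξ n ω) := measurable_pi_lambda _ fun n => hL.comp (hξ n)
  have hlaw := ProbabilityTheory.IdentDistrib.of_ae_eq hmeas.aemeasurable
    ((ae_all_iff.2 hae).mono fun ω hω => funext hω)
  exact .of_identDistrib hlaw.symm
    (h.satisfiesCLT_comp hξ hα hα2 ham hai hane hc hs hβ0 hβ hL hLC)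

/-- Paper's Theorem 6.1: central limit theorem for unbounded functions of
SαS moving averages. -/
theorem stmt18 (α : ℝ) (hα1 : 1 < α) (hα2 : α < 2)
    (a : ℝ → ℝ) (ham : Measurable a)
    (hai : Integrable (fun x => |a x| ^ α) volume)
    (hane : 0 < ∫ x : ℝ, |a x| ^ α)
    (hcausal : ∀ x : ℝ, x < 0 → a x = 0)
    {Ω : Type*} [MeasurableSpace Ω] (P : Measure Ω) [IsProbabilityMeasure P]
    (ξ : ℤ → Ω → ℝ) (hξm : ∀ n, Measurable (ξ n))
    (hchar : ∀ (m : ℕ) (n : Fin m → ℤ) (u : Fin m → ℝ),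
      (∫ ω, Complex.exp (Complex.I * ((∑ j, u j * ξ (n j) ω : ℝ) : ℂ)) ∂P)
        = Complex.exp (-((∫ x : ℝ, |∑ j, u j * a ((n j : ℝ) - x)| ^ α : ℝ) : ℂ)))
    (K : ℝ → ℝ) (hKm : Measurable K)
    (β x₀ cK : ℝ) (hβ0 : 0 < β) (hβ : β < α / 2) (hx₀ : 0 < x₀)
    (hK1 : ∀ x : ℝ, x₀ < |x| → |K x| ≤ cK * |x| ^ β)
    (hK2a : AntitoneOn (fun x => K x / x) (Set.Ioi x₀))
    (hK2b : MonotoneOn (fun x => K x / x) (Set.Iio (-x₀)))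
    (hK3 : ∃ T : Finset ℝ, (∃ M : ℝ, ∀ x : ℝ, |x| ≤ x₀ → x ∉ T → |K x| ≤ M) ∧
      ∀ x ∈ T, ∃ δ > (0:ℝ), IntegrableOn K (Set.Ioo (x - δ) (x + δ)) volume)
    (hsum1 : Summable (fun m : ℕ =>
      (∫ x in Set.Ioc ((m : ℝ)) ((m : ℝ) + 1), |a x| ^ α) ^ ((1:ℝ) / 2)))
    (hsum2 : Summable (fun n : ℕ => ∫ x : ℝ,
      (|a (-x)| ^ (α - 1) * |a (((n : ℝ) + 1) - x)| +
        |a (((n : ℝ) + 1) - x)| ^ (α - 1) * |a (-x)|))) :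
    Integrable (fun ω => (K (ξ 0 ω)) ^ 2) P ∧
    Summable (fun n : ℕ =>
      |(∫ ω, K (ξ 0 ω) * K (ξ ((n : ℤ) + 1) ω) ∂P) -
        (∫ ω, K (ξ 0 ω) ∂P) * (∫ ω, K (ξ ((n : ℤ) + 1) ω) ∂P)|) ∧
    ∃ σ2 : ℝ,
      σ2 = ((∫ ω, (K (ξ 0 ω)) ^ 2 ∂P) - (∫ ω, K (ξ 0 ω) ∂P) ^ 2) +
        2 * ∑' n : ℕ, ((∫ ω, K (ξ 0 ω) * K (ξ ((n : ℤ) + 1) ω) ∂P) -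
          (∫ ω, K (ξ 0 ω) ∂P) * (∫ ω, K (ξ ((n : ℤ) + 1) ω) ∂P)) ∧
      Filter.Tendsto (fun N : ℕ =>
          ((∫ ω, (∑ n ∈ Finset.range N,
              (K (ξ ((n : ℤ) + 1) ω) - ∫ ω', K (ξ ((n : ℤ) + 1) ω') ∂P)) ^ 2 ∂P) -
            (∫ ω, (∑ n ∈ Finset.range N,
              (K (ξ ((n : ℤ) + 1) ω) - ∫ ω', K (ξ ((n : ℤ) + 1) ω') ∂P)) ∂P) ^ 2) / N)
        Filter.atTop (nhds σ2) ∧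
      ∀ φ : BoundedContinuousFunction ℝ ℝ,
        Filter.Tendsto (fun N : ℕ =>
            ∫ ω, φ ((∑ n ∈ Finset.range N,
              (K (ξ ((n : ℤ) + 1) ω) - ∫ ω', K (ξ ((n : ℤ) + 1) ω') ∂P)) /
                Real.sqrt N) ∂P)
          Filter.atTop
          (nhds (∫ x : ℝ, φ x ∂(ProbabilityTheory.gaussianReal 0 (Real.toNNReal σ2)))) :=
  let ⟨_, ⟨_, hM⟩, _⟩ := hK3
  stmt18_general hα1 hα2.le ham hai hane hcausal hξm
    (StableMovingAverage.isStableIntegral_of_integral_exp hξm hchar) hKm hβ0 hβ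
    (StableMovingAverage.ae_abs_le_mul_one_add_rpow (Finset.countable_toSet _) hM hK1) hsum1
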